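/- Let P be an isometry invariant probability measure on M(X). (a) If P is insertion-tolerant, then N_O ∈ {0, 1, ∞} P-almost surely. (b) If P is deletion-tolerant, then N_V ∈ {0, 1, ∞} P-almost surely. -/

import Mathlib

open MeasureTheory Metric Set Bornology Function
open scoped ENNReal NNReal unitInterval

noncomputable section

namespace BooleanModel

/-- The space of simple, locally finite point configurations on a metric space `X`
(realizations of simple counting measures on `X`). -/
def Config (X : Type*) [MetricSpace X] : Type _ :=
  {s : Set X // ∀ K : Set X, IsBounded K → (s ∩ K).Finite}

namespace Config

variable {X : Type*} [MetricSpace X]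

/-- The σ-algebra on `Config X` generated by the evaluation (counting) maps `ω ↦ ω(B)`. -/
instance instMeasurableSpace [MeasurableSpace X] : MeasurableSpace (Config X) :=
  MeasurableSpace.generateFrom
    {A | ∃ (B : Set X) (n : ℕ∞), MeasurableSet B ∧ A = {s : Config X | (s.1 ∩ B).encard = n}}

/-- The number of points of the configuration `s` lying in `B`. -/
def count (B : Set X) (s : Config X) : ℕ∞ := (s.1 ∩ B).encard

/-- Adding a point to a configuration (`ω + δ_y`). -/
def insertPt (y : X) (s : Config X) : Config X :=
  ⟨insert y s.1, by
    intro K hK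
    refine ((s.2 K hK).insert y).subset ?_
    rintro z ⟨hz1, hz2⟩
    rcases Set.mem_insert_iff.1 hz1 with rfl | h
    · exact Set.mem_insert _ _
    · exact Set.mem_insert_of_mem _ ⟨h, hz2⟩⟩

/-- The restriction `ω|_{B^c}` of a configuration to the complement of `B`. -/
def restrict (B : Set X) (s : Config X) : Config X :=
  ⟨s.1 ∩ Bᶜ, fun K hK => (s.2 K hK).subset fun z hz => ⟨hz.1.1, hz.2⟩⟩

/-- Push-forward of a configuration under an isometry of `X`. -/
def mapIso (γ : X ≃ᵢ X) (s : Config X) : Config X :=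
  ⟨⇑γ '' s.1, by
    intro K hK
    have h1 : ⇑γ ⁻¹' K = ⇑γ.symm '' K := by
      ext z
      constructor
      · intro hz; exact ⟨γ z, hz, γ.symm_apply_apply z⟩
      · rintro ⟨w, hw, rfl⟩; simpa using hw
    have h2 : ⇑γ '' s.1 ∩ K = ⇑γ '' (s.1 ∩ ⇑γ ⁻¹' K) := (Set.image_inter_preimage _ _ _).symm
    rw [h2]
    refine (s.2 _ ?_).image _
    rw [h1]
    exact γ.symm.isometry.lipschitz.isBounded_image hK⟩

end Config

section BasicDefs

variable {X : Type*} [MetricSpace X]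

/-- The occupied set of the Boolean model with unit radii driven by `s`. -/
def occupied (s : Config X) : Set X := ⋃ x ∈ s.1, closedBall x 1

/-- The vacant set of the Boolean model with unit radii driven by `s`. -/
def vacant (s : Config X) : Set X := (occupied s)ᶜ

/-- The collection of connected components of a set `S ⊆ X`. -/
def comps (S : Set X) : Set (Set X) := {C | ∃ x ∈ S, C = connectedComponentIn S x}

/-- The collection of unbounded connected components of `S`. -/
def ucomps (S : Set X) : Set (Set X) := {C | C ∈ comps S ∧ ¬IsBounded C}

/-- The number of connected components of `S`. -/
def numComps (S : Set X) : ℕ∞ := (comps S).encard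

/-- `N_S`: the number of unbounded connected components of `S`. -/
def numUcomps (S : Set X) : ℕ∞ := (ucomps S).encard

/-- A metric space is point-symmetric (the metric counterpart of being a Riemannian
symmetric space) if every point `x` admits a geodesic-reversing isometry fixing `x`,
i.e. an isometric point reflection around `x`. -/
def PointSymmetric (X : Type*) [MetricSpace X] : Prop :=
  ∀ x : X, ∃ invol : X ≃ᵢ X, invol x = x ∧ ∀ y : X, dist y (invol y) = 2 * dist x y

/-- The local connected component `C_S(y,r)`. -/
def localComp (S : Set X) (y : X) (r : ℝ) : Set X :=
  connectedComponentIn (S ∩ closedBall y r) y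

end BasicDefs

section MeasureDefs

variable {X : Type*} [MetricSpace X] [MeasurableSpace X]

/-- A measure on `Config X` is isometry invariant if it is preserved by the push-forward
action of every isometry of `X`. -/
def IsoInvariant (P : Measure (Config X)) : Prop :=
  ∀ γ : X ≃ᵢ X, Measure.map (Config.mapIso γ) P = P

/-- Every isometry-invariant event has probability `0` or `1`. -/
def ErgodicIso (P : Measure (Config X)) : Prop :=
  ∀ E : Set (Config X), MeasurableSet E →
    (∀ γ : X ≃ᵢ X, Config.mapIso γ ⁻¹' E = E) → P E = 0 ∨ P E = 1

/-- `P` is insertion-tolerant: for every Borel `B` with `0 < μ B < ∞`, the law of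
`ω + δ_Y` with `Y` uniform in `B` independent of `ω` is absolutely continuous w.r.t. `P`. -/
def InsertionTolerant (μ : Measure X) (P : Measure (Config X)) : Prop :=
  ∀ B : Set X, MeasurableSet B → 0 < μ B → μ B < ⊤ →
    Measure.map (fun p : Config X × X => Config.insertPt p.2 p.1)
      (P.prod ((μ B)⁻¹ • μ.restrict B)) ≪ P

/-- `P` is deletion-tolerant: for every Borel `B` with `0 < μ B < ∞`, the law of
`ω|_{B^c}` is absolutely continuous w.r.t. `P`. -/
def DeletionTolerant (μ : Measure X) (P : Measure (Config X)) : Prop :=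
  ∀ B : Set X, MeasurableSet B → 0 < μ B → μ B < ⊤ →
    Measure.map (Config.restrict B) P ≪ P

/-- `P` is the law of the Poisson point measure on `X` with intensity `ν`:
counts in disjoint Borel sets are independent with the correct Poisson distributions. -/
def IsPoisson (ν : Measure X) (P : Measure (Config X)) : Prop :=
  IsProbabilityMeasure P ∧
  (∀ B : Set X, MeasurableSet B → ν B < ⊤ → ∀ k : ℕ,
      P {s : Config X | Config.count B s = k} =
        ENNReal.ofReal (Real.exp (-(ν B).toReal) * (ν B).toReal ^ k / (Nat.factorial k))) ∧
  (∀ B : Set X, MeasurableSet B → ν B = ⊤ → P {s : Config X | (s.1 ∩ B).Infinite} = 1) ∧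
  (∀ (n : ℕ) (B : Fin n → Set X) (k : Fin n → ℕ),
      (∀ i, MeasurableSet (B i)) → (Pairwise fun i j => Disjoint (B i) (B j)) →
      P {s : Config X | ∀ i, Config.count (B i) s = k i} =
        ∏ i, P {s : Config X | Config.count (B i) s = k i})

end MeasureDefs

section PathDefs

variable {X : Type*} [MetricSpace X]

/-- The intrinsic distance between `x` and `y` within the set `S`: the infimum of the lengths
of continuous paths from `x` to `y` whose range is contained in `S`. -/
def pathDistIn (S : Set X) (x y : X) : ℝ≥0∞ :=
  ⨅ (γ : Path x y) (_ : Set.range ⇑γ ⊆ S), eVariationOn ⇑γ Set.univ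

/-- Intrinsic distance within `S` between two subsets `A` and `B`. -/
def setDistIn (S A B : Set X) : ℝ≥0∞ :=
  ⨅ (a : X) (_ : a ∈ A) (b : X) (_ : b ∈ B), pathDistIn S a b

/-- `y` is an `r`-trifurcation (marked by a point of `Y`) for the set `S`. -/
def IsTrifurcation (S : Set X) (Y : Set X) (r : ℝ) (y : X) : Prop :=
  y ∈ Y ∧ closedBall y 1 ⊆ S ∧ (∀ y' ∈ Y, y' ≠ y → 2 * r < dist y y') ∧
    3 ≤ numUcomps (connectedComponentIn S y \ localComp S y r)

end PathDefs

end BooleanModel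
/-!
Having exactly `k` unbounded components is an isometry invariant event. Such an event is almost
surely unaffected by a bounded modification of the configuration whose law remains absolutely
continuous with respect to `P`: approximate the event by local events and reflect these far away
from the modified region. If `2 ≤ k < ∞`, however, deleting all points in a large ball merges two
unbounded vacant components, and inserting points along a chain merges two unbounded occupied
components. Since only finitely many components meet any bounded set, merging strictly decreases
the number of unbounded components, a contradiction.

The geometric input is that closed balls are connected and that the components of `O` and `V` are
locally finite. It is derived from the point reflections `s_a` alone, starting from the inequality
`2 * dist a b ≤ dist (s_a y) (s_b y)`. A maximality argument over finite families of points shows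
that it is almost an equality at small scales. Hence there are no small groups of isometries near
the identity, which makes the reflection at a point unique and `s_a y` locally Lipschitz in `a`.
A Newton iteration then finds the midpoints of nearby points, and Birkhoff's curve shortening those
of arbitrary points.
-/

namespace BooleanModel

/-! ### Point reflections -/

section PointReflection

variable {X : Type*} [MetricSpace X]

lemma dist_inv_apply_left (g : X ≃ᵢ X) (x y : X) : dist (g⁻¹ x) y = dist x (g y) := by
  rw [← g.dist_eq, IsometryEquiv.apply_inv_self]

lemma dist_inv_apply_right (g : X ≃ᵢ X) (x y : X) : dist x (g⁻¹ y) = dist (g x) y := by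
  rw [← g.dist_eq, IsometryEquiv.apply_inv_self]

lemma dist_pow_apply_le (g : X ≃ᵢ X) (y : X) (n : ℕ) :
    dist y ((g ^ n) y) ≤ n * dist y (g y) := by
  induction n with
  | zero => simp
  | succ n ih =>
    calc dist y ((g ^ (n + 1)) y)
        ≤ dist y ((g ^ n) y) + dist ((g ^ n) y) ((g ^ n) (g y)) := by
          rw [pow_succ, IsometryEquiv.mul_apply]; exact dist_triangle _ _ _
      _ ≤ n * dist y (g y) + dist y (g y) := by rw [(g ^ n).dist_eq]; gcongr
      _ = (n + 1 : ℕ) * dist y (g y) := by push_cast; ring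

/-- `γ` is an isometric point reflection with center `a`, i.e. one of the isometries whose
existence at every point is asserted by `PointSymmetric`. -/
structure IsPointReflection (a : X) (γ : X ≃ᵢ X) : Prop where
  map_center : γ a = a
  dist_map (y : X) : dist y (γ y) = 2 * dist a y

lemma PointSymmetric.exists_isPointReflection (hX : PointSymmetric X) (a : X) :
    ∃ γ, IsPointReflection a γ :=
  (hX a).imp fun _ h => ⟨h.1, h.2⟩

namespace IsPointReflection

variable {a b : X} {α β γ : X ≃ᵢ X}

lemma inv_map_center (h : IsPointReflection a γ) : γ⁻¹ a = a :=
  γ.injective (by rw [IsometryEquiv.apply_inv_self, h.map_center])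

lemma inv (h : IsPointReflection a γ) : IsPointReflection a γ⁻¹ where
  map_center := h.inv_map_center
  dist_map y := by rw [dist_inv_apply_right, dist_comm, h.dist_map]

lemma conj (h : IsPointReflection a γ) (g : X ≃ᵢ X) :
    IsPointReflection (g a) (g * γ * g⁻¹) where
  map_center := by simp [IsometryEquiv.mul_apply, h.map_center]
  dist_map y := by
    have := h.dist_map (g⁻¹ y)
    rw [dist_inv_apply_left, dist_inv_apply_right] at this
    simpa [IsometryEquiv.mul_apply] using this

lemma dist_center_map (h : IsPointReflection a γ) (y : X) : dist a (γ y) = dist a y := by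
  conv_lhs => rw [← h.map_center]
  exact γ.dist_eq a y

lemma two_mul_dist_center_le (h : IsPointReflection a γ) (x z : X) :
    2 * dist a z ≤ dist x z + dist (γ x) z :=
  calc 2 * dist a z = dist z (γ z) := (h.dist_map z).symm
    _ ≤ dist z (γ x) + dist (γ x) (γ z) := dist_triangle _ _ _
    _ = dist x z + dist (γ x) z := by rw [γ.dist_eq, dist_comm z, add_comm]

lemma two_mul_dist_sub_le_dist_map (h : IsPointReflection a γ) (x z : X) :
    2 * dist a x - dist x z ≤ dist (γ x) z := by
  linarith [h.dist_map x, dist_triangle x z (γ x), dist_comm z (γ x)]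

lemma dist_pow_mul_inv_center (ha : IsPointReflection a α) (hb : IsPointReflection b β) (n : ℕ) :
    dist (((β * α⁻¹) ^ (n + 1)) a) a = 2 * (n + 1) * dist a b ∧
      dist (((β * α⁻¹) ^ (n + 1)) a) b = (2 * n + 1) * dist a b := by
  induction n with
  | zero =>
    simp only [zero_add, pow_one, IsometryEquiv.mul_apply, ha.inv_map_center, Nat.cast_zero,
      mul_one, mul_zero, one_mul]
    exact ⟨by rw [dist_comm, hb.dist_map, dist_comm b a],
      by rw [dist_comm, hb.dist_center_map, dist_comm b a]⟩
  | succ n ih =>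
    rw [pow_succ', IsometryEquiv.mul_apply, IsometryEquiv.mul_apply]
    generalize ((β * α⁻¹) ^ (n + 1)) a = y at ih
    obtain ⟨dist_a, dist_b⟩ := ih
    have reflect_a : dist (α⁻¹ y) a = dist y a := by rw [dist_inv_apply_left, ha.map_center]
    have reflect_b : dist (β (α⁻¹ y)) b = dist (α⁻¹ y) b := by
      rw [dist_comm, hb.dist_center_map, dist_comm]
    have lower_b := ha.inv.two_mul_dist_sub_le_dist_map y b
    have upper_b := dist_triangle (α⁻¹ y) a b
    have lower_a := hb.two_mul_dist_sub_le_dist_map (α⁻¹ y) a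
    have upper_a := dist_triangle (β (α⁻¹ y)) b a
    rw [dist_comm a y] at lower_b
    rw [dist_comm b] at lower_a
    rw [dist_comm b a] at upper_a
    push_cast
    constructor <;> linarith

/-- The powers of the transvection `β * α⁻¹` move `a` linearly at speed `2 * dist a b`, hence
cannot move any other point more slowly. -/
lemma two_mul_dist_le (ha : IsPointReflection a α) (hb : IsPointReflection b β) (y : X) :
    2 * dist a b ≤ dist (α y) (β y) := by
  obtain ⟨z, rfl⟩ : ∃ z, α⁻¹ z = y := ⟨α y, IsometryEquiv.inv_apply_self _ _⟩
  rw [IsometryEquiv.apply_inv_self, ← IsometryEquiv.mul_apply β]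
  set T := β * α⁻¹
  have linear (n : ℕ) :
      ((n + 1 : ℕ) : ℝ) * (2 * dist a b - dist z (T z)) ≤ 2 * dist z a := by
    have speed : dist ((T ^ (n + 1)) a) a = 2 * (n + 1) * dist a b :=
      (ha.dist_pow_mul_inv_center hb n).1
    have slow := dist_pow_apply_le T z (n + 1)
    have triangle := dist_triangle4 ((T ^ (n + 1)) a) ((T ^ (n + 1)) z) z a
    rw [(T ^ (n + 1)).dist_eq, dist_comm a, dist_comm _ z] at triangle
    push_cast at slow ⊢
    linarith
  by_contra! hlt
  obtain ⟨n, hn⟩ := exists_nat_gt (2 * dist z a / (2 * dist a b - dist z (T z)))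
  rw [div_lt_iff₀ (by linarith)] at hn
  have := linear n
  push_cast at this
  linarith

lemma dist_sq_mul_inv_center (ha : IsPointReflection a α) (hb : IsPointReflection b β) :
    dist a ((β * α⁻¹) ((β * α⁻¹) a)) = 4 * dist a b := by
  have := (ha.dist_pow_mul_inv_center hb 1).1
  rw [dist_comm, ← IsometryEquiv.mul_apply, ← pow_two, this]
  norm_num

lemma two_mul_displacement_le (h : IsPointReflection a γ) (g : X ≃ᵢ X) (p : X) :
    2 * dist a (g a) ≤ dist p (g p) + dist (γ p) (g (γ p)) := by
  have key := h.two_mul_dist_le (h.conj g) (g p)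
  simp only [IsometryEquiv.mul_apply, IsometryEquiv.inv_apply_self] at key
  linarith [dist_triangle (γ (g p)) (γ p) (g (γ p)), γ.dist_eq (g p) p, dist_comm (g p) p]

end IsPointReflection

namespace PointSymmetric

lemma displacement_le_add_div_two_pow (hX : PointSymmetric X) (g : X ≃ᵢ X) (v : X) {S r : ℝ}
    (hS : ∀ q, dist v q ≤ r → dist q (g q) ≤ S) (j : ℕ) (y : X) (hy : 2 ^ j * dist v y ≤ r) :
    dist y (g y) ≤ dist v (g v) + S / 2 ^ j := by
  induction j generalizing y with
  | zero =>
    have := hS y (by simpa using hy)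
    have := dist_nonneg (x := v) (y := g v)
    rw [pow_zero, div_one]
    linarith
  | succ j ih =>
    obtain ⟨γ, hγ⟩ := hX.exists_isPointReflection y
    have convex := hγ.two_mul_displacement_le g v
    have doubled := ih (γ v) (by rw [hγ.dist_map, dist_comm y v]; rw [pow_succ] at hy; linarith)
    rw [pow_succ, ← div_div]
    linarith

lemma displacement_le (hX : PointSymmetric X) (g : X ≃ᵢ X) (v : X) {S r : ℝ} (hr : 0 < r)
    (hS : ∀ q, dist v q ≤ r → dist q (g q) ≤ S) (y : X) (hy : dist v y ≤ r) :
    dist y (g y) ≤ dist v (g v) + 2 * (dist v y / r) * S := by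
  have hS0 : 0 ≤ S := dist_nonneg.trans (hS v (by simpa using hr.le))
  rcases eq_or_ne v y with rfl | hvy
  · simp
  have hd : 0 < dist v y := dist_pos.2 hvy
  obtain ⟨j, hj, hj'⟩ := exists_nat_pow_near ((one_le_div hd).2 hy) (one_lt_two (α := ℝ))
  rw [le_div_iff₀ hd] at hj
  rw [div_lt_iff₀ hd, pow_succ] at hj'
  calc dist y (g y) ≤ dist v (g v) + S / 2 ^ j :=
        hX.displacement_le_add_div_two_pow g v hS j y hj
    _ ≤ dist v (g v) + 2 * (dist v y / r) * S := by
        rw [div_eq_inv_mul]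
        gcongr
        rw [inv_le_iff_one_le_mul₀ (by positivity), ← mul_div_assoc, div_mul_eq_mul_div,
          le_div_iff₀ hr]
        linarith

end PointSymmetric

end PointReflection

/-! ### Almost-flatness at small scales -/

section AlmostFlat

variable {X : Type*} [MetricSpace X]

/-- The family `p` lies in the closed ball of radius `r` around `x` and its members are pairwise
`s * r`-separated. -/
structure IsSeparatedFamily (x : X) (s r : ℝ) {N : ℕ} (p : Fin N → X) : Prop where
  dist_le (i : Fin N) : dist x (p i) ≤ r
  le_dist : Pairwise fun i j => s * r ≤ dist (p i) (p j)

/-- The sum of all distances within a finite family of points. -/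
def distSum {N : ℕ} (p : Fin N → X) : ℝ := ∑ i, ∑ j, dist (p i) (p j)

lemma distSum_nonneg {N : ℕ} (p : Fin N → X) : 0 ≤ distSum p :=
  Finset.sum_nonneg fun _ _ => Finset.sum_nonneg fun _ _ => dist_nonneg

namespace IsSeparatedFamily

variable {x : X} {s r : ℝ} {N : ℕ} {p : Fin N → X}

lemma reflect (h : IsSeparatedFamily x s r p) {ρ : X → X ≃ᵢ X}
    (hρ : ∀ z, IsPointReflection z (ρ z)) :
    IsSeparatedFamily x s (2 * r) fun i => ρ (p i) x where
  dist_le i := by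
    rw [(hρ _).dist_map, dist_comm]
    linarith [h.dist_le i]
  le_dist i j hij := by
    linarith [(hρ (p i)).two_mul_dist_le (hρ (p j)) x, h.le_dist hij]

lemma cons (h : IsSeparatedFamily x s r p) {w : X} (hw : dist x w ≤ r)
    (hwp : ∀ i, s * r ≤ dist (p i) w) : IsSeparatedFamily x s r (Fin.cons w p) where
  dist_le := Fin.cases hw h.dist_le
  le_dist i j hij := by
    induction i using Fin.cases with
    | zero =>
      induction j using Fin.cases with
      | zero => exact absurd rfl hij
      | succ j => simpa [dist_comm] using hwp j
    | succ i =>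
      induction j using Fin.cases with
      | zero => simpa using hwp i
      | succ j => simpa using h.le_dist (ne_of_apply_ne Fin.succ hij)

lemma exists_card_le [ProperSpace X] (x : X) {s r : ℝ} (hs : 0 < s) (hr : 0 < r) :
    ∃ B : ℕ, ∀ (N : ℕ) (p : Fin N → X), IsSeparatedFamily x s r p → N ≤ B := by
  obtain ⟨t, ht, hcov⟩ := Metric.totallyBounded_iff.1
    (isCompact_closedBall x r).totallyBounded (s * r / 2) (by positivity)
  refine ⟨ht.toFinset.card, fun N p hp => ?_⟩
  have near (i : Fin N) : ∃ y ∈ t, dist (p i) y < s * r / 2 := by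
    simpa using hcov (mem_closedBall'.2 (hp.dist_le i))
  choose f hft hf using near
  have f_injective : Injective f := fun i j hij => by
    by_contra hne
    have := hf j
    rw [← hij] at this
    linarith [hp.le_dist hne, hf i, dist_triangle_right (p i) (p j) (f i)]
  simpa using Finset.card_le_card_of_injOn (s := Finset.univ) (t := ht.toFinset) f
    (fun i _ => by simpa using hft i) f_injective.injOn

lemma distSum_le (h : IsSeparatedFamily x s r p) : distSum p ≤ N * (N * (2 * r)) :=
  calc distSum p ≤ ∑ _i : Fin N, ∑ _j : Fin N, 2 * r :=
        Finset.sum_le_sum fun i _ => Finset.sum_le_sum fun j _ => by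
          linarith [dist_triangle_left (p i) (p j) x, h.dist_le i, h.dist_le j]
    _ = N * (N * (2 * r)) := by simp

end IsSeparatedFamily

section Reflections

variable {ρ : X → X ≃ᵢ X}

lemma two_mul_distSum_le (hρ : ∀ z, IsPointReflection z (ρ z)) (x : X) {N : ℕ} (p : Fin N → X) :
    2 * distSum p ≤ distSum fun i => ρ (p i) x := by
  simp only [distSum, Finset.mul_sum]
  exact Finset.sum_le_sum fun i _ => Finset.sum_le_sum fun j _ =>
    (hρ (p i)).two_mul_dist_le (hρ (p j)) x

lemma dist_reflect_le_of_distSum_le (hρ : ∀ z, IsPointReflection z (ρ z)) {x : X} {N : ℕ}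
    {p : Fin N → X} {δ : ℝ} (hp : (distSum fun i => ρ (p i) x) ≤ 2 * distSum p + δ)
    (i j : Fin N) : dist (ρ (p i) x) (ρ (p j) x) ≤ 2 * dist (p i) (p j) + δ := by
  let excess (i j : Fin N) : ℝ := dist (ρ (p i) x) (ρ (p j) x) - 2 * dist (p i) (p j)
  have excess_nonneg (i j : Fin N) : 0 ≤ excess i j :=
    sub_nonneg.2 ((hρ (p i)).two_mul_dist_le (hρ (p j)) x)
  have excess_le : excess i j ≤ δ :=
    calc excess i j ≤ ∑ j, excess i j :=
          Finset.single_le_sum (fun j _ => excess_nonneg i j) (Finset.mem_univ j)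
      _ ≤ ∑ i, ∑ j, excess i j :=
          Finset.single_le_sum (f := fun i => ∑ j, excess i j)
            (fun i _ => Finset.sum_nonneg fun j _ => excess_nonneg i j) (Finset.mem_univ i)
      _ = (distSum fun i => ρ (p i) x) - 2 * distSum p := by
          simp only [excess, distSum, Finset.sum_sub_distrib, Finset.mul_sum]
      _ ≤ δ := by linarith
  linarith [excess_le]

/-- Reflecting turns a family at scale `r` into one at scale `2 * r`, so the maximal cardinality
can only drop as the scale shrinks, and it is eventually constant. -/
lemma exists_maximal_card_isSeparatedFamily [ProperSpace X]
    (hρ : ∀ z, IsPointReflection z (ρ z)) (x : X) {s : ℝ} (hs : 0 < s) :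
    ∃ N n₀ : ℕ, (∀ n : ℕ, ∃ p : Fin N → X, IsSeparatedFamily x s ((1 / 2) ^ n) p) ∧
      ∀ n ≥ n₀, ∀ q : Fin (N + 1) → X, ¬IsSeparatedFamily x s ((1 / 2) ^ n) q := by
  let Realized (n N : ℕ) : Prop := ∃ p : Fin N → X, IsSeparatedFamily x s ((1 / 2) ^ n) p
  have realized_anti {n m N : ℕ} (hnm : n ≤ m) : Realized m N → Realized n N := by
    induction m, hnm using Nat.le_induction with
    | base => exact id
    | succ m _ ih =>
      rintro ⟨p, hp⟩
      refine ih ⟨fun i => ρ (p i) x, ?_⟩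
      convert hp.reflect hρ using 1
      rw [pow_succ]
      ring
  obtain ⟨B, hB⟩ := IsSeparatedFamily.exists_card_le x hs (r := (1 / 2) ^ 0) (by simp)
  have bounded (N : ℕ) (hN : ∀ n, Realized n N) : N ≤ B := (hN 0).elim (hB N)
  have realized_zero : ∀ n, Realized n 0 := fun n => ⟨Fin.elim0, Fin.rec0, Fin.rec0⟩
  classical
  have spec := Nat.findGreatest_spec (P := fun N => ∀ n, Realized n N) (Nat.zero_le B) realized_zero
  set N := Nat.findGreatest (fun N => ∀ n, Realized n N) B
  have not_succ : ¬∀ n, Realized n (N + 1) := fun h =>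
    (Nat.le_findGreatest (bounded _ h) h).not_gt (Nat.lt_succ_self N)
  push Not at not_succ
  obtain ⟨n₀, hn₀⟩ := not_succ
  exact ⟨N, n₀, spec, fun n hn q hq => hn₀ (realized_anti hn ⟨q, hq⟩)⟩

/-- The suprema of the sets `V n` decrease and hence converge. -/
lemma exists_almost_upper_bound_of_forall_exists_le {V : ℕ → Set ℝ} (nonempty : ∀ n, (V n).Nonempty)
    (bddAbove : ∀ n, BddAbove (V n)) (nonneg : ∀ n, ∀ v ∈ V n, 0 ≤ v)
    (step : ∀ n, ∀ v ∈ V (n + 1), ∃ w ∈ V n, v ≤ w) {δ : ℝ} (hδ : 0 < δ) :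
    ∃ n₁ : ℕ, ∀ n ≥ n₁, ∃ v ∈ V (n + 1), ∀ w ∈ V n, w ≤ v + δ := by
  have sSup_antitone : Antitone fun n => sSup (V n) :=
    antitone_nat_of_succ_le fun n => csSup_le (nonempty _) fun v hv =>
      let ⟨_, hw, hvw⟩ := step n v hv
      hvw.trans (le_csSup (bddAbove n) hw)
  have sSup_bddBelow : BddBelow (range fun n => sSup (V n)) :=
    ⟨0, forall_mem_range.2 fun n => Real.sSup_nonneg (nonneg n)⟩
  obtain ⟨n₁, hn₁⟩ := Metric.tendsto_atTop.1 (tendsto_atTop_ciInf sSup_antitone sSup_bddBelow)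
    (δ / 2) (by positivity)
  refine ⟨n₁, fun n hn => ?_⟩
  have drop : sSup (V n) < sSup (V (n + 1)) + δ / 2 := by
    have := (le_abs_self _).trans_lt (hn₁ n hn)
    linarith [ciInf_le sSup_bddBelow (n + 1)]
  obtain ⟨v, hv, almost_max⟩ := exists_lt_of_lt_csSup (nonempty (n + 1))
    (sub_lt_self _ (half_pos hδ))
  exact ⟨v, hv, fun w hw => by linarith [le_csSup (bddAbove n) hw]⟩

/-- For an almost maximal family at a small scale, the reflected family competes at the next larger
scale, where the maximum is almost the same after normalization. -/
lemma exists_almost_doubled_family (hρ : ∀ z, IsPointReflection z (ρ z)) {x : X} {s δ : ℝ} {N : ℕ}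
    (hN : ∀ n : ℕ, ∃ p : Fin N → X, IsSeparatedFamily x s ((1 / 2) ^ n) p) (hδ : 0 < δ) :
    ∃ n₁ : ℕ, ∀ n ≥ n₁, ∃ p : Fin N → X, IsSeparatedFamily x s ((1 / 2) ^ (n + 1)) p ∧
      (distSum fun i => ρ (p i) x) ≤ 2 * distSum p + δ * (1 / 2) ^ n := by
  let V (n : ℕ) : Set ℝ :=
    {v | ∃ p : Fin N → X, IsSeparatedFamily x s ((1 / 2) ^ n) p ∧ v = 2 ^ n * distSum p}
  have pow_mul_pow (n : ℕ) : (2 : ℝ) ^ n * (1 / 2) ^ n = 1 := by rw [← mul_pow]; norm_num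
  have V_nonempty (n : ℕ) : (V n).Nonempty := (hN n).elim fun p hp => ⟨_, p, hp, rfl⟩
  have V_bddAbove (n : ℕ) : BddAbove (V n) := by
    refine ⟨2 * N * N, ?_⟩
    rintro _ ⟨p, hp, rfl⟩
    calc (2 : ℝ) ^ n * distSum p ≤ 2 ^ n * (N * (N * (2 * (1 / 2) ^ n))) := by
          gcongr; exact hp.distSum_le
      _ = 2 * N * N * (2 ^ n * (1 / 2) ^ n) := by ring
      _ = 2 * N * N := by rw [pow_mul_pow, mul_one]
  have reflect_mem (n : ℕ) {p : Fin N → X} (hp : IsSeparatedFamily x s ((1 / 2) ^ (n + 1)) p) :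
      (2 : ℝ) ^ n * (distSum fun i => ρ (p i) x) ∈ V n := by
    refine ⟨_, ?_, rfl⟩
    convert hp.reflect hρ using 1
    rw [pow_succ]
    ring
  have V_nonneg (n : ℕ) : ∀ v ∈ V n, 0 ≤ v := by
    rintro _ ⟨p, -, rfl⟩
    exact mul_nonneg (by positivity) (distSum_nonneg p)
  have V_step (n : ℕ) : ∀ v ∈ V (n + 1), ∃ w ∈ V n, v ≤ w := by
    rintro _ ⟨p, hp, rfl⟩
    refine ⟨_, reflect_mem n hp, ?_⟩
    rw [pow_succ, mul_assoc]
    gcongr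
    exact two_mul_distSum_le hρ x p
  obtain ⟨n₁, hn₁⟩ :=
    exists_almost_upper_bound_of_forall_exists_le V_nonempty V_bddAbove V_nonneg V_step hδ
  refine ⟨n₁, fun n hn => ?_⟩
  obtain ⟨_, ⟨p, hp, rfl⟩, almost_max⟩ := hn₁ n hn
  have upper := almost_max _ (reflect_mem n hp)
  refine ⟨p, hp, ?_⟩
  have scaled : (2 : ℝ) ^ n * (distSum fun i => ρ (p i) x) ≤
      2 ^ n * (2 * distSum p + δ * (1 / 2) ^ n) := by
    rw [mul_add, mul_left_comm _ δ, pow_mul_pow]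
    rw [pow_succ] at upper
    linarith
  exact le_of_mul_le_mul_left scaled (by positivity)

end Reflections

/-- At scale `r` around `x` the map sending a center `a` to the image of `x` under a point
reflection at `a` is, up to an error `η * r`, surjective and a homothety of ratio `2`. -/
structure AlmostFlatAt (x : X) (η r : ℝ) : Prop where
  exists_dist_le (w : X) (hw : dist x w ≤ r) :
    ∃ a γ, IsPointReflection a γ ∧ dist (γ x) w ≤ η * r
  dist_le {a b : X} {α β : X ≃ᵢ X} (ha : IsPointReflection a α) (hb : IsPointReflection b β)
    (hxa : dist x a ≤ r) (hxb : dist x b ≤ r) : dist (α x) (β x) ≤ 2 * dist a b + η * r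

lemma almostFlatAt_of_family {ρ : X → X ≃ᵢ X} (hρ : ∀ z, IsPointReflection z (ρ z)) {x : X}
    {s r δ η : ℝ} {N : ℕ} {p : Fin N → X}
    (dense : ∀ w, dist x w ≤ 2 * r → ∃ i, dist (ρ (p i) x) w ≤ s * (2 * r))
    (doubled : ∀ i j, dist (ρ (p i) x) (ρ (p j) x) ≤ 2 * dist (p i) (p j) + δ)
    (hs : 0 ≤ s) (hr : 0 ≤ r) (hδ : 0 ≤ δ) (hη : 8 * (s * r) + δ ≤ η * r) :
    AlmostFlatAt x η r where
  exists_dist_le w hw := by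
    obtain ⟨i, hi⟩ := dense w (by linarith)
    exact ⟨_, _, hρ (p i), by linarith [mul_nonneg hs hr]⟩
  dist_le {a b α β} ha hb hxa hxb := by
    obtain ⟨i, hi⟩ := dense (α x) (by rw [ha.dist_map, dist_comm]; linarith)
    obtain ⟨j, hj⟩ := dense (β x) (by rw [hb.dist_map, dist_comm]; linarith)
    have center_i := (hρ (p i)).two_mul_dist_le ha x
    have center_j := (hρ (p j)).two_mul_dist_le hb x
    have images := dist_triangle4 (α x) (ρ (p i) x) (ρ (p j) x) (β x)
    have centers := dist_triangle4 (p i) a b (p j)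
    rw [dist_comm (α x) (ρ _ x)] at images
    rw [dist_comm b] at centers
    linarith [doubled i j]

namespace AlmostFlatAt

variable {x : X} {η r : ℝ}

lemma map (h : AlmostFlatAt x η r) (g : X ≃ᵢ X) : AlmostFlatAt (g x) η r where
  exists_dist_le w hw := by
    obtain ⟨a, γ, ha, hγ⟩ := h.exists_dist_le (g⁻¹ w) (by rwa [dist_inv_apply_right])
    refine ⟨_, _, ha.conj g, ?_⟩
    rwa [dist_inv_apply_right, ← IsometryEquiv.inv_apply_self g x] at hγ
  dist_le {a b α β} ha hb hxa hxb := by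
    have := h.dist_le (ha.conj g⁻¹) (hb.conj g⁻¹) (by rwa [dist_inv_apply_right])
      (by rwa [dist_inv_apply_right])
    simpa only [IsometryEquiv.mul_apply, IsometryEquiv.dist_eq, inv_inv] using this

lemma of_dist_le (h : AlmostFlatAt x η r) {y : X} {δ θ t : ℝ} (hxy : dist x y ≤ δ)
    (ht : t + δ ≤ r) (hθ : η * r + 2 * δ ≤ θ * t) : AlmostFlatAt y θ t where
  exists_dist_le w hw := by
    obtain ⟨a, γ, ha, hγ⟩ := h.exists_dist_le w (by linarith [dist_triangle x y w])
    refine ⟨a, γ, ha, ?_⟩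
    linarith [dist_triangle (γ y) (γ x) w, γ.dist_eq y x, dist_comm x y,
      dist_nonneg (x := x) (y := y)]
  dist_le {a b α β} ha hb hya hyb := by
    have := h.dist_le ha hb (by linarith [dist_triangle x y a]) (by linarith [dist_triangle x y b])
    linarith [dist_triangle4 (α y) (α x) (β x) (β y), α.dist_eq y x, β.dist_eq x y, dist_comm x y]

end AlmostFlatAt

namespace PointSymmetric

lemma exists_almostFlatAt_two_pow [ProperSpace X] (hX : PointSymmetric X) (x : X) {η : ℝ}
    (hη : 0 < η) : ∃ n₁ : ℕ, ∀ n ≥ n₁, AlmostFlatAt x η ((1 / 2) ^ (n + 1)) := by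
  choose ρ hρ using hX.exists_isPointReflection
  obtain ⟨N, n₀, realized, maximal⟩ :=
    exists_maximal_card_isSeparatedFamily hρ x (s := η / 16) (by positivity)
  obtain ⟨n₁, hn₁⟩ := exists_almost_doubled_family hρ realized (δ := η / 4) (by positivity)
  refine ⟨max n₀ n₁, fun n hn => ?_⟩
  have half : (1 / 2 : ℝ) ^ n = 2 * (1 / 2) ^ (n + 1) := by rw [pow_succ]; ring
  obtain ⟨p, hp, hsum⟩ := hn₁ n (le_of_max_le_right hn)
  refine almostFlatAt_of_family hρ (s := η / 16) (δ := η / 4 * (1 / 2) ^ n) (fun w hw => ?_)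
    (dist_reflect_le_of_distSum_le hρ hsum) (by positivity) (by positivity) (by positivity)
    (by rw [half]; linarith)
  by_contra! far
  have reflected := hp.reflect hρ
  rw [← half] at far hw reflected
  exact maximal n (le_of_max_le_left hn) _ (reflected.cons hw fun i => (far i).le)

lemma exists_almostFlatAt [ProperSpace X] (hX : PointSymmetric X) (x : X) {η : ℝ} (hη : 0 < η) :
    ∃ R > 0, ∀ r, 0 < r → r ≤ R → AlmostFlatAt x η r := by
  obtain ⟨n₁, hn₁⟩ := hX.exists_almostFlatAt_two_pow x (half_pos hη)
  refine ⟨(1 / 2) ^ (n₁ + 2), by positivity, fun r hr hrR => ?_⟩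
  obtain ⟨n, hn, hn'⟩ := exists_nat_pow_near_of_lt_one hr
    (hrR.trans (pow_le_one₀ (by norm_num) (by norm_num))) (one_half_pos (α := ℝ)) one_half_lt_one
  have n₁_lt : n₁ + 2 < n + 1 :=
    (pow_lt_pow_iff_right_of_lt_one₀ one_half_pos one_half_lt_one).1 (hn.trans_le hrR)
  obtain ⟨n, rfl⟩ := Nat.exists_eq_add_of_le' (show 1 ≤ n by omega)
  refine (hn₁ n (by omega)).of_dist_le (δ := 0) (dist_self x).le (by simpa using hn') ?_
  rw [pow_succ] at hn
  nlinarith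

lemma dense_range_isometryEquiv_apply [ProperSpace X] [PreconnectedSpace X]
    (hX : PointSymmetric X) (x : X) : Dense (range fun g : X ≃ᵢ X => g x) := by
  obtain ⟨R, hR, flat⟩ := hX.exists_almostFlatAt x (η := 1 / 4) (by norm_num)
  set O := range fun g : X ≃ᵢ X => g x
  have O_nonempty : O.Nonempty := ⟨x, 1, rfl⟩
  have mem_closure {w : X} (hw : infDist w O < R / 2) : w ∈ closure O := by
    rw [mem_closure_iff_infDist_zero O_nonempty]
    by_contra h0
    have hpos : 0 < infDist w O := lt_of_le_of_ne infDist_nonneg (Ne.symm h0)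
    obtain ⟨_, ⟨g, rfl⟩, hg⟩ := (infDist_lt_iff O_nonempty).1
      (show infDist w O < 3 / 2 * infDist w O by linarith)
    obtain ⟨a, γ, -, hγ⟩ := ((flat (3 / 2 * infDist w O) (by positivity)
      (by linarith)).map g).exists_dist_le w (by rw [dist_comm]; exact hg.le)
    have := infDist_le_dist_of_mem (x := w) (mem_range_self (f := fun g : X ≃ᵢ X => g x) (γ * g))
    simp only [IsometryEquiv.mul_apply] at this
    rw [dist_comm] at hγ
    change infDist w O ≤ _ at this
    linarith
  have isOpen_closure : IsOpen (closure O) := by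
    refine Metric.isOpen_iff.2 fun y hy => ⟨R / 2, by positivity, fun w hw => mem_closure ?_⟩
    rw [← infDist_closure]
    exact (infDist_le_dist_of_mem hy).trans_lt hw
  exact dense_iff_closure_eq.2 <|
    IsClopen.eq_univ ⟨isClosed_closure, isOpen_closure⟩ (O_nonempty.mono subset_closure)

end PointSymmetric

/-- Almost-flatness with relative error `η`, uniformly over all base points and all scales up to
`R`. -/
def AlmostFlatUpTo (X : Type*) [MetricSpace X] (η R : ℝ) : Prop :=
  ∀ (x : X) (r : ℝ), 0 < r → r ≤ R → AlmostFlatAt x η r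

lemma AlmostFlatUpTo.mono {η η' R R' : ℝ} (h : AlmostFlatUpTo X η R) (hη : η ≤ η') (hR : R' ≤ R) :
    AlmostFlatUpTo X η' R' := fun x r hr hrR =>
  (h x r hr (hrR.trans hR)).of_dist_le (δ := 0) (dist_self x).le (by simp)
    (by linarith [mul_le_mul_of_nonneg_right hη hr.le])

lemma PointSymmetric.exists_almostFlatUpTo [ProperSpace X] [PreconnectedSpace X]
    (hX : PointSymmetric X) {η : ℝ} (hη : 0 < η) : ∃ R > 0, AlmostFlatUpTo X η R := by
  rcases isEmpty_or_nonempty X with hempty | ⟨⟨x₀⟩⟩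
  · exact ⟨1, one_pos, fun x => hempty.elim x⟩
  obtain ⟨R, hR, flat⟩ := hX.exists_almostFlatAt x₀ (η := η / 4) (by positivity)
  refine ⟨R / 2, half_pos hR, fun x r hr hrR => ?_⟩
  obtain ⟨_, ⟨g, rfl⟩, hg⟩ := (hX.dense_range_isometryEquiv_apply x₀).exists_dist_lt x
    (show 0 < min r (η * r / 4) by positivity)
  rw [lt_min_iff, dist_comm] at hg
  exact ((flat (2 * r) (by positivity) (by linarith)).map g).of_dist_le le_rfl
    (by linarith) (by linarith)

end AlmostFlat

/-! ### No small groups of isometries -/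

section SmallDisplacement

variable {X : Type*} [MetricSpace X]

/-- The improvement step forces a minimizer of `f` on `{p | dist p y + L * f p ≤ L * f y}` to be a
zero. -/
lemma exists_eq_zero_of_halving_step [ProperSpace X] {f : X → ℝ} {L : ℝ} (hL : 0 ≤ L) (y : X)
    (hf : ContinuousOn f (closedBall y (L * f y))) (hf0 : ∀ p, 0 ≤ f p)
    (step : ∀ p, dist p y + L * f p ≤ L * f y → ∃ m, dist p m ≤ L / 2 * f p ∧ f m ≤ f p / 2) :
    ∃ n, f n = 0 ∧ dist n y ≤ L * f y := by
  set K := closedBall y (L * f y) ∩ (fun p => dist p y + L * f p) ⁻¹' (Iic (L * f y))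
  have mem_K {p : X} (hp : dist p y + L * f p ≤ L * f y) : p ∈ K :=
    ⟨mem_closedBall.2 (by linarith [mul_nonneg hL (hf0 p)]), hp⟩
  have K_compact : IsCompact K :=
    (isCompact_closedBall y (L * f y)).of_isClosed_subset
      (ContinuousOn.preimage_isClosed_of_isClosed (by fun_prop) isClosed_closedBall isClosed_Iic)
      inter_subset_left
  obtain ⟨p, ⟨-, hp⟩, hmin⟩ := K_compact.exists_isMinOn ⟨y, mem_K (by simp)⟩
    (hf.mono inter_subset_left)
  replace hp : dist p y + L * f p ≤ L * f y := hp
  obtain ⟨m, hpm, hm⟩ := step p hp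
  have hmK : m ∈ K := mem_K (by
    nlinarith [dist_triangle m p y, dist_comm m p])
  have zero : f p = 0 := by linarith [isMinOn_iff.1 hmin m hmK, hf0 p]
  exact ⟨p, zero, by simpa [zero] using hp⟩

variable {r : ℝ} {y : X} {α g : X ≃ᵢ X}

lemma exists_closer_to_fixed_point (hX : PointSymmetric X) (hr : 0 < r)
    (hF : AlmostFlatUpTo X (1 / 100) (2 * r)) (hα : IsPointReflection y α)
    (hg : ∀ q, dist y q ≤ 2 * r → dist q (g q) ≤ r / 100) {p : X}
    (hp : dist p y + 2 * dist p (g (α p)) ≤ 2 * dist y (g y)) :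
    ∃ m, dist p m ≤ dist p (g (α p)) ∧ dist m (g (α m)) ≤ dist p (g (α p)) / 2 := by
  have hgy := hg y (by rw [dist_self]; positivity)
  have hpy : 0 ≤ dist p y := dist_nonneg
  rcases (dist_nonneg (x := p) (y := g (α p))).eq_or_lt with h0 | h0
  · exact ⟨p, by simp, by rw [← h0]; simp⟩
  set t := dist p (g (α p))
  obtain ⟨m, γ, hm, hγ⟩ := (hF p t h0 (by linarith)).exists_dist_le (g (α p)) le_rfl
  have hpm : dist p m ≤ 101 / 200 * t := by
    linarith [hm.dist_map p, dist_comm m p, dist_triangle_right p (γ p) (g (α p))]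
  have displacement (q : X) (hq : dist p q ≤ r) :
      dist q ((γ⁻¹ * (g * α)) q) ≤ 9 / 100 * r := by
    rw [IsometryEquiv.mul_apply, dist_inv_apply_right, IsometryEquiv.mul_apply]
    have hyq := dist_triangle_left y q p
    have near := hg (α q) (by rw [hα.dist_center_map]; linarith)
    have flat := (hF q (2 * r) (by linarith) le_rfl).dist_le hm hα
      (by linarith [dist_triangle_left q m p]) (by rw [dist_comm]; linarith)
    linarith [dist_triangle (γ q) (α q) (g (α q)), dist_triangle_left m y p]
  refine ⟨m, by linarith, ?_⟩
  have bound := hX.displacement_le _ p hr displacement m (by linarith)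
  simp only [IsometryEquiv.mul_apply, dist_inv_apply_right, hm.map_center] at bound
  have cancel : 2 * (dist p m / r) * (9 / 100 * r) = 18 / 100 * dist p m := by
    field_simp
    ring
  rw [cancel] at bound
  linarith

lemma exists_fixed_point_mul_reflection [ProperSpace X] (hX : PointSymmetric X)
    (hr : 0 < r)
    (hF : AlmostFlatUpTo X (1 / 100) (2 * r)) (hα : IsPointReflection y α)
    (hg : ∀ q, dist y q ≤ 2 * r → dist q (g q) ≤ r / 100) :
    ∃ n, g (α n) = n ∧ dist n y ≤ 2 * dist y (g y) := by
  have cont : Continuous fun p => dist p (g (α p)) :=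
    continuous_id.dist (g.continuous.comp α.continuous)
  obtain ⟨n, hn, hny⟩ := exists_eq_zero_of_halving_step (L := 2) zero_le_two y cont.continuousOn
    (fun _ => dist_nonneg) fun p hp => by
      simp only [hα.map_center] at hp
      simpa using exists_closer_to_fixed_point hX hr hF hα hg hp
  simp only [hα.map_center] at hny
  exact ⟨n, (dist_eq_zero.1 hn).symm, hny⟩

/-- `g` almost agrees near `n` with the transvection `α⁻¹ * γ`, which translates `n` to `g n` and
`g n` to a point at twice that distance from `n`. -/
lemma dist_sq_apply_ge_of_fixed_point (hX : PointSymmetric X) (hr : 0 < r)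
    (hα : IsPointReflection y α) {n : X} (hn : g n = α⁻¹ n) (hnr : dist n (g n) ≤ r)
    {γ : X ≃ᵢ X} (hγ : IsPointReflection n γ) {S : ℝ}
    (hS : ∀ q, dist n q ≤ r → dist q (g q) + dist (α q) (γ q) ≤ S) :
    (2 - 2 * S / r) * dist n (g n) ≤ dist n (g (g n)) := by
  set θ := α⁻¹ * γ with hθ
  have θn : θ n = g n := by rw [hθ, IsometryEquiv.mul_apply, hγ.map_center, hn]
  have dist_gn : dist n (g n) = 2 * dist n y := by rw [hn, hα.inv.dist_map, dist_comm]
  have dist_θθn : dist n (θ (θ n)) = 4 * dist n y := by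
    simpa [hθ] using hγ.inv.dist_sq_mul_inv_center hα.inv
  have bound := hX.displacement_le (θ⁻¹ * g) n hr (S := S) (fun q hq => by
    have hθq : dist (θ q) q = dist (α q) (γ q) := by
      rw [hθ, IsometryEquiv.mul_apply, dist_inv_apply_left, dist_comm]
    rw [IsometryEquiv.mul_apply, dist_inv_apply_right]
    linarith [hS q hq, dist_triangle (θ q) q (g q)]) (g n) hnr
  rw [IsometryEquiv.mul_apply, IsometryEquiv.mul_apply, dist_inv_apply_right,
    dist_inv_apply_right, θn, dist_self, zero_add] at bound
  rw [θn] at dist_θθn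
  have rearrange : 2 * (dist n (g n) / r) * S = 2 * S / r * dist n (g n) := by ring
  linarith [dist_triangle n (g (g n)) (θ (g n)), dist_comm (g (g n)) (θ (g n))]

lemma exists_almost_doubled_displacement [ProperSpace X] (hX : PointSymmetric X)
    (hr : 0 < r)
    (hF : AlmostFlatUpTo X (1 / 100) (2 * r)) (hα : IsPointReflection y α)
    (hg : ∀ q, dist y q ≤ 2 * r → dist q (g q) ≤ r / 100) :
    ∃ n, dist n y ≤ 2 * dist y (g y) ∧ dist y (g y) ≤ dist n (g n) ∧
      ∀ γ, IsPointReflection n γ →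
        ∀ S, (∀ q, dist n q ≤ r → dist q (g q) + dist (α q) (γ q) ≤ S) →
          (2 - 2 * S / r) * dist n (g n) ≤ dist n (g (g n)) := by
  obtain ⟨n, hn, hny⟩ := exists_fixed_point_mul_reflection hX hr hF hα hg
  have hgy := hg y (by rw [dist_self]; positivity)
  have g_apply : g (α n) = α⁻¹ (α n) := by rw [hn, IsometryEquiv.inv_apply_self]
  have dist_αn : dist (α n) y = dist n y := by rw [dist_comm, hα.dist_center_map, dist_comm]
  refine ⟨α n, dist_αn.trans_le hny, ?_, fun γ hγ S hS => ?_⟩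
  · have convex := hα.inv.two_mul_displacement_le g (α n)
    have shift := g.dist_eq (α n) (g (α n))
    rw [IsometryEquiv.inv_apply_self] at convex
    rw [hn] at shift convex ⊢
    linarith
  · refine dist_sq_apply_ge_of_fixed_point hX hr hα g_apply ?_ hγ hS
    rw [g_apply, hα.inv.dist_map, dist_comm, dist_αn]
    linarith

lemma exists_three_halves_mul_displacement_le [ProperSpace X] (hX : PointSymmetric X)
    (hr : 0 < r)
    (hF : AlmostFlatUpTo X (1 / 100) (2 * r))
    (hg : ∀ q, dist y q ≤ 3 * r → dist q (g q) ≤ r / 100) :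
    ∃ n, dist n y ≤ 2 * dist y (g y) ∧ 3 / 2 * dist y (g y) ≤ dist n (g (g n)) := by
  obtain ⟨α, hα⟩ := hX.exists_isPointReflection y
  have hgy := hg y (by rw [dist_self]; positivity)
  obtain ⟨n, hny, moved, doubled⟩ :=
    exists_almost_doubled_displacement hX hr hF hα fun q hq => hg q (by linarith)
  obtain ⟨γ, hγ⟩ := hX.exists_isPointReflection n
  refine ⟨n, hny, ?_⟩
  have bound := doubled γ hγ (7 / 100 * r) fun q hq => by
    have hyq := dist_triangle_left y q n
    have flat := (hF q (2 * r) (by linarith) le_rfl).dist_le hα hγ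
      (by rw [dist_comm]; linarith) (by rw [dist_comm]; linarith)
    linarith [hg q (by linarith), dist_comm y n]
  have cancel : 2 * (7 / 100 * r) / r = 14 / 100 := by field_simp; norm_num
  rw [cancel] at bound
  linarith [dist_nonneg (x := y) (y := g y)]

/-- Squaring multiplies the largest displacement by at least `3 / 2`, so a submonoid whose
displacements stay bounded by `r / 100` has none at all. -/
lemma apply_eq_of_forall_displacement_le [ProperSpace X] (hX : PointSymmetric X)
    (hr : 0 < r)
    (hF : AlmostFlatUpTo X (1 / 100) (2 * r)) {p : X} {H : Submonoid (X ≃ᵢ X)}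
    (hH : ∀ g ∈ H, ∀ q, dist p q ≤ 6 * r → dist q (g q) ≤ r / 100) (hg : g ∈ H) {q : X}
    (hq : dist p q ≤ 2 * r) : g q = q := by
  have decay (j : ℕ) : ∀ g ∈ H, ∀ q, dist p q ≤ 2 * r + 6 * (r / 100) * (2 / 3) ^ j →
      dist q (g q) ≤ r / 100 * (2 / 3) ^ j := by
    induction j with
    | zero =>
      intro g hg q hq
      rw [pow_zero, mul_one] at hq ⊢
      exact hH g hg q (by linarith)
    | succ j ih =>
      intro g hg q hq
      rw [pow_succ] at hq ⊢
      have hj0 : 0 < r * (2 / 3) ^ j := by positivity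
      have hj1 : r * (2 / 3) ^ j ≤ r :=
        mul_le_of_le_one_right hr.le (pow_le_one₀ (by norm_num) (by norm_num))
      obtain ⟨n, hnq, hn⟩ := exists_three_halves_mul_displacement_le hX hr hF (y := q) (g := g)
        fun z hz => hH g hg z (by linarith [dist_triangle p q z])
      have hgq := ih g hg q (by linarith)
      have hggn := ih (g * g) (mul_mem hg hg) n (by linarith [dist_triangle_right p n q])
      rw [IsometryEquiv.mul_apply] at hggn
      linarith
  have lim : Filter.Tendsto (fun j : ℕ => r / 100 * (2 / 3) ^ j) Filter.atTop (nhds 0) := by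
    simpa using (tendsto_pow_atTop_nhds_zero_of_lt_one (r := (2 / 3 : ℝ)) (by norm_num)
      (by norm_num)).const_mul (r / 100)
  have := ge_of_tendsto' lim fun j => decay j g hg q (hq.trans (by
    linarith [show 0 ≤ 6 * (r / 100) * (2 / 3 : ℝ) ^ j by positivity]))
  exact (dist_le_zero.1 this).symm

end SmallDisplacement

/-! ### Uniqueness of point reflections -/

section InfinitesimallyTrivial

variable {X : Type*} [MetricSpace X] {a : X}

/-- The isometries fixing `a` whose displacement at `y` is `o(dist a y)` as `y` tends to `a`. They
turn out to be trivial, and the quotient of two point reflections at `a` is one of them. -/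
def infinitesimallyTrivial (a : X) : Submonoid (X ≃ᵢ X) where
  carrier := {g | g a = a ∧ ∀ η > (0 : ℝ), ∀ᶠ y in nhds a, dist y (g y) ≤ η * dist a y}
  one_mem' := ⟨rfl, fun η hη => Filter.Eventually.of_forall fun y => by
    rw [IsometryEquiv.coe_one, id_eq, dist_self]
    positivity⟩
  mul_mem' {g h} hg hh := by
    refine ⟨by rw [IsometryEquiv.mul_apply, hh.1, hg.1], fun η hη => ?_⟩
    filter_upwards [hg.2 (η / 2) (by positivity), hh.2 (η / 2) (by positivity)] with y hgy hhy
    rw [IsometryEquiv.mul_apply]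
    linarith [dist_triangle y (g y) (g (h y)), g.dist_eq y (h y)]

lemma mem_infinitesimallyTrivial {g : X ≃ᵢ X} : g ∈ infinitesimallyTrivial a ↔
    g a = a ∧ ∀ η > (0 : ℝ), ∀ᶠ y in nhds a, dist y (g y) ≤ η * dist a y := Iff.rfl

lemma mul_inv_mem_infinitesimallyTrivial [ProperSpace X] [PreconnectedSpace X]
    (hX : PointSymmetric X) {α β : X ≃ᵢ X} (hα : IsPointReflection a α)
    (hβ : IsPointReflection a β) : β * α⁻¹ ∈ infinitesimallyTrivial a := by
  refine mem_infinitesimallyTrivial.2 ⟨by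
    rw [IsometryEquiv.mul_apply, hα.inv_map_center, hβ.map_center], fun η hη => ?_⟩
  obtain ⟨R, hR, hF⟩ := hX.exists_almostFlatUpTo hη
  filter_upwards [closedBall_mem_nhds a hR] with y hy
  rw [mem_closedBall, dist_comm] at hy
  obtain ⟨z, rfl⟩ := α.surjective y
  rw [IsometryEquiv.mul_apply, IsometryEquiv.inv_apply_self]
  rw [hα.dist_center_map] at hy ⊢
  rcases eq_or_ne a z with rfl | haz
  · simp [hα.map_center, hβ.map_center]
  · simpa using (hF z _ (dist_pos.2 haz) hy).dist_le hα hβ (dist_comm z a).le (dist_comm z a).le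

lemma exists_finite_net_of_forall_fixes [ProperSpace X] {H : Set (X ≃ᵢ X)}
    (hH : ∀ g ∈ H, g a = a) (R : ℝ) {δ : ℝ} (hδ : 0 < δ) :
    ∃ T ⊆ H, T.Finite ∧
      ∀ g ∈ H, ∃ h ∈ T, ∀ q, dist a q ≤ R → dist (h q) (g q) ≤ δ := by
  obtain ⟨N, hN, hN_finite, hN_net⟩ := finite_cover_balls_of_compact (isCompact_closedBall a R)
    (show 0 < δ / 4 by positivity)
  have := hN_finite.fintype
  set eval : (X ≃ᵢ X) → N → X := fun g z => g z
  have eval_mem : eval '' H ⊆ univ.pi fun _ => closedBall a R := by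
    rintro _ ⟨g, hg, rfl⟩ z -
    have hz := mem_closedBall.1 (hN z.2)
    rwa [← g.dist_eq, hH g hg] at hz
  obtain ⟨T, hT, hT_finite, hT_net⟩ := exists_subset_image_finite_and.1 <|
    finite_approx_of_totallyBounded
      ((isCompact_univ_pi fun _ => isCompact_closedBall a R).totallyBounded.subset eval_mem)
      (δ / 2) (by positivity)
  refine ⟨T, hT, hT_finite, fun g hg => ?_⟩
  obtain ⟨h, hh, hgh⟩ : ∃ h ∈ T, dist (eval g) (eval h) < δ / 2 := by
    simpa using hT_net (mem_image_of_mem eval hg)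
  refine ⟨h, hh, fun q hq => ?_⟩
  obtain ⟨z, hz, hqz⟩ : ∃ z ∈ N, dist q z < δ / 4 := by
    simpa using hN_net (mem_closedBall'.2 hq)
  have hghz : dist (g z) (h z) < δ / 2 := (dist_le_pi_dist _ _ ⟨z, hz⟩).trans_lt hgh
  linarith [dist_triangle4 (h q) (h z) (g z) (g q), h.dist_eq q z, g.dist_eq z q, dist_comm z q,
    dist_comm (g z) (h z)]

lemma exists_radius_displacement_le [ProperSpace X] (hX : PointSymmetric X) (a : X) {ε : ℝ}
    (hε : 0 < ε) :
    ∃ r > 0, ∀ g ∈ infinitesimallyTrivial a, ∀ y, dist a y ≤ r →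
      dist y (g y) ≤ ε * dist a y := by
  obtain ⟨T, hT, hT_finite, net⟩ := exists_finite_net_of_forall_fixes
    (H := (infinitesimallyTrivial a : Set (X ≃ᵢ X))) (fun _ hg => hg.1) 1
    (show 0 < ε / 4 by positivity)
  have small : ∀ᶠ y in nhds a, ∀ h ∈ T, dist y (h y) ≤ ε / 2 * dist a y :=
    (Filter.eventually_all_finite hT_finite).2 fun h hh => (hT hh).2 _ (by positivity)
  obtain ⟨r, hr, hball⟩ := nhds_basis_closedBall.eventually_iff.1 small
  refine ⟨min r 1, by positivity, fun g hg y hy => ?_⟩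
  obtain ⟨hyr, hy1⟩ := le_min_iff.1 hy
  obtain ⟨h, hh, close⟩ := net g hg
  have bound := hX.displacement_le (h⁻¹ * g) a one_pos (fun q hq => by
    rw [IsometryEquiv.mul_apply, dist_inv_apply_right]
    exact close q hq) y hy1
  simp only [IsometryEquiv.mul_apply, dist_inv_apply_right, (hT hh).1, hg.1, dist_self] at bound
  linarith [dist_triangle y (h y) (g y), hball (mem_closedBall'.2 hyr) h hh]

/-- `y` is nearly the reflection of `q` in a point `m`, and `m` is nearly the reflection of `q` in
a point that `k` fixes. -/
lemma displacement_le_of_fixes_ball {q : X} {t : ℝ} (ht : 0 < t)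
    (hF : AlmostFlatAt q (1 / 20000) (2 * t)) {k : X ≃ᵢ X}
    (hk : ∀ z, dist q z < t → k z = z) {y : X} (hy : dist q y ≤ 2 * t) :
    dist y (k y) ≤ t / 600 := by
  have hkq : k q = q := hk q (by simpa using ht)
  have hkq' : k⁻¹ q = q := by rw [← hkq, IsometryEquiv.inv_apply_self, hkq]
  have transfer {m w : X} {γ : X ≃ᵢ X} (hm : IsPointReflection m γ) (hqm : dist q m ≤ 2 * t)
      (hw : dist (γ q) w ≤ 1 / 20000 * (2 * t)) :
      dist w (k w) ≤ 2 * dist m (k m) + 3 / 10000 * t := by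
    have flat := hF.dist_le hm (hm.conj k) hqm (by
      rwa [← k.dist_eq, hkq] at hqm)
    simp only [IsometryEquiv.mul_apply, hkq'] at flat
    linarith [dist_triangle4 w (γ q) (k (γ q)) (k w), k.dist_eq (γ q) w, dist_comm w (γ q)]
  have halve {m w : X} {γ : X ≃ᵢ X} (hm : IsPointReflection m γ)
      (hw : dist (γ q) w ≤ 1 / 20000 * (2 * t)) : 2 * dist q m ≤ dist q w + 1 / 10000 * t := by
    linarith [hm.dist_map q, dist_triangle_right q (γ q) w, dist_comm m q]
  obtain ⟨m, γ, hm, hγ⟩ := hF.exists_dist_le y hy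
  have hqm := halve hm hγ
  obtain ⟨n, ν, hn, hν⟩ := hF.exists_dist_le m (by linarith)
  have hqn := halve hn hν
  have hkm := transfer hn (by linarith) hν
  rw [hk n (by linarith), dist_self] at hkm
  linarith [transfer hm (by linarith) hγ]

lemma eq_univ_of_forall_closedBall_subset_interior [ProperSpace X] [PreconnectedSpace X]
    {F : Set X} {R : ℝ} (hR : 0 < R) (hF : (interior F).Nonempty)
    (grow : ∀ q t, 0 < t → t < R → ball q t ⊆ F → closedBall q t ⊆ interior F) : F = univ := by
  rw [← interior_eq_univ]
  refine IsClopen.eq_univ ⟨isClosed_of_closure_subset fun p hp => ?_, isOpen_interior⟩ hF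
  by_contra hpF
  obtain ⟨q, hq, hpq⟩ := Metric.mem_closure_iff.1 hp R hR
  obtain ⟨z, hz, hqz⟩ := isOpen_interior.isClosed_compl.exists_infDist_eq_dist ⟨p, hpF⟩ q
  refine hz (grow q (dist q z) (dist_pos.2 ?_) ?_ (fun w hw => ?_) (mem_closedBall'.2 le_rfl))
  · rintro rfl
    exact hz hq
  · rw [← hqz]
    exact (infDist_le_dist_of_mem (show p ∈ (interior F)ᶜ from hpF)).trans_lt (by rwa [dist_comm])
  · by_contra hwF
    have := infDist_le_dist_of_mem (x := q)
      (show w ∈ (interior F)ᶜ from fun h => hwF (interior_subset h))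
    rw [mem_ball, dist_comm] at hw
    linarith

variable [ProperSpace X] [PreconnectedSpace X]

lemma apply_eq_of_mem_infinitesimallyTrivial (hX : PointSymmetric X) {g : X ≃ᵢ X}
    (hg : g ∈ infinitesimallyTrivial a) (y : X) : g y = y := by
  obtain ⟨R, hR, hF⟩ := hX.exists_almostFlatUpTo (η := 1 / 20000) (by norm_num)
  set F : Set X := {q | ∀ g ∈ infinitesimallyTrivial a, g q = q}
  have ball_subset {p : X} {r : ℝ} (hr : 0 < r) (hrR : 2 * r ≤ R)
      (small : ∀ g ∈ infinitesimallyTrivial a, ∀ q, dist p q ≤ 6 * r → dist q (g q) ≤ r / 100) :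
      p ∈ interior F := by
    rw [mem_interior_iff_mem_nhds]
    filter_upwards [closedBall_mem_nhds p (show 0 < 2 * r by positivity)] with q hq g hg
    exact apply_eq_of_forall_displacement_le hX hr (hF.mono (by norm_num) hrR) small hg
      (mem_closedBall'.1 hq)
  suffices F = univ from (this ▸ mem_univ y : y ∈ F) g hg
  refine eq_univ_of_forall_closedBall_subset_interior (half_pos hR) ⟨a, ?_⟩
    fun q t ht htR hqt p hp => ?_
  · obtain ⟨r, hr, small⟩ := exists_radius_displacement_le hX a (ε := 1 / 600) (by norm_num)
    have hr' : min (r / 6) (R / 2) ≤ r / 6 := min_le_left _ _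
    refine ball_subset (r := min (r / 6) (R / 2)) (by positivity) ?_ fun g hg q hq => ?_
    · linarith [min_le_right (r / 6) (R / 2)]
    · linarith [small g hg q (by linarith)]
  · refine ball_subset (r := t / 6) (by positivity) (by linarith) fun g hg z hz => ?_
    rw [mem_closedBall'] at hp
    linarith [displacement_le_of_fixes_ball ht (hF q (2 * t) (by positivity) (by linarith))
      (fun z hz => hqt (mem_ball'.2 hz) g hg) (show dist q z ≤ 2 * t by
        linarith [dist_triangle q p z])]

lemma IsPointReflection.unique (hX : PointSymmetric X) {α β : X ≃ᵢ X}
    (hα : IsPointReflection a α) (hβ : IsPointReflection a β) : α = β := by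
  ext y
  have := apply_eq_of_mem_infinitesimallyTrivial hX
    (mul_inv_mem_infinitesimallyTrivial hX hα hβ) (α y)
  rwa [IsometryEquiv.mul_apply, IsometryEquiv.inv_apply_self, eq_comm] at this

end InfinitesimallyTrivial

namespace PointSymmetric

variable {X : Type*} [MetricSpace X] (hX : PointSymmetric X)

/-- The point reflection at `a`. -/
def reflection (a : X) : X ≃ᵢ X := (hX.exists_isPointReflection a).choose

lemma isPointReflection_reflection (a : X) : IsPointReflection a (hX.reflection a) :=
  (hX.exists_isPointReflection a).choose_spec

lemma reflection_self (a : X) : hX.reflection a a = a :=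
  (hX.isPointReflection_reflection a).map_center

lemma dist_reflection (a x : X) : dist x (hX.reflection a x) = 2 * dist a x :=
  (hX.isPointReflection_reflection a).dist_map x

variable [ProperSpace X] [PreconnectedSpace X]

lemma reflection_inv (a : X) : (hX.reflection a)⁻¹ = hX.reflection a :=
  (hX.isPointReflection_reflection a).inv.unique hX (hX.isPointReflection_reflection a)

lemma reflection_reflection (a x : X) : hX.reflection a (hX.reflection a x) = x := by
  simpa only [reflection_inv] using IsometryEquiv.inv_apply_self (hX.reflection a) x

lemma reflection_map_map (g : X ≃ᵢ X) (a x : X) :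
    hX.reflection (g a) (g x) = g (hX.reflection a x) := by
  rw [← ((hX.isPointReflection_reflection a).conj g).unique hX
    (hX.isPointReflection_reflection (g a))]
  simp [IsometryEquiv.mul_apply]

lemma dist_reflection_left (a x y : X) :
    dist (hX.reflection a x) y = dist x (hX.reflection a y) := by
  rw [← (hX.reflection a).dist_eq, reflection_reflection]

end PointSymmetric

/-! ### Lipschitz dependence of the reflection on its center -/

namespace PointSymmetric

variable {X : Type*} [MetricSpace X]

lemma dist_reflection_reflection_le_of_almostFlatUpTo (hX : PointSymmetric X) {r : ℝ} (hr : 0 < r)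
    (hF : AlmostFlatUpTo X (1 / 2000) (10 * r)) {a b q : X} (hab : dist a b ≤ r / 1000)
    (haq : dist a q ≤ 8 * r) :
    dist (hX.reflection a q) (hX.reflection b q) ≤ 1 / 100 * r := by
  have flat := (hF q (10 * r) (by positivity) le_rfl).dist_le (hX.isPointReflection_reflection a)
    (hX.isPointReflection_reflection b) (by rw [dist_comm]; linarith)
    (by rw [dist_comm]; linarith [dist_triangle_left b q a])
  linarith

variable [ProperSpace X] [PreconnectedSpace X]

lemma dist_transvection_apply (hX : PointSymmetric X) (a b q : X) :
    dist q ((hX.reflection b * hX.reflection a) q) =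
      dist (hX.reflection a q) (hX.reflection b q) := by
  rw [IsometryEquiv.mul_apply, ← dist_reflection_left, dist_comm]

/-- `(s_b s_a)² = s_{s_b a} s_a`. -/
lemma dist_transvection_apply_apply (hX : PointSymmetric X) (a b q : X) :
    dist q ((hX.reflection b * hX.reflection a) ((hX.reflection b * hX.reflection a) q)) =
      dist (hX.reflection a q) (hX.reflection (hX.reflection b a) q) := by
  rw [← dist_transvection_apply]
  simp only [IsometryEquiv.mul_apply]
  rw [← hX.reflection_map_map (hX.reflection b) a, reflection_reflection]

variable {r : ℝ}

lemma dist_reflection_reflection_le_two_thirds_pow (hX : PointSymmetric X) (hr : 0 < r)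
    (hF : AlmostFlatUpTo X (1 / 2000) (10 * r)) (j : ℕ) {a b q : X}
    (hab : 2 ^ j * dist a b ≤ r / 1000)
    (haq : dist a q ≤ 4 * r + 6 / 100 * (r * (2 / 3) ^ j)) :
    dist (hX.reflection a q) (hX.reflection b q) ≤ 1 / 100 * (r * (2 / 3) ^ j) := by
  induction j generalizing a b q with
  | zero =>
    simp only [pow_zero, mul_one, one_mul] at hab haq ⊢
    exact hX.dist_reflection_reflection_le_of_almostFlatUpTo hr hF hab (by linarith)
  | succ j ih =>
    have hd : 0 ≤ 2 ^ j * dist a b := by positivity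
    have hd' : dist a b ≤ 2 ^ j * dist a b :=
      le_mul_of_one_le_left dist_nonneg (one_le_pow₀ one_le_two)
    have hE0 : 0 < r * (2 / 3) ^ j := by positivity
    have hE1 : r * (2 / 3) ^ j ≤ r :=
      mul_le_of_le_one_right hr.le (pow_le_one₀ (by norm_num) (by norm_num))
    rw [pow_succ] at hab
    rw [pow_succ, ← mul_assoc] at haq ⊢
    have hq := ih (a := a) (b := b) (q := q) (by linarith) (by linarith)
    obtain ⟨n, hnq, hn⟩ := exists_three_halves_mul_displacement_le (y := q)
      (g := hX.reflection b * hX.reflection a) hX hr (hF.mono (by norm_num) (by linarith))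
      fun z hz => by
        rw [dist_transvection_apply, div_eq_mul_one_div, mul_comm]
        exact hX.dist_reflection_reflection_le_of_almostFlatUpTo hr hF (by linarith)
          (by linarith [dist_triangle a q z])
    rw [dist_transvection_apply_apply] at hn
    rw [dist_transvection_apply] at hnq hn
    have squared := ih (a := a) (b := hX.reflection b a) (q := n)
      (by rw [dist_reflection, dist_comm b a]; linarith)
      (by linarith [dist_triangle_right a n q])
    linarith

lemma sq_dist_reflection_reflection_le (hX : PointSymmetric X) (hr : 0 < r)
    (hF : AlmostFlatUpTo X (1 / 2000) (10 * r)) {a b q : X} (hab : dist a b ≤ r / 1000)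
    (haq : dist a q ≤ 4 * r) :
    dist (hX.reflection a q) (hX.reflection b q) ^ 2 ≤ 1 / 5 * r * dist a b := by
  rcases eq_or_ne a b with rfl | hne
  · simp
  have hd : 0 < dist a b := dist_pos.2 hne
  obtain ⟨j, hj, hj'⟩ := exists_nat_pow_near ((one_le_div hd).2 hab) (one_lt_two (α := ℝ))
  rw [le_div_iff₀ hd] at hj
  rw [div_lt_iff₀ hd, pow_succ] at hj'
  have pow_le : ((2 / 3 : ℝ) ^ j) ^ 2 * 2 ^ j ≤ 1 := by
    rw [← pow_mul, mul_comm j 2, pow_mul, ← mul_pow]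
    exact pow_le_one₀ (by norm_num) (by norm_num)
  calc dist (hX.reflection a q) (hX.reflection b q) ^ 2
      ≤ (1 / 100 * (r * (2 / 3) ^ j)) ^ 2 := by
        gcongr
        exact hX.dist_reflection_reflection_le_two_thirds_pow hr hF j hj
          (haq.trans (le_add_of_nonneg_right (by positivity)))
    _ = 1 / 10 * r * (((2 / 3 : ℝ) ^ j) ^ 2 * (r / 1000)) := by ring
    _ ≤ 1 / 10 * r * (((2 / 3 : ℝ) ^ j) ^ 2 * (2 ^ j * 2 * dist a b)) := by gcongr
    _ = 1 / 5 * r * dist a b * (((2 / 3 : ℝ) ^ j) ^ 2 * 2 ^ j) := by ring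
    _ ≤ 1 / 5 * r * dist a b := mul_le_of_le_one_right (by positivity) pow_le

lemma dist_reflection_reflection_le_nine_tenths_pow (hX : PointSymmetric X) (hr : 0 < r)
    (hF : AlmostFlatUpTo X (1 / 2000) (10 * r)) (j : ℕ) {q n z : X} (hqn : dist q n ≤ r / 1000)
    (hqn' : dist q n ≤ 1 / 50 * (r * (2 / 3) ^ j)) (hqz : dist q z ≤ 4 * r) :
    dist (hX.reflection q z) (hX.reflection n z) ≤ 7 / 100 * (r * (9 / 10) ^ j) := by
  have pow_le : (2 / 3 : ℝ) ^ j ≤ ((9 / 10) ^ j) ^ 2 := by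
    rw [← pow_mul, mul_comm j 2, pow_mul]
    exact pow_le_pow_left₀ (by norm_num) (by norm_num) j
  refine le_of_sq_le_sq ?_ (by positivity)
  calc dist (hX.reflection q z) (hX.reflection n z) ^ 2
      ≤ 1 / 5 * r * dist q n := hX.sq_dist_reflection_reflection_le hr hF hqn hqz
    _ ≤ 1 / 5 * r * (1 / 50 * (r * (2 / 3) ^ j)) := by gcongr
    _ = 1 / 250 * r ^ 2 * (2 / 3) ^ j := by ring
    _ ≤ 49 / 10000 * r ^ 2 * ((9 / 10) ^ j) ^ 2 := by
        gcongr ?_ * r ^ 2 * ?_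
        norm_num
    _ = (7 / 100 * (r * (9 / 10) ^ j)) ^ 2 := by ring

lemma exists_almost_doubled_dist_reflection_reflection (hX : PointSymmetric X) (hr : 0 < r)
    (hF : AlmostFlatUpTo X (1 / 2000) (10 * r)) {j : ℕ} (hj : 8 ≤ j) {a b q : X}
    (hab : 2 ^ (j + 1) * dist a b ≤ r / 1000)
    (haq : dist a q ≤ 2 * r + 4 / 100 * (r * (2 / 3) ^ j)) :
    ∃ n, dist n q ≤ 2 / 100 * (r * (2 / 3) ^ j) ∧
      dist (hX.reflection a q) (hX.reflection b q) ≤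
        dist (hX.reflection a n) (hX.reflection b n) ∧
      (2 - 4 / 25 * (9 / 10) ^ j) * dist (hX.reflection a n) (hX.reflection b n) ≤
        dist (hX.reflection a n) (hX.reflection (hX.reflection b a) n) := by
  have hE0 : 0 < r * (2 / 3) ^ j := by positivity
  have hE1 : r * (2 / 3) ^ j ≤ r * (1 / 20) := by
    gcongr
    exact (pow_le_pow_of_le_one (by norm_num) (by norm_num) hj).trans (by norm_num)
  have hE2 : r * (2 / 3) ^ j ≤ r * (9 / 10) ^ j := by
    gcongr ?_ * ?_
    exact pow_le_pow_left₀ (by norm_num) (by norm_num) j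
  have hab' : dist a b ≤ r / 1000 :=
    (le_mul_of_one_le_left dist_nonneg (one_le_pow₀ one_le_two)).trans hab
  have crude {z : X} (hz : dist a z ≤ 4 * r) :
      dist (hX.reflection a z) (hX.reflection b z) ≤ 1 / 150 * (r * (2 / 3) ^ j) := by
    have := hX.dist_reflection_reflection_le_two_thirds_pow hr hF (j + 1) hab
      (hz.trans (le_add_of_nonneg_right (by positivity)))
    rw [pow_succ] at this
    linarith
  obtain ⟨n, hnq, moved, doubled⟩ := exists_almost_doubled_displacement
    (g := hX.reflection b * hX.reflection a) hX hr (hF.mono (by norm_num) (by linarith))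
    (hX.isPointReflection_reflection q) fun z hz => by
      rw [dist_transvection_apply, div_eq_mul_one_div, mul_comm]
      exact hX.dist_reflection_reflection_le_of_almostFlatUpTo hr hF hab'
        (by linarith [dist_triangle a q z])
  simp only [dist_transvection_apply, dist_transvection_apply_apply] at hnq moved doubled
  have hq := crude (z := q) (by linarith)
  refine ⟨n, by linarith, moved, ?_⟩
  have bound := doubled _ (hX.isPointReflection_reflection n) (2 / 25 * (9 / 10) ^ j * r)
    fun z hz => by
      have hqz := dist_triangle_left q z n
      linarith [crude (z := z) (by linarith [dist_triangle a q z]),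
        hX.dist_reflection_reflection_le_nine_tenths_pow hr hF j (q := q) (n := n) (z := z)
          (by rw [dist_comm]; linarith) (by rw [dist_comm]; linarith) (by linarith)]
  rwa [show 2 * (2 / 25 * (9 / 10) ^ j * r) / r = 4 / 25 * (9 / 10) ^ j by field_simp; norm_num]
    at bound

lemma two_mul_le_of_almost_doubled {x M D : ℝ} (hx1 : x ≤ 1) (hM : 0 ≤ M)
    (h : (2 - 4 / 25 * x) * D ≤ (2 - 8 / 5 * x) * M) : 2 * D ≤ (2 - 36 / 25 * x) * M := by
  have hx : 0 < 1 - 2 / 25 * x := by linarith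
  refine le_of_mul_le_mul_left ?_ hx
  calc (1 - 2 / 25 * x) * (2 * D) = (2 - 4 / 25 * x) * D := by ring
    _ ≤ (2 - 8 / 5 * x) * M := h
    _ ≤ (2 - 8 / 5 * x) * M + 72 / 625 * x ^ 2 * M := le_add_of_nonneg_right (by positivity)
    _ = (1 - 2 / 25 * x) * ((2 - 36 / 25 * x) * M) := by ring

/-- Halving the distance of the centers halves the distance of the images up to a summable relative
error, which the increasing factor `2 - 8 / 5 * (9 / 10) ^ j` absorbs. -/
lemma two_pow_mul_dist_reflection_reflection_le (hX : PointSymmetric X) (hr : 0 < r)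
    (hF : AlmostFlatUpTo X (1 / 2000) (10 * r)) {j : ℕ} (hj : 8 ≤ j) {a b q : X}
    (hab : 2 ^ j * dist a b ≤ r / 1000)
    (haq : dist a q ≤ 2 * r + 6 / 100 * (r * (2 / 3) ^ j)) :
    2 ^ j * dist (hX.reflection a q) (hX.reflection b q) ≤
      (2 - 8 / 5 * (9 / 10) ^ j) * (64 / 25 * r) := by
  induction j, hj using Nat.le_induction generalizing a b q with
  | base =>
    have := hX.dist_reflection_reflection_le_two_thirds_pow hr hF 8 hab
      (haq.trans (by gcongr; norm_num))
    norm_num at this ⊢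
    linarith
  | succ j hj ih =>
    have haq' : dist a q ≤ 2 * r + 4 / 100 * (r * (2 / 3) ^ j) := by
      rw [pow_succ] at haq
      linarith
    obtain ⟨n, hnq, moved, doubled⟩ :=
      hX.exists_almost_doubled_dist_reflection_reflection hr hF hj hab haq'
    rw [pow_succ] at hab
    have squared := ih (a := a) (b := hX.reflection b a) (q := n)
      (by rw [dist_reflection, dist_comm b a]; linarith)
      (by linarith [dist_triangle_right a n q])
    have step := two_mul_le_of_almost_doubled (x := (9 / 10) ^ j) (M := 64 / 25 * r)
      (D := 2 ^ j * dist (hX.reflection a n) (hX.reflection b n))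
      (pow_le_one₀ (by norm_num) (by norm_num)) (by positivity)
      (by
        rw [mul_left_comm]
        exact (mul_le_mul_of_nonneg_left doubled (by positivity)).trans squared)
    calc 2 ^ (j + 1) * dist (hX.reflection a q) (hX.reflection b q)
        ≤ 2 ^ (j + 1) * dist (hX.reflection a n) (hX.reflection b n) := by gcongr
      _ ≤ (2 - 36 / 25 * (9 / 10) ^ j) * (64 / 25 * r) := by rw [pow_succ]; linarith
      _ = (2 - 8 / 5 * (9 / 10) ^ (j + 1)) * (64 / 25 * r) := by rw [pow_succ]; ring

lemma exists_dist_reflection_reflection_le (hX : PointSymmetric X) :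
    ∃ C r : ℝ, 1 ≤ C ∧ 0 < r ∧ ∀ a b q : X, dist a b ≤ r → dist a q ≤ r →
      dist (hX.reflection a q) (hX.reflection b q) ≤ C * dist a b := by
  obtain ⟨R, hR, hF⟩ := hX.exists_almostFlatUpTo (η := 1 / 2000) (by norm_num)
  obtain ⟨r, rfl⟩ : ∃ r, R = 10 * r := ⟨R / 10, by ring⟩
  replace hR : 0 < r := by linarith
  refine ⟨10240, r / 256000, by norm_num, by positivity, fun a b q hab haq => ?_⟩
  rcases eq_or_ne a b with rfl | hne
  · simp
  have hd : 0 < dist a b := dist_pos.2 hne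
  have scale : (2 : ℝ) ^ 8 ≤ r / 1000 / dist a b := by rw [le_div_iff₀ hd]; linarith
  obtain ⟨j, hj, hj'⟩ := exists_nat_pow_near (le_trans (by norm_num) scale) (one_lt_two (α := ℝ))
  have hj8 : 8 ≤ j :=
    Nat.lt_succ_iff.1 ((pow_lt_pow_iff_right₀ (one_lt_two (α := ℝ))).1 (scale.trans_lt hj'))
  rw [le_div_iff₀ hd] at hj
  rw [div_lt_iff₀ hd, pow_succ] at hj'
  have bound := hX.two_pow_mul_dist_reflection_reflection_le hR hF (q := q) hj8 hj
    (by linarith [show 0 < r * (2 / 3) ^ j by positivity])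
  have factor : (2 - 8 / 5 * (9 / 10) ^ j) * (64 / 25 * r) ≤ 2 * (64 / 25 * r) := by
    gcongr
    exact sub_le_self _ (by positivity)
  refine le_of_mul_le_mul_left (a := (2 : ℝ) ^ j) ?_ (by positivity)
  linarith

end PointSymmetric

/-! ### Local midpoints -/

namespace PointSymmetric

variable {X : Type*} [MetricSpace X]

/-- The reflections with centers in a `4 * r`-ball, evaluated at points `4 * r`-close to the
center, depend on the center in a `C`-Lipschitz way. -/
def LipschitzReflection (hX : PointSymmetric X) (C r : ℝ) : Prop :=
  ∀ a b q : X, dist a b ≤ 4 * r → dist a q ≤ 4 * r →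
    dist (hX.reflection a q) (hX.reflection b q) ≤ C * dist a b

variable {hX : PointSymmetric X} {C r : ℝ}

lemma LipschitzReflection.continuousOn_reflection_apply (hL : hX.LipschitzReflection C r)
    (hr : 0 < r) (x : X) :
    ContinuousOn (fun n => hX.reflection n x) (closedBall x (4 * r)) := by
  intro b _
  refine (tendsto_iff_dist_tendsto_zero.2 <| squeeze_zero' (g := fun a => C * dist a b)
    (Filter.Eventually.of_forall fun _ => dist_nonneg) ?_ ?_)
  · filter_upwards [self_mem_nhdsWithin, mem_nhdsWithin_of_mem_nhds (closedBall_mem_nhds b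
      (show 0 < 4 * r by positivity))] with a ha hab
    exact hL a b x hab ha
  · have : Continuous fun a => C * dist a b := by fun_prop
    simpa using (this.tendsto b).mono_left nhdsWithin_le_nhds

variable [ProperSpace X] [PreconnectedSpace X]

lemma LipschitzReflection.dist_reflection_le_of_fixed_point (hL : hX.LipschitzReflection C r)
    (hr : 0 < r) {g : X ≃ᵢ X} {n p x : X} {S : ℝ} (hfix : g (hX.reflection n p) = p)
    (hpn : dist p n ≤ 4 * r)
    (hS : ∀ q, dist p q ≤ r → dist (hX.reflection n q) (g (hX.reflection n q)) ≤ S)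
    (hx : dist p x ≤ r) :
    dist (hX.reflection p x) (g (hX.reflection n x)) ≤
      2 * (dist p x / r) * (C * dist p n + S) := by
  have hp := hX.isPointReflection_reflection p
  have bound := hX.displacement_le (g * hX.reflection n * hX.reflection p) p hr
    (S := C * dist p n + S) (fun q hq => by
      rw [← hp.dist_center_map] at hq
      set q' := hX.reflection p q
      have hq' : q = hX.reflection p q' := (hX.reflection_reflection p q).symm
      rw [IsometryEquiv.mul_apply, IsometryEquiv.mul_apply]
      have lip := hL p n q' hpn (by linarith)
      rw [← hq'] at lip
      linarith [hS q' hq, dist_triangle q (hX.reflection n q') (g (hX.reflection n q'))])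
    (hX.reflection p x) (by rwa [hp.dist_center_map])
  simpa only [IsometryEquiv.mul_apply, reflection_self, hfix, dist_self, zero_add,
    hp.dist_center_map, reflection_reflection] using bound

lemma exists_reflection_apply_near (hX : PointSymmetric X) {R : ℝ}
    (hF : AlmostFlatUpTo X (1 / 100) R) {y w : X} (hyw : dist y w ≤ R) :
    ∃ m, dist y m ≤ dist y w ∧ dist (hX.reflection m y) w ≤ 1 / 100 * dist y w := by
  rcases eq_or_ne y w with rfl | hne
  · exact ⟨y, by simp [hX.reflection_self]⟩
  obtain ⟨m, γ, hm, hmw⟩ := (hF y _ (dist_pos.2 hne) hyw).exists_dist_le w le_rfl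
  rw [hm.unique hX (hX.isPointReflection_reflection m)] at hmw
  refine ⟨m, ?_, hmw⟩
  linarith [hX.dist_reflection m y, dist_comm m y, dist_triangle_right y (hX.reflection m y) w,
    dist_nonneg (x := y) (y := w)]

lemma newton_error_le {C r d ε : ℝ} (hC : 0 ≤ C) (hr : 0 < r) (hd : 0 ≤ d) (hε : 0 ≤ ε)
    (h : 50 * C ^ 2 * (d + 2 * (C * ε)) ≤ r) :
    2 * ((d + 2 * (C * ε)) / r) * (C * (2 * (C * ε)) + C * (C * ε)) ≤ ε / 4 := by
  calc 2 * ((d + 2 * (C * ε)) / r) * (C * (2 * (C * ε)) + C * (C * ε))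
      = 6 * C ^ 2 * (d + 2 * (C * ε)) / r * ε := by ring
    _ ≤ 1 / 4 * ε := by
        gcongr ?_ * ε
        rw [div_le_iff₀ hr]
        linarith [show 0 ≤ C ^ 2 * (d + 2 * (C * ε)) by positivity]
    _ = ε / 4 := by ring

/-- One Newton step for the equation `s_n x = w`: compose `s_n` with a small transvection moving
`s_n x` close to `w`; the result is nearly the reflection at its own fixed point. -/
lemma LipschitzReflection.exists_better_center (hL : hX.LipschitzReflection C r) (hC : 1 ≤ C)
    (hr : 0 < r) (hF : AlmostFlatUpTo X (1 / 100) (2 * r)) {n x w : X}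
    (hn : 50 * C ^ 2 * (dist n x + 2 * (C * dist (hX.reflection n x) w)) ≤ r) :
    ∃ p, dist n p ≤ 2 * (C * dist (hX.reflection n x) w) ∧
      dist (hX.reflection p x) w ≤ dist (hX.reflection n x) w / 2 := by
  set y := hX.reflection n x
  set ε := dist y w
  have hε : 0 ≤ ε := dist_nonneg
  have hnx : 0 ≤ dist n x := dist_nonneg
  have hεC : ε ≤ C * ε := le_mul_of_one_le_left hε hC
  have hC2 : 1 ≤ C ^ 2 := one_le_pow₀ hC
  have near : 50 * (dist n x + 2 * (C * ε)) ≤ r := by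
    nlinarith [show 0 ≤ dist n x + 2 * (C * ε) by positivity]
  have hny : dist n y = dist n x := (hX.isPointReflection_reflection n).dist_center_map x
  obtain ⟨m, hym, hmw⟩ := hX.exists_reflection_apply_near hF (y := y) (w := w) (by linarith)
  set θ := hX.reflection m * hX.reflection y
  have hθ {q : X} (hq : dist y q ≤ 4 * r) : dist q (θ q) ≤ C * ε := by
    rw [dist_transvection_apply]
    exact (hL y m q (by linarith) hq).trans (by gcongr)
  obtain ⟨p, hfix, hpn⟩ := exists_fixed_point_mul_reflection hX hr hF
    (hX.isPointReflection_reflection n) (g := θ) fun q hq =>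
      (hθ (by linarith [dist_triangle_left y q n])).trans (by linarith)
  have hθn := hθ (q := n) (by rw [dist_comm]; linarith)
  have hpx := dist_triangle p n x
  refine ⟨p, by rw [dist_comm]; linarith, ?_⟩
  have close := hL.dist_reflection_le_of_fixed_point (S := C * ε) hr hfix (by linarith)
    (fun q hq => hθ (by
      have := (hX.isPointReflection_reflection n).dist_center_map q
      linarith [dist_triangle_left y (hX.reflection n q) n, dist_triangle_left n q p]))
    (show dist p x ≤ r by linarith)
  have θy : θ y = hX.reflection m y := by rw [IsometryEquiv.mul_apply, reflection_self]
  rw [θy] at close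
  have small : 2 * (dist p x / r) * (C * dist p n + C * ε) ≤ ε / 4 := by
    calc 2 * (dist p x / r) * (C * dist p n + C * ε)
        ≤ 2 * ((dist n x + 2 * (C * ε)) / r) * (C * (2 * (C * ε)) + C * (C * ε)) := by
          gcongr <;> linarith
      _ ≤ ε / 4 := newton_error_le (by positivity) hr hnx hε hn
  linarith [dist_triangle (hX.reflection p x) (hX.reflection m y) w]

lemma LipschitzReflection.exists_reflection_apply_eq (hL : hX.LipschitzReflection C r)
    (hC : 1 ≤ C) (hr : 0 < r) (hF : AlmostFlatUpTo X (1 / 100) (2 * r)) {x w : X}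
    (hxw : 200 * C ^ 3 * dist x w ≤ r) : ∃ n, hX.reflection n x = w := by
  have hC2 : 1 ≤ C ^ 2 := one_le_pow₀ hC
  have small : 4 * C * dist x w ≤ 4 * r := by
    nlinarith [show 0 ≤ C * dist x w by positivity]
  have cont : ContinuousOn (fun n => dist (hX.reflection n x) w) (closedBall x (4 * r)) :=
    (continuous_id.dist continuous_const).comp_continuousOn
      (hL.continuousOn_reflection_apply hr x)
  obtain ⟨n, hn, -⟩ := exists_eq_zero_of_halving_step (f := fun n => dist (hX.reflection n x) w)
    (L := 4 * C) (by positivity) x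
    (cont.mono (closedBall_subset_closedBall (by rwa [reflection_self])))
    (fun _ => dist_nonneg) fun n hn => by
      rw [reflection_self] at hn
      obtain ⟨p, hnp, hp⟩ := hL.exists_better_center hC hr hF (n := n) (x := x) (w := w) (by
        calc 50 * C ^ 2 * (dist n x + 2 * (C * dist (hX.reflection n x) w))
            ≤ 50 * C ^ 2 * (4 * C * dist x w) := by
              gcongr
              linarith [show 0 ≤ C * dist (hX.reflection n x) w by positivity]
          _ = 200 * C ^ 3 * dist x w := by ring
          _ ≤ r := hxw)
      exact ⟨p, by linarith, hp⟩
  exact ⟨n, dist_eq_zero.1 hn⟩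

lemma exists_radius_reflection_apply_eq (hX : PointSymmetric X) :
    ∃ r > 0, ∀ x w : X, dist x w ≤ r → ∃ n, hX.reflection n x = w := by
  obtain ⟨C, r₁, hC, hr₁, hlip⟩ := hX.exists_dist_reflection_reflection_le
  obtain ⟨R, hR, hF⟩ := hX.exists_almostFlatUpTo (η := 1 / 100) (by norm_num)
  set r := min (r₁ / 4) (R / 2)
  have hr : 0 < r := by positivity
  have hr₁' : 4 * r ≤ r₁ := by linarith [min_le_left (r₁ / 4) (R / 2)]
  have hL : hX.LipschitzReflection C r := fun a b q hab haq =>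
    hlip a b q (hab.trans hr₁') (haq.trans hr₁')
  refine ⟨r / (200 * C ^ 3), by positivity, fun x w hxw => ?_⟩
  rw [le_div_iff₀' (by positivity)] at hxw
  exact hL.exists_reflection_apply_eq hC hr
    (hF.mono le_rfl (by linarith [min_le_right (r₁ / 4) (R / 2)])) hxw

end PointSymmetric

/-! ### Midpoints -/

section Chains

lemma exists_seq_of_reflTransGen {α : Type*} {r : α → α → Prop} (hr : ∀ a, r a a) {x y : α}
    (h : Relation.ReflTransGen r x y) :
    ∃ (N : ℕ) (q : ℕ → α), q 0 = x ∧ (∀ i ≥ N, q i = y) ∧ ∀ i, r (q i) (q (i + 1)) := by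
  induction h using Relation.ReflTransGen.head_induction_on with
  | refl => exact ⟨0, fun _ => y, rfl, fun _ _ => rfl, fun _ => hr y⟩
  | @head a b hab _ ih =>
    obtain ⟨N, q, rfl, hqN, hq⟩ := ih
    refine ⟨N + 1, fun i => Nat.casesOn i a q, rfl, fun i hi => ?_, fun i => ?_⟩
    · obtain ⟨j, rfl⟩ := Nat.exists_eq_add_of_le' hi
      exact hqN _ (Nat.le_add_left N j)
    · cases i with
      | zero => exact hab
      | succ i => exact hq i

lemma reflTransGen_dist_le {X : Type*} [MetricSpace X] [PreconnectedSpace X] {h : ℝ} (hh : 0 < h)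
    (x y : X) : Relation.ReflTransGen (fun a b => dist a b ≤ h) x y := by
  have symm : Std.Symm fun a b : X => dist a b ≤ h := ⟨fun a b hab => by rwa [dist_comm]⟩
  refine PreconnectedSpace.induction₂ _ (fun a => ?_) inferInstance x y
  filter_upwards [closedBall_mem_nhds a hh] with b hb
  exact .single (mem_closedBall'.1 hb)

lemma sub_one_le_one_sub_one_div_mul {w W : ℝ} (hW : 0 < W) (hw : w ≤ W) :
    w - 1 ≤ (1 - 1 / W) * w := by
  have : 1 / W * w ≤ 1 := by rwa [one_div_mul_eq_div, div_le_one hW]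
  linarith

/-- The weights `2 * (K + 1) ^ 2 - i ^ 2` are concave in `i`, so averaging neighbours shrinks them
by a definite factor. -/
lemma exists_le_geometric_of_le_average {K : ℕ} {e : ℕ → ℕ → ℝ} {c : ℝ} (hc : 0 ≤ c)
    (left : ∀ t, e t 0 = 0) (right : ∀ t, e t K = 0) (initial : ∀ i ≤ K, e 0 i ≤ c)
    (average : ∀ t i, i + 2 ≤ K → e (t + 1) (i + 1) ≤ (e t i + e t (i + 2)) / 2) :
    ∃ θ C : ℝ, θ < 1 ∧ ∀ t, ∀ i ≤ K, e t i ≤ C * θ ^ t := by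
  set M : ℝ := K + 1
  have hM : 1 ≤ M := by simp [M]
  have cast_le {i : ℕ} (hi : i ≤ K) : (i : ℝ) + 1 ≤ M := by simpa [M] using hi
  set θ : ℝ := 1 - 1 / (2 * M ^ 2)
  have hθ1 : θ < 1 := sub_lt_self _ (by positivity)
  have hθ0 : 0 ≤ θ := sub_nonneg.2 ((div_le_one (by positivity)).2 (by nlinarith))
  have one_le_weight {i : ℕ} (hi : i ≤ K) : 1 ≤ 2 * M ^ 2 - (i : ℝ) ^ 2 := by
    nlinarith [cast_le hi, Nat.cast_nonneg (α := ℝ) i]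
  have decay (t : ℕ) : ∀ i ≤ K, e t i ≤ c * θ ^ t * (2 * M ^ 2 - (i : ℝ) ^ 2) := by
    induction t with
    | zero =>
      intro i hi
      rw [pow_zero, mul_one]
      exact (initial i hi).trans (le_mul_of_one_le_right hc (one_le_weight hi))
    | succ t ih =>
      intro i hi
      have weight_pos := one_le_weight hi
      obtain rfl | ⟨j, rfl⟩ : i = 0 ∨ ∃ j, i = j + 1 := by cases i <;> simp
      · rw [left]; positivity
      obtain rfl | hjK := hi.eq_or_lt
      · rw [right]; positivity
      have contraction : 2 * M ^ 2 - ((j + 1 : ℕ) : ℝ) ^ 2 - 1 ≤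
          θ * (2 * M ^ 2 - ((j + 1 : ℕ) : ℝ) ^ 2) :=
        sub_one_le_one_sub_one_div_mul (by positivity) (sub_le_self _ (sq_nonneg _))
      have scaled := mul_le_mul_of_nonneg_left contraction (show 0 ≤ c * θ ^ t by positivity)
      have before := ih j (by omega)
      have after := ih (j + 2) (by omega)
      push_cast at before after scaled ⊢
      rw [pow_succ]
      linarith [average t j (by omega)]
  refine ⟨θ, c * (2 * M ^ 2), hθ1, fun t i hi => (decay t i hi).trans ?_⟩
  have : 0 ≤ c * θ ^ t := by positivity
  nlinarith [sq_nonneg (i : ℝ)]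

end Chains

namespace PointSymmetric

variable {X : Type*} [MetricSpace X] {hX : PointSymmetric X}

lemma dist_le_of_reflection_apply_eq {n n' u v u' v' : X} (h : hX.reflection n u = v)
    (h' : hX.reflection n' u' = v') : dist n n' ≤ (dist u u' + dist v v') / 2 := by
  have centers := (hX.isPointReflection_reflection n).two_mul_dist_le
    (hX.isPointReflection_reflection n') u
  have := dist_triangle_right (hX.reflection n u) (hX.reflection n' u) (hX.reflection n' u')
  rw [IsometryEquiv.dist_eq, h, h'] at this
  rw [h] at centers
  linarith

/-- A chain of `K` steps of length at most `h` from `x` to `y`; terms past `K` are arbitrary. -/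
structure IsPolygon (K : ℕ) (h : ℝ) (x y : X) (q : ℕ → X) : Prop where
  left : q 0 = x
  right : q K = y
  dist_le {i : ℕ} (hi : i < K) : dist (q i) (q (i + 1)) ≤ h

/-- The inner vertices of `q'` are the midpoints of pairs of second neighbours of `q`. -/
def IsShortening (hX : PointSymmetric X) (K : ℕ) (q q' : ℕ → X) : Prop :=
  ∀ i, i + 2 ≤ K → hX.reflection (q' (i + 1)) (q i) = q (i + 2)

/-- A discrete geodesic: each inner vertex reflects its two neighbours into each other. -/
def IsReflectionChain (hX : PointSymmetric X) (K : ℕ) (p : ℕ → X) : Prop :=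
  IsShortening hX K p p

lemma IsPolygon.dist_two_le {K : ℕ} {h : ℝ} {x y : X} {q : ℕ → X} (hq : IsPolygon K h x y q)
    {i : ℕ} (hi : i + 2 ≤ K) : dist (q i) (q (i + 2)) ≤ 2 * h := by
  linarith [dist_triangle (q i) (q (i + 1)) (q (i + 2)), hq.dist_le (i := i) (by omega),
    hq.dist_le (i := i + 1) (by omega)]

lemma IsPolygon.of_isShortening {K : ℕ} {h : ℝ} {x y : X} {q q' : ℕ → X}
    (hq : IsPolygon K h x y q) (left : q' 0 = x) (right : q' K = y)
    (hqq' : IsShortening hX K q q') : IsPolygon K h x y q' := by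
  refine ⟨left, right, fun {i} hi => ?_⟩
  cases i with
  | zero =>
    obtain rfl | hK : K = 1 ∨ 2 ≤ K := by omega
    · rw [left, right, ← hq.left, ← hq.right]
      exact hq.dist_le zero_lt_one
    · have := dist_le_of_reflection_apply_eq (hX.reflection_self (q 0)) (hqq' 0 hK)
      rw [left, ← hq.left]
      linarith [hq.dist_two_le hK, dist_self (q 0)]
  | succ i =>
    obtain hK | rfl : i + 3 ≤ K ∨ K = i + 2 := by omega
    · linarith [dist_le_of_reflection_apply_eq (hqq' i hi) (hqq' (i + 1) hK),
        hq.dist_le (i := i) (by omega), hq.dist_le (i := i + 2) (by omega)]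
    · have := dist_le_of_reflection_apply_eq (hqq' i hi) (hX.reflection_self (q (i + 2)))
      rw [right, ← hq.right]
      linarith [hq.dist_two_le hi, dist_self (q (i + 2))]

lemma IsPolygon.exists_isShortening {K : ℕ} {h : ℝ} {x y : X} {q : ℕ → X}
    (hq : IsPolygon K h x y q)
    (hmid : ∀ u v : X, dist u v ≤ 2 * h → ∃ n, hX.reflection n u = v) :
    ∃ q', IsPolygon K h x y q' ∧ IsShortening hX K q q' := by
  have mid (i : ℕ) : ∃ n, i + 2 ≤ K → hX.reflection n (q i) = q (i + 2) := by
    by_cases hi : i + 2 ≤ K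
    · exact (hmid _ _ (hq.dist_two_le hi)).imp fun _ hn _ => hn
    · exact ⟨q i, fun h => absurd h hi⟩
  choose m hm using mid
  set q' : ℕ → X := fun i => if i = 0 ∨ i = K then q i else m (i - 1)
  have hqq' : IsShortening hX K q q' := fun i hi => by
    have : q' (i + 1) = m i := if_neg (by omega)
    rw [this, hm i hi]
  exact ⟨q', hq.of_isShortening (by simpa [q'] using hq.left) (by simpa [q'] using hq.right) hqq',
    hqq'⟩

lemma exists_tendsto_of_isShortening [CompleteSpace X] {K : ℕ} {h : ℝ} {x y : X}
    {Q : ℕ → ℕ → X} (poly : ∀ t, IsPolygon K h x y (Q t))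
    (short : ∀ t, IsShortening hX K (Q t) (Q (t + 1))) :
    ∃ p : ℕ → X, ∀ i ≤ K, Filter.Tendsto (Q · i) Filter.atTop (nhds (p i)) := by
  set c := ∑ i ∈ Finset.range (K + 1), dist (Q 0 i) (Q 1 i)
  obtain ⟨θ, C, hθ, bound⟩ := exists_le_geometric_of_le_average (K := K) (c := c)
    (e := fun t i => dist (Q t i) (Q (t + 1) i)) (by positivity)
    (fun t => by simp [(poly _).left]) (fun t => by simp [(poly _).right])
    (fun i hi => Finset.single_le_sum (f := fun i => dist (Q 0 i) (Q 1 i))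
      (fun _ _ => dist_nonneg) (Finset.mem_range.2 (by omega)))
    (fun t i hi => dist_le_of_reflection_apply_eq (short t i hi) (short (t + 1) i hi))
  have limit (i : ℕ) : ∃ p, i ≤ K → Filter.Tendsto (Q · i) Filter.atTop (nhds p) := by
    by_cases hi : i ≤ K
    · exact (cauchySeq_tendsto_of_complete
        (cauchySeq_of_le_geometric θ C hθ fun t => bound t i hi)).imp fun _ hp _ => hp
    · exact ⟨x, fun h => absurd h hi⟩
  choose p hp using limit
  exact ⟨p, hp⟩

lemma exists_isReflectionChain_of_isPolygon [CompleteSpace X] {K : ℕ} {h : ℝ} {x y : X}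
    {q : ℕ → X} (hq : IsPolygon K h x y q)
    (hmid : ∀ u v : X, dist u v ≤ 2 * h → ∃ n, hX.reflection n u = v) :
    ∃ p, IsPolygon K h x y p ∧ IsReflectionChain hX K p := by
  choose! f hf using fun (q : ℕ → X) (hq : IsPolygon K h x y q) => hq.exists_isShortening hmid
  have poly (t : ℕ) : IsPolygon K h x y (f^[t] q) := by
    induction t with
    | zero => exact hq
    | succ t ih => rw [iterate_succ_apply']; exact (hf _ ih).1
  have short (t : ℕ) : IsShortening hX K (f^[t] q) (f^[t + 1] q) := by
    rw [iterate_succ_apply']; exact (hf _ (poly t)).2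
  obtain ⟨p, hp⟩ := exists_tendsto_of_isShortening poly short
  have poly_p : IsPolygon K h x y p :=
    { left := tendsto_nhds_unique (hp 0 K.zero_le) (by simp [(poly _).left])
      right := tendsto_nhds_unique (hp K le_rfl) (by simp [(poly _).right])
      dist_le := fun {i} hi => le_of_tendsto' ((hp i hi.le).dist (hp (i + 1) hi))
        fun t => (poly t).dist_le hi }
  refine ⟨p, poly_p, fun i hi => ?_⟩
  obtain ⟨n, hn⟩ := hmid _ _ (poly_p.dist_two_le hi)
  have near (t : ℕ) : dist (f^[t + 1] q (i + 1)) n ≤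
      (dist (f^[t] q i) (p i) + dist (f^[t] q (i + 2)) (p (i + 2))) / 2 :=
    dist_le_of_reflection_apply_eq (short t i hi) hn
  have limit : Filter.Tendsto (fun t => f^[t + 1] q (i + 1)) Filter.atTop (nhds n) := by
    refine tendsto_iff_dist_tendsto_zero.2 (squeeze_zero (fun _ => dist_nonneg) near ?_)
    simpa using ((tendsto_iff_dist_tendsto_zero.1 (hp i (by omega))).add
      (tendsto_iff_dist_tendsto_zero.1 (hp (i + 2) hi))).div_const 2
  rw [tendsto_nhds_unique ((hp (i + 1) (by omega)).comp (Filter.tendsto_add_atTop_nat 1)) limit,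
    hn]

variable [ProperSpace X] [PreconnectedSpace X]

lemma IsReflectionChain.reflection_apply {K : ℕ} {p : ℕ → X} (hp : IsReflectionChain hX K p)
    (j : ℕ) {i : ℕ} (hi : i + 2 * j ≤ K) : hX.reflection (p (i + j)) (p i) = p (i + 2 * j) := by
  induction j using Nat.strong_induction_on generalizing i with
  | _ j ih =>
    match j with
    | 0 => exact hX.reflection_self _
    | 1 => exact hp i hi
    | j + 2 =>
      have inner := ih j (by omega) (i := i + 2) (by omega)
      have outer := ih (j + 1) (by omega) (i := i + 1) (by omega)
      rw [show i + 2 + j = i + (j + 2) by ring] at inner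
      rw [show i + 1 + (j + 1) = i + (j + 2) by ring] at outer
      have last := hp (i + 2 * j + 2) (by omega)
      rw [show i + 2 * j + 2 + 1 = i + 1 + 2 * (j + 1) by ring,
        show i + 2 * j + 2 = i + 2 + 2 * j by ring, ← inner, ← outer, reflection_map_map,
        ← hp i (by omega), reflection_reflection] at last
      rw [last]
      congr 1
      ring

lemma exists_isReflectionChain (hX : PointSymmetric X) (x y : X) {ε : ℝ} (hε : 0 < ε) :
    ∃ (N : ℕ) (p : ℕ → X), IsPolygon (2 * N) ε x y p ∧ IsReflectionChain hX (2 * N) p := by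
  obtain ⟨r, hr, hmid⟩ := hX.exists_radius_reflection_apply_eq
  obtain ⟨N, q, hq0, hqN, hq⟩ := exists_seq_of_reflTransGen
    (r := fun a b : X => dist a b ≤ min ε (r / 2)) (fun a => by rw [dist_self]; positivity)
    (reflTransGen_dist_le (by positivity) x y)
  obtain ⟨p, hp, chain⟩ := exists_isReflectionChain_of_isPolygon (hX := hX) (K := 2 * N)
    ⟨hq0, hqN _ (by omega), fun {i} _ => hq i⟩
    fun u v huv => hmid u v (by linarith [min_le_right ε (r / 2)])
  exact ⟨N, p, ⟨hp.left, hp.right, fun hi => (hp.dist_le hi).trans (min_le_left _ _)⟩, chain⟩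

lemma exists_reflection_apply_eq (hX : PointSymmetric X) (x y : X) :
    ∃ n, hX.reflection n x = y := by
  obtain ⟨N, p, hp, chain⟩ := hX.exists_isReflectionChain x y one_pos
  have := chain.reflection_apply N (i := 0) (by omega)
  rw [zero_add, zero_add, hp.left, hp.right] at this
  exact ⟨p N, this⟩

/-- The midpoint of `u` and `v`: the center of the reflection exchanging them. -/
def mid (hX : PointSymmetric X) (u v : X) : X := (hX.exists_reflection_apply_eq u v).choose

variable (hX)

lemma reflection_mid_left (u v : X) : hX.reflection (hX.mid u v) u = v :=
  (hX.exists_reflection_apply_eq u v).choose_spec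

lemma dist_mid_left (u v : X) : dist (hX.mid u v) u = dist u v / 2 := by
  have := hX.dist_reflection (hX.mid u v) u
  rw [reflection_mid_left] at this
  linarith

lemma dist_mid_right (u v : X) : dist (hX.mid u v) v = dist u v / 2 := by
  rw [← dist_mid_left, ← (hX.isPointReflection_reflection _).dist_center_map u,
    reflection_mid_left]

lemma two_mul_dist_mid_le (u v z : X) : 2 * dist (hX.mid u v) z ≤ dist u z + dist v z := by
  have := (hX.isPointReflection_reflection (hX.mid u v)).two_mul_dist_center_le u z
  rwa [reflection_mid_left] at this

end PointSymmetric

/-! ### Connected balls and paths leaving a family of balls -/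

lemma le_max_of_convex_seq {f : ℕ → ℝ} {K : ℕ}
    (hf : ∀ i, i + 2 ≤ K → 2 * f (i + 1) ≤ f i + f (i + 2)) {i : ℕ} (hi : i ≤ K) :
    f i ≤ max (f 0) (f K) := by
  induction K generalizing i with
  | zero => simp [Nat.le_zero.1 hi]
  | succ K ih =>
    obtain rfl | hi := hi.eq_or_lt
    · exact le_max_right _ _
    have ih {i : ℕ} (hi : i ≤ K) : f i ≤ max (f 0) (f K) := ih (fun i hi => hf i (by omega)) hi
    refine (ih (Nat.lt_succ_iff.1 hi)).trans (max_le (le_max_left _ _) ?_)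
    rcases le_or_gt (f K) (f 0) with h0 | h0
    · exact le_max_of_le_left h0
    obtain ⟨k, rfl⟩ : ∃ k, K = k + 1 :=
      Nat.exists_eq_succ_of_ne_zero (by rintro rfl; exact lt_irrefl _ h0)
    have before := ih k.le_succ
    rw [max_eq_right h0.le] at before
    exact le_max_of_le_right (by linarith [hf k le_rfl])

lemma exists_pos_le_forall_lt {α : Type*} {J : Set α} (hJ : J.Finite) {f : α → ℝ}
    (hf : ∀ z ∈ J, 0 < f z) {τ : ℝ} (hτ : 0 < τ) : ∃ ε > 0, ε ≤ τ ∧ ∀ z ∈ J, ε < f z := by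
  have small : ∀ᶠ ε in nhds (0 : ℝ), ε ≤ τ ∧ ∀ z ∈ J, ε < f z :=
    (ge_mem_nhds hτ).and ((Filter.eventually_all_finite hJ).2 fun z hz => gt_mem_nhds (hf z hz))
  have pos : ∀ᶠ ε in nhdsWithin (0 : ℝ) (Ioi 0), 0 < ε := self_mem_nhdsWithin
  exact (pos.and (small.filter_mono nhdsWithin_le_nhds)).exists

namespace PointSymmetric

variable {X : Type*} [MetricSpace X] {hX : PointSymmetric X}

lemma IsReflectionChain.two_mul_dist_le {K : ℕ} {p : ℕ → X} (hp : IsReflectionChain hX K p)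
    (z : X) {i : ℕ} (hi : i + 2 ≤ K) :
    2 * dist (p (i + 1)) z ≤ dist (p i) z + dist (p (i + 2)) z := by
  rw [← hp i hi]
  exact (hX.isPointReflection_reflection _).two_mul_dist_center_le _ z

lemma IsReflectionChain.dist_le_max {K : ℕ} {p : ℕ → X} (hp : IsReflectionChain hX K p)
    (z : X) {i j k : ℕ} (hij : i ≤ j) (hjk : j ≤ k) (hk : k ≤ K) :
    dist (p j) z ≤ max (dist (p i) z) (dist (p k) z) := by
  have := le_max_of_convex_seq (f := fun l => dist (p (i + l)) z) (K := k - i)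
    (fun l hl => hp.two_mul_dist_le z (i := i + l) (by omega)) (i := j - i) (by omega)
  simpa only [add_zero, Nat.add_sub_cancel' hij, Nat.add_sub_cancel' (hij.trans hjk)] using this

variable [ProperSpace X] [PreconnectedSpace X]

variable (hX) in
lemma isPreconnected_of_forall_mid_mem {K : Set X} (hK : IsCompact K)
    (hmid : ∀ u ∈ K, ∀ v ∈ K, hX.mid u v ∈ K) : IsPreconnected K := by
  rw [isPreconnected_closed_iff]
  intro t t' ht ht' hsub hne hne'
  obtain ⟨⟨x, y⟩, ⟨hx, hy⟩, hmin⟩ := ((hK.inter_right ht).prod (hK.inter_right ht')).exists_isMinOn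
    (hne.prod hne') (f := fun p : X × X => dist p.1 p.2) (by fun_prop)
  have closest {a b : X} (ha : a ∈ K ∩ t) (hb : b ∈ K ∩ t') : dist x y ≤ dist a b :=
    hmin (mk_mem_prod ha hb)
  have hm := hmid x hx.1 y hy.1
  suffices dist x y ≤ dist x y / 2 by
    have : x = y := dist_le_zero.1 (by linarith)
    exact ⟨x, hx.1, hx.2, this ▸ hy.2⟩
  rcases hsub hm with h | h
  · exact (closest ⟨hm, h⟩ hy).trans_eq (hX.dist_mid_right x y)
  · exact (closest hx ⟨hm, h⟩).trans_eq (by rw [dist_comm, dist_mid_left])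

variable (hX) in
lemma mid_mem_closedBall {u v z : X} {r : ℝ} (hu : u ∈ closedBall z r) (hv : v ∈ closedBall z r) :
    hX.mid u v ∈ closedBall z r := by
  rw [mem_closedBall] at *
  linarith [hX.two_mul_dist_mid_le u v z]

lemma isPreconnected_closedBall (hX : PointSymmetric X) (z : X) (r : ℝ) :
    IsPreconnected (closedBall z r) :=
  hX.isPreconnected_of_forall_mid_mem (isCompact_closedBall z r)
    fun _ hu _ hv => hX.mid_mem_closedBall hu hv

lemma exists_isReflectionChain_through (hX : PointSymmetric X) (e q : X) {ε : ℝ} (hε : 0 < ε) :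
    ∃ (N : ℕ) (p : ℕ → X), IsPolygon (2 * N) ε e (hX.reflection q e) p ∧
      IsReflectionChain hX (2 * N) p ∧ p N = q := by
  obtain ⟨N, p, hp, chain⟩ := hX.exists_isReflectionChain e (hX.reflection q e) hε
  have center := chain.reflection_apply N (i := 0) (by omega)
  rw [zero_add, zero_add, hp.left, hp.right] at center
  have := dist_le_of_reflection_apply_eq center (rfl : hX.reflection q e = _)
  simp only [dist_self, add_zero, zero_div] at this
  exact ⟨N, p, hp, chain, dist_le_zero.1 this⟩

/-- Distances are convex along the geodesic from `e` through `q`, so once it has left the balls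
around `J` it does not return to them. -/
lemma exists_isPreconnected_disjoint_closedBall (hX : PointSymmetric X) {e q : X} {J : Set X}
    (hJ : J.Finite) {r : ℝ} (he : ∀ z ∈ J, dist e z ≤ r) (hq : ∀ z ∈ J, r < dist q z) {τ : ℝ}
    (hτ : 0 < τ) :
    ∃ A : Set X, IsPreconnected A ∧ q ∈ A ∧ hX.reflection q e ∈ A ∧
      (∀ z ∈ J, Disjoint A (closedBall z r)) ∧ A ⊆ closedBall q (dist q e + τ) := by
  obtain ⟨ε, hε, hετ, hεJ⟩ :=
    exists_pos_le_forall_lt hJ (f := fun z => dist q z - r) (fun z hz => sub_pos.2 (hq z hz)) hτ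
  obtain ⟨N, p, hp, chain, hpN⟩ := hX.exists_isReflectionChain_through e q hε
  have mem {i : ℕ} (hi : i ∈ Icc N (2 * N)) : p i ∈ ⋃ i ∈ Icc N (2 * N), closedBall (p i) ε :=
    mem_biUnion hi (mem_closedBall_self hε.le)
  refine ⟨⋃ i ∈ Icc N (2 * N), closedBall (p i) ε, ?_, ?_, ?_, fun z hz => ?_, ?_⟩
  · refine IsPreconnected.biUnion_of_chain ordConnected_Icc
      (fun i _ => hX.isPreconnected_closedBall _ _)
      fun i _ hi => ⟨p i, mem_closedBall_self hε.le, ?_⟩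
    exact hp.dist_le (Nat.succ_le_iff.1 hi.2)
  · simpa only [hpN] using mem (left_mem_Icc.2 (by omega))
  · simpa only [hp.right] using mem (right_mem_Icc.2 (by omega))
  · refine disjoint_left.2 fun x hx hxz => ?_
    obtain ⟨i, hi, hxi⟩ := mem_iUnion₂.1 hx
    rw [mem_closedBall] at hxi hxz
    have := chain.dist_le_max z N.zero_le hi.1 hi.2
    rw [hp.left, hpN, le_max_iff, or_iff_right ((he z hz).trans_lt (hq z hz)).not_ge] at this
    linarith [hεJ z hz, dist_triangle_left (p i) z x]
  · refine iUnion₂_subset fun i hi x hxi => ?_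
    rw [mem_closedBall] at hxi ⊢
    have := chain.dist_le_max q hi.1 hi.2 le_rfl
    rw [hpN, hp.right, dist_self, dist_comm (hX.reflection q e),
      (hX.isPointReflection_reflection q).dist_center_map, max_eq_right dist_nonneg] at this
    linarith [dist_triangle x (p i) q]

end PointSymmetric

/-! ### Local finiteness of the components of the vacant set -/

section Comps

variable {X : Type*} [MetricSpace X] {S C C' A : Set X} {x : X}

lemma connectedComponentIn_mem_comps (hx : x ∈ S) : connectedComponentIn S x ∈ comps S :=
  ⟨x, hx, rfl⟩

lemma subset_of_mem_comps (hC : C ∈ comps S) : C ⊆ S := by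
  obtain ⟨y, -, rfl⟩ := hC
  exact connectedComponentIn_subset S y

lemma nonempty_of_mem_comps (hC : C ∈ comps S) : C.Nonempty := by
  obtain ⟨y, hy, rfl⟩ := hC
  exact ⟨y, mem_connectedComponentIn hy⟩

lemma isPreconnected_of_mem_comps (hC : C ∈ comps S) : IsPreconnected C := by
  obtain ⟨y, -, rfl⟩ := hC
  exact isPreconnected_connectedComponentIn

lemma eq_connectedComponentIn_of_mem_comps (hC : C ∈ comps S) (hx : x ∈ C) :
    C = connectedComponentIn S x := by
  obtain ⟨y, -, rfl⟩ := hC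
  exact connectedComponentIn_eq hx

lemma eq_of_mem_comps (hC : C ∈ comps S) (hC' : C' ∈ comps S) (hx : x ∈ C) (hx' : x ∈ C') :
    C = C' :=
  (eq_connectedComponentIn_of_mem_comps hC hx).trans
    (eq_connectedComponentIn_of_mem_comps hC' hx').symm

lemma subset_of_isPreconnected_of_mem_comps (hC : C ∈ comps S) (hA : IsPreconnected A)
    (hAS : A ⊆ S) (hxC : x ∈ C) (hxA : x ∈ A) : A ⊆ C := by
  rw [eq_connectedComponentIn_of_mem_comps hC hxC]
  exact hA.subset_connectedComponentIn hxA hAS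

/-- Only finitely many components of `S` meet any given bounded set. -/
def LocallyFiniteComps (S : Set X) : Prop :=
  ∀ Q : Set X, IsBounded Q → {C ∈ comps S | (C ∩ Q).Nonempty}.Finite

/-- Infinitely many components of `S` come arbitrarily close to `p`. -/
def CompsAccumulateAt (S : Set X) (p : X) : Prop :=
  ∀ ε > 0, {C ∈ comps S | (C ∩ closedBall p ε).Nonempty}.Infinite

lemma exists_compsAccumulateAt {K : Set X} (hK : IsCompact K)
    (h : {C ∈ comps S | (C ∩ K).Nonempty}.Infinite) : ∃ p ∈ K, CompsAccumulateAt S p := by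
  by_contra! hcon
  have finite_near (p : X) (hp : p ∈ K) :
      ∃ ε > 0, {C ∈ comps S | (C ∩ closedBall p ε).Nonempty}.Finite := by
    simpa [CompsAccumulateAt, not_infinite] using hcon p hp
  choose! ε hε hfin using finite_near
  obtain ⟨t, htK, hcov⟩ := hK.elim_nhds_subcover (fun p => closedBall p (ε p))
    fun p hp => closedBall_mem_nhds p (hε p hp)
  refine h ((t.finite_toSet.biUnion fun p hp => hfin p (htK p hp)).subset ?_)
  rintro C ⟨hC, x, hxC, hxK⟩
  obtain ⟨p, hp, hx⟩ := mem_iUnion₂.1 (hcov hxK)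
  exact mem_iUnion₂.2 ⟨p, hp, hC, x, hxC, hx⟩

lemma locallyFiniteComps_of_forall_not_compsAccumulateAt [ProperSpace X]
    (h : ∀ p, ¬CompsAccumulateAt S p) : LocallyFiniteComps S := by
  intro Q hQ
  by_contra hinf
  obtain ⟨p, -, hp⟩ := exists_compsAccumulateAt (S := S) hQ.isCompact_closure
    (Set.Infinite.mono (fun C hC => ⟨hC.1, hC.2.mono (by gcongr; exact subset_closure)⟩) hinf)
  exact h p hp

end Comps

section Near

variable {X : Type*} [MetricSpace X]

lemma mem_occupied {s : Config X} {y : X} : y ∈ occupied s ↔ ∃ x ∈ s.1, dist y x ≤ 1 := by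
  simp [occupied]

lemma mem_vacant {s : Config X} {y : X} : y ∈ vacant s ↔ ∀ x ∈ s.1, 1 < dist y x := by
  simp [vacant, mem_occupied]

/-- The points of the configuration whose unit ball contains `p`. -/
def near (s : Config X) (p : X) : Set X := s.1 ∩ closedBall p 1

lemma finite_near (s : Config X) (p : X) : (near s p).Finite := s.2 _ isBounded_closedBall

lemma exists_dist_le_imp_mem_near (s : Config X) (p : X) :
    ∃ ε > 0, ∀ z ∈ s.1, dist z p ≤ 1 + ε → z ∈ near s p := by
  set T := {z ∈ s.1 ∩ closedBall p 2 | 1 < dist z p}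
  have hT : T.Finite := (s.2 _ isBounded_closedBall).subset (sep_subset _ _)
  obtain ⟨ε, hε, hε1, hεT⟩ := exists_pos_le_forall_lt hT (f := fun z => dist z p - 1)
    (fun z hz => sub_pos.2 hz.2) one_pos
  refine ⟨ε, hε, fun z hz hzp => ⟨hz, mem_closedBall.2 ?_⟩⟩
  by_contra! h
  linarith [hεT z ⟨⟨hz, mem_closedBall.2 (by linarith)⟩, h⟩]

/-- The intersection of the closed unit balls centered at the points of `J`. -/
def unitBallInter (J : Set X) : Set X := ⋂ z ∈ J, closedBall z 1

lemma mem_unitBallInter {J : Set X} {x : X} : x ∈ unitBallInter J ↔ ∀ z ∈ J, dist x z ≤ 1 := by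
  simp [unitBallInter]

lemma mem_unitBallInter_near (s : Config X) (p : X) : p ∈ unitBallInter (near s p) :=
  mem_unitBallInter.2 fun _ hz => mem_closedBall'.1 hz.2

lemma isClosed_unitBallInter (J : Set X) : IsClosed (unitBallInter J) :=
  isClosed_biInter fun _ _ => isClosed_closedBall

end Near

section Escape

variable {X : Type*} [MetricSpace X] [ProperSpace X] [PreconnectedSpace X]

lemma two_mul_infDist_le_infDist_reflection (hX : PointSymmetric X) {L : Set X}
    (hmid : ∀ u ∈ L, ∀ v ∈ L, hX.mid u v ∈ L) {e q : X} (he : e ∈ L) :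
    2 * infDist q L ≤ infDist (hX.reflection q e) L := by
  refine (le_infDist ⟨e, he⟩).2 fun l hl => ?_
  have := (hX.isPointReflection_reflection q).two_mul_dist_le
    (hX.isPointReflection_reflection (hX.mid e l)) e
  rw [hX.reflection_mid_left] at this
  linarith [infDist_le_dist_of_mem (x := q) (hmid e he l hl)]

/-- Move `q` away from the convex set `unitBallInter J` along the geodesic from its nearest
point. -/
lemma exists_isPreconnected_infDist_doubling (hX : PointSymmetric X) {J : Set X} (hJ : J.Finite)
    (hJne : J.Nonempty) (hL : (unitBallInter J).Nonempty) {q : X} (hq : ∀ z ∈ J, 1 < dist q z)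
    {τ : ℝ} (hτ : 0 < τ) :
    ∃ (q' : X) (A : Set X), IsPreconnected A ∧ q ∈ A ∧ q' ∈ A ∧
      dist q q' = infDist q (unitBallInter J) ∧
      infDist q' (unitBallInter J) = 2 * infDist q (unitBallInter J) ∧
      (∀ z ∈ J, Disjoint A (closedBall z 1)) ∧
      A ⊆ closedBall q (infDist q (unitBallInter J) + τ) := by
  have compact : IsCompact (unitBallInter J) := by
    obtain ⟨z, hz⟩ := hJne
    exact (isCompact_closedBall z 1).of_isClosed_subset (isClosed_unitBallInter J)
      (biInter_subset_of_mem hz)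
  have mid_mem : ∀ u ∈ unitBallInter J, ∀ v ∈ unitBallInter J, hX.mid u v ∈ unitBallInter J :=
    fun u hu v hv => mem_iInter₂.2 fun z hz =>
      hX.mid_mem_closedBall (mem_iInter₂.1 hu z hz) (mem_iInter₂.1 hv z hz)
  obtain ⟨e, he, hqe⟩ := compact.exists_infDist_eq_dist hL q
  obtain ⟨A, hA, hqA, hq'A, hdisj, hAq⟩ := hX.exists_isPreconnected_disjoint_closedBall hJ
    (mem_unitBallInter.1 he) hq hτ
  refine ⟨hX.reflection q e, A, hA, hqA, hq'A, ?_, le_antisymm ?_ ?_, hdisj, by rwa [hqe]⟩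
  · rw [hqe, (hX.isPointReflection_reflection q).dist_center_map]
  · rw [hqe, ← hX.dist_reflection q e, dist_comm]
    exact infDist_le_dist_of_mem he
  · exact two_mul_infDist_le_infDist_reflection hX mid_mem he

lemma exists_mem_comps_infDist_ge (hX : PointSymmetric X) {s : Config X} {p : X} {δ : ℝ}
    (hδ : 0 < δ) (hloc : ∀ z ∈ s.1, dist z p ≤ 1 + 4 * δ → z ∈ near s p)
    (hne : (near s p).Nonempty) {C : Set X} (hC : C ∈ comps (vacant s)) (n : ℕ) {q : X}
    (hqC : q ∈ C) (hpq : dist q p ≤ δ + infDist q (unitBallInter (near s p)))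
    (hq2 : infDist q (unitBallInter (near s p)) ≤ 2 * δ)
    (hqn : δ ≤ 2 ^ n * infDist q (unitBallInter (near s p))) :
    ∃ r ∈ C, dist r p ≤ 3 * δ ∧ δ ≤ infDist r (unitBallInter (near s p)) := by
  induction n generalizing q with
  | zero => exact ⟨q, hqC, by linarith, by linarith⟩
  | succ n ih =>
    rcases le_or_gt δ (infDist q (unitBallInter (near s p))) with h | h
    · exact ⟨q, hqC, by linarith, h⟩
    have hqV := mem_vacant.1 (subset_of_mem_comps hC hqC)
    obtain ⟨q', A, hA, hqA, hq'A, hqq', hdouble, hdisj, hAq⟩ :=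
      exists_isPreconnected_infDist_doubling hX (finite_near s p) hne
        ⟨p, mem_unitBallInter_near s p⟩ (fun z hz => hqV z hz.1) hδ
    have hAV : A ⊆ vacant s := fun x hx => mem_vacant.2 fun z hz => by
      by_contra! hxz
      refine disjoint_left.1 (hdisj z (hloc z hz ?_)) hx hxz
      have := mem_closedBall.1 (hAq hx)
      linarith [dist_triangle4_left x q z p, dist_triangle z x p, dist_triangle x q p,
        dist_comm z x]
    refine ih (subset_of_isPreconnected_of_mem_comps hC hA hAV hqC hqA hq'A) ?_ (by linarith) ?_
    · linarith [dist_triangle_left q' p q]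
    · calc δ ≤ _ := hqn
        _ = 2 ^ n * (2 * infDist q (unitBallInter (near s p))) := by ring
        _ = _ := by rw [hdouble]

lemma not_compsAccumulateAt_vacant_of_near_eq_empty (hX : PointSymmetric X) {s : Config X} {p : X}
    (hp : near s p = ∅) : ¬CompsAccumulateAt (vacant s) p := by
  intro hacc
  obtain ⟨ε, hε, hloc⟩ := exists_dist_le_imp_mem_near s p
  rw [hp] at hloc
  have ball_subset : closedBall p ε ⊆ vacant s := fun x hx => mem_vacant.2 fun z hz => by
    by_contra! hxz
    exact hloc z hz (by linarith [mem_closedBall.1 hx, dist_triangle_left z p x])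
  refine hacc ε hε (Subsingleton.finite ?_)
  rintro C ⟨hC, x, hx, hxp⟩ C' ⟨hC', x', hx', hxp'⟩
  exact eq_of_mem_comps hC hC' (subset_of_isPreconnected_of_mem_comps hC
    (hX.isPreconnected_closedBall p ε) ball_subset hx hxp hxp') hx'

lemma exists_compsAccumulateAt_near_ssubset (hX : PointSymmetric X) {s : Config X} {p : X}
    (hp : CompsAccumulateAt (vacant s) p) (hne : (near s p).Nonempty) :
    ∃ p', CompsAccumulateAt (vacant s) p' ∧ near s p' ⊂ near s p := by
  obtain ⟨ε, hε, hloc⟩ := exists_dist_le_imp_mem_near s p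
  set L := unitBallInter (near s p)
  have hpL : p ∈ L := mem_unitBallInter_near s p
  set δ := ε / 4
  have hδ : 0 < δ := by positivity
  have hδε : 4 * δ = ε := mul_div_cancel₀ ε four_ne_zero
  set K := closedBall p (3 * δ) ∩ {r | δ ≤ infDist r L}
  have hK : IsCompact K := (isCompact_closedBall p _).inter_right
    (isClosed_le continuous_const (continuous_infDist_pt L))
  have meets_K {C : Set X} (hC : C ∈ comps (vacant s)) (hCp : (C ∩ closedBall p δ).Nonempty) :
      (C ∩ K).Nonempty := by
    obtain ⟨q, hqC, hqp⟩ := hCp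
    have hqL : q ∉ L := fun hqL => by
      obtain ⟨z, hz⟩ := hne
      exact (mem_vacant.1 (subset_of_mem_comps hC hqC) z hz.1).not_ge
        (mem_unitBallInter.1 hqL z hz)
    have hpos : 0 < infDist q L :=
      ((isClosed_unitBallInter _).notMem_iff_infDist_pos ⟨p, hpL⟩).1 hqL
    obtain ⟨n, hn⟩ := pow_unbounded_of_one_lt (δ / infDist q L) one_lt_two
    rw [div_lt_iff₀ hpos] at hn
    have hqp := mem_closedBall.1 hqp
    obtain ⟨r, hr, hrp, hrL⟩ := exists_mem_comps_infDist_ge hX hδ (by rwa [hδε]) hne hC n hqC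
      (by linarith) (by linarith [infDist_le_dist_of_mem (x := q) hpL]) hn.le
    exact ⟨r, hr, hrp, hrL⟩
  obtain ⟨p', ⟨hp'p, hp'L⟩, hacc⟩ := exists_compsAccumulateAt hK
    ((hp δ hδ).mono fun C hC => ⟨hC.1, meets_K hC.1 hC.2⟩)
  refine ⟨p', hacc, fun z hz => hloc z hz.1 ?_, fun hsub => ?_⟩
  · linarith [mem_closedBall.1 hz.2, mem_closedBall.1 hp'p, dist_triangle z p' p]
  · have : p' ∈ L := mem_unitBallInter.2 fun z hz => mem_closedBall'.1 (hsub hz).2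
    exact hδ.not_ge (hp'L.trans_eq (infDist_zero_of_mem this))

lemma locallyFiniteComps_vacant (hX : PointSymmetric X) (s : Config X) :
    LocallyFiniteComps (vacant s) := by
  refine locallyFiniteComps_of_forall_not_compsAccumulateAt fun p hp => ?_
  induction hn : (near s p).ncard using Nat.strong_induction_on generalizing p with
  | _ n ih =>
    rcases (near s p).eq_empty_or_nonempty with he | hne
    · exact not_compsAccumulateAt_vacant_of_near_eq_empty hX he hp
    · obtain ⟨p', hp', hlt⟩ := exists_compsAccumulateAt_near_ssubset hX hp hne
      exact ih _ (hn ▸ ncard_lt_ncard hlt (finite_near s p)) p' hp' rfl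

end Escape

/-! ### Bounded enlargements of a set with locally finitely many components -/

section Enlarge

variable {X : Type*} [MetricSpace X] {S S' C C' : Set X}

lemma mem_of_mem_closure_of_mem_comps (hC : C ∈ comps S) {y : X} (hyS : y ∈ S)
    (hyC : y ∈ closure C) : y ∈ C := by
  have insert_preconnected : IsPreconnected (insert y C) :=
    (isPreconnected_of_mem_comps hC).subset_closure (subset_insert _ _)
      (insert_subset hyC subset_closure)
  obtain ⟨x, hx⟩ := nonempty_of_mem_comps hC
  exact subset_of_isPreconnected_of_mem_comps hC insert_preconnected
    (insert_subset hyS (subset_of_mem_comps hC)) hx (mem_insert_of_mem _ hx) (mem_insert _ _)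

namespace LocallyFiniteComps

lemma eventually_mem (hS : LocallyFiniteComps S) (hC : C ∈ comps S) {x : X} (hx : x ∈ C) :
    ∀ᶠ y in nhds x, y ∈ S → y ∈ C := by
  have avoid_others : ∀ᶠ y in nhds x, ∀ D ∈ {D ∈ comps S | (D ∩ ball x 1).Nonempty},
      D ≠ C → y ∉ D := by
    refine (Filter.eventually_all_finite (hS _ isBounded_ball)).2 fun D hD => ?_
    by_cases hDC : D = C
    · simp [hDC]
    have hxD : x ∉ closure D := fun hxD => hDC <| eq_of_mem_comps hD.1 hC
      (mem_of_mem_closure_of_mem_comps hD.1 (subset_of_mem_comps hC hx) hxD) hx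
    filter_upwards [isClosed_closure.isOpen_compl.mem_nhds hxD] with y hy _ hyD
    exact hy (subset_closure hyD)
  filter_upwards [avoid_others, ball_mem_nhds x one_pos] with y havoid hyx hyS
  by_contra hyC
  have hyD := mem_connectedComponentIn hyS
  exact havoid _ ⟨connectedComponentIn_mem_comps hyS, y, hyD, hyx⟩ (fun h => hyC (h ▸ hyD)) hyD

lemma subset_of_disjoint_thickening (hS : LocallyFiniteComps S) (hC : C ∈ comps S)
    (hdisj : Disjoint C (thickening 1 (S' \ S))) (hC' : C' ∈ comps S')
    (hCC' : (C ∩ C').Nonempty) : C' ⊆ C := by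
  obtain ⟨x₀, hx₀, hx₀'⟩ := hCC'
  have locally_constant : ∀ x ∈ C', ∀ᶠ y in nhdsWithin x C', x ∈ C ↔ y ∈ C := by
    intro x hxC'
    by_cases hx : x ∈ C
    · have hxthick : x ∉ thickening 1 (S' \ S) := disjoint_left.1 hdisj hx
      filter_upwards [nhdsWithin_le_nhds (hS.eventually_mem hC hx),
        nhdsWithin_le_nhds (ball_mem_nhds x one_pos), self_mem_nhdsWithin] with y hy hyx hyC'
      refine iff_of_true hx (hy <| by_contra fun hyS => hxthick ?_)
      exact mem_thickening_iff.2 ⟨y, ⟨subset_of_mem_comps hC' hyC', hyS⟩, mem_ball'.1 hyx⟩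
    · suffices x ∉ closure C by
        filter_upwards [nhdsWithin_le_nhds (isClosed_closure.isOpen_compl.mem_nhds this)] with y hy
        exact iff_of_false hx fun hyC => hy (subset_closure hyC)
      intro hxcl
      have hxS : x ∉ S := fun hxS => hx (mem_of_mem_closure_of_mem_comps hC hxS hxcl)
      exact (hdisj.closure_left isOpen_thickening).le_bot
        ⟨hxcl, self_subset_thickening one_pos _ ⟨subset_of_mem_comps hC' hxC', hxS⟩⟩
  exact fun y hy => ((isPreconnected_of_mem_comps hC').induction₂ (fun x y => x ∈ C ↔ y ∈ C)
    locally_constant (fun _ _ _ _ _ _ => Iff.trans) (fun _ _ _ _ => Iff.symm) hx₀' hy).1 hx₀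

/-- Otherwise `C'` is covered by `S' \ S` and those bounded components of `S` that come close to
it, of which there are finitely many. -/
lemma exists_mem_ucomps_subset (hS : LocallyFiniteComps S) (hSS' : S ⊆ S')
    (hbdd : IsBounded (S' \ S)) (hC' : C' ∈ ucomps S') : ∃ C ∈ ucomps S, C ⊆ C' := by
  by_contra! hcon
  have bounded_of_subset : ∀ C ∈ comps S, C ⊆ C' → IsBounded C := fun C hC hCC' =>
    by_contra fun h => hcon C ⟨hC, h⟩ hCC'
  have meets_thickening : ∀ C ∈ comps S, C ⊆ C' → (C ∩ thickening 1 (S' \ S)).Nonempty := by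
    intro C hC hCC'
    by_contra hmeet
    refine hC'.2 ((bounded_of_subset C hC hCC').subset ?_)
    refine hS.subset_of_disjoint_thickening hC ?_ hC'.1 ?_
    · exact disjoint_iff_inter_eq_empty.2 (not_nonempty_iff_eq_empty.1 hmeet)
    · rw [inter_eq_left.2 hCC']
      exact nonempty_of_mem_comps hC
  have finite_comps : {C ∈ comps S | C ⊆ C'}.Finite :=
    (hS _ hbdd.thickening).subset fun C hC => ⟨hC.1, meets_thickening C hC.1 hC.2⟩
  have bounded_union : IsBounded (⋃ C ∈ {C ∈ comps S | C ⊆ C'}, C) :=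
    (isBounded_biUnion finite_comps).2 fun C hC => bounded_of_subset C hC.1 hC.2
  refine hC'.2 ((bounded_union.union hbdd).subset fun y hy => ?_)
  by_cases hyS : y ∈ S
  · have hyC := mem_connectedComponentIn hyS
    refine Or.inl (mem_biUnion ⟨connectedComponentIn_mem_comps hyS, ?_⟩ hyC)
    exact subset_of_isPreconnected_of_mem_comps hC'.1 isPreconnected_connectedComponentIn
      ((connectedComponentIn_subset _ _).trans hSS') hy hyC
  · exact Or.inr ⟨subset_of_mem_comps hC'.1 hy, hyS⟩

lemma numUcomps_lt_of_merge (hS : LocallyFiniteComps S) (hSS' : S ⊆ S')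
    (hbdd : IsBounded (S' \ S)) (hfin : numUcomps S ≠ ⊤) {C₁ C₂ A : Set X} (hC₁ : C₁ ∈ ucomps S)
    (hC₂ : C₂ ∈ ucomps S) (hne : C₁ ≠ C₂) (hA : IsPreconnected A) (hAS' : A ⊆ S')
    (hA₁ : (A ∩ C₁).Nonempty) (hA₂ : (A ∩ C₂).Nonempty) : numUcomps S' < numUcomps S := by
  have exists_superset : ∀ C ∈ comps S, ∃ C' ∈ comps S', C ⊆ C' := by
    rintro _ ⟨x, hx, rfl⟩
    exact ⟨_, connectedComponentIn_mem_comps (hSS' hx), connectedComponentIn_mono x hSS'⟩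
  choose! f hf hsubf using exists_superset
  have f_eq_of_meet : ∀ C ∈ comps S, ∀ C' ∈ comps S', (C ∩ C').Nonempty → f C = C' :=
    fun C hC C' hC' ⟨x, hx, hx'⟩ => eq_of_mem_comps (hf C hC) hC' (hsubf C hC hx) hx'
  have merged : f C₁ = f C₂ := by
    obtain ⟨x, hxA, hx⟩ := hA₁
    obtain ⟨y, hyA, hy⟩ := hA₂
    refine (f_eq_of_meet C₂ hC₂.1 _ (hf C₁ hC₁.1) ⟨y, hy, ?_⟩).symm
    exact subset_of_isPreconnected_of_mem_comps (hf C₁ hC₁.1) hA hAS' (hsubf C₁ hC₁.1 hx) hxA hyA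
  have ucomps_subset : ucomps S' ⊆ f '' (ucomps S \ {C₂}) := by
    intro C' hC'
    obtain ⟨C, hC, hCC'⟩ := hS.exists_mem_ucomps_subset hSS' hbdd hC'
    obtain ⟨x, hx⟩ := nonempty_of_mem_comps hC.1
    have hfC := f_eq_of_meet C hC.1 C' hC'.1 ⟨x, hx, hCC' hx⟩
    by_cases hC_eq : C = C₂
    · exact ⟨C₁, ⟨hC₁, hne⟩, by rw [merged, ← hC_eq, hfC]⟩
    · exact ⟨C, ⟨hC, hC_eq⟩, hfC⟩
  calc numUcomps S' ≤ (f '' (ucomps S \ {C₂})).encard := encard_le_encard ucomps_subset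
    _ ≤ (ucomps S \ {C₂}).encard := encard_image_le _ _
    _ < numUcomps S := ((encard_ne_top_iff.1 hfin).subset sdiff_subset).encard_lt_encard
        ⟨sdiff_subset, fun h => (h hC₂).2 rfl⟩

end LocallyFiniteComps

end Enlarge

section BoundedModification

variable {X : Type*} [MetricSpace X] {s s' : Config X}

lemma closedBall_subset_occupied {x : X} (hx : x ∈ s.1) : closedBall x 1 ⊆ occupied s :=
  subset_biUnion_of_mem (u := fun x => closedBall x 1) hx

lemma occupied_mono (h : s.1 ⊆ s'.1) : occupied s ⊆ occupied s' :=
  biUnion_subset_biUnion_left h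

lemma vacant_anti (h : s.1 ⊆ s'.1) : vacant s' ⊆ vacant s :=
  compl_subset_compl.2 (occupied_mono h)

lemma isBounded_occupied_diff (h : IsBounded (s'.1 \ s.1)) :
    IsBounded (occupied s' \ occupied s) := by
  refine (h.cthickening (δ := 1)).subset fun y ⟨hy', hy⟩ => ?_
  obtain ⟨x, hx, hyx⟩ := mem_occupied.1 hy'
  exact mem_cthickening_of_dist_le y x 1 _
    ⟨hx, fun hxs => hy (mem_occupied.2 ⟨x, hxs, hyx⟩)⟩ hyx

lemma isBounded_vacant_diff (h : IsBounded (s'.1 \ s.1)) :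
    IsBounded (vacant s \ vacant s') := by
  simpa only [vacant, compl_sdiff_compl] using isBounded_occupied_diff h

lemma locallyFiniteComps_occupied [ProperSpace X] [PreconnectedSpace X] (hX : PointSymmetric X)
    (s : Config X) : LocallyFiniteComps (occupied s) := by
  intro Q hQ
  refine ((s.2 _ (hQ.cthickening (δ := 1))).image (connectedComponentIn (occupied s))).subset ?_
  rintro C ⟨hC, y, hyC, hyQ⟩
  obtain ⟨x, hx, hyx⟩ := mem_occupied.1 (subset_of_mem_comps hC hyC)
  have hxC : x ∈ C := subset_of_isPreconnected_of_mem_comps hC (hX.isPreconnected_closedBall x 1)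
    (closedBall_subset_occupied hx) hyC hyx (mem_closedBall_self zero_le_one)
  refine ⟨x, ⟨hx, mem_cthickening_of_dist_le x y 1 Q hyQ (by rwa [dist_comm])⟩, ?_⟩
  exact (eq_connectedComponentIn_of_mem_comps hC hxC).symm

end BoundedModification

/-! ### Measurability of the number of unbounded components -/

section Counting

variable {Ω : Type*} [MeasurableSpace Ω]

lemma measurable_enat_of_natCast_le {f : Ω → ℕ∞}
    (hf : ∀ n : ℕ, MeasurableSet {ω | (n : ℕ∞) ≤ f ω}) : Measurable f := by
  refine measurable_to_countable' fun n => ?_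
  induction n using ENat.recTopCoe with
  | top =>
    have : f ⁻¹' {⊤} = ⋂ n : ℕ, {ω | (n : ℕ∞) ≤ f ω} := by
      ext ω
      simp [ENat.eq_top_iff_forall_ge]
    exact this ▸ MeasurableSet.iInter hf
  | coe n =>
    have : f ⁻¹' {(n : ℕ∞)} = {ω | (n : ℕ∞) ≤ f ω} \ {ω | ((n + 1 : ℕ) : ℕ∞) ≤ f ω} := by
      ext ω
      simp only [mem_preimage, mem_singleton_iff, mem_sdiff, mem_ofPred_eq, not_le, Nat.cast_add,
        Nat.cast_one, ENat.lt_add_one_iff (ENat.natCast_ne_top n), le_antisymm_iff, and_comm]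
    exact this ▸ (hf n).diff (hf (n + 1))

lemma natCast_le_encard_image_iff {α β : Type*} {g : α → β} {A : Set α} {n : ℕ} :
    (n : ℕ∞) ≤ (g '' A).encard ↔ ∃ f : Fin n → α, (∀ i, f i ∈ A) ∧ Injective (g ∘ f) := by
  constructor
  · intro h
    obtain ⟨F, hF, hFn⟩ := exists_subset_encard_eq h
    have : Finite F := finite_of_encard_eq_coe hFn
    let e : Fin n ≃ F := (Finite.equivFinOfCardEq (by
      rw [Nat.card_coe_set_eq, ncard, hFn, ENat.toNat_natCast])).symm
    choose f hfA hf using fun i => hF (e i).2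
    refine ⟨f, hfA, fun i j hij => e.injective (Subtype.ext ?_)⟩
    rw [← hf i, ← hf j]
    exact hij
  · rintro ⟨f, hfA, hf⟩
    calc (n : ℕ∞) = (range (g ∘ f)).encard := by
          rw [← image_univ, hf.encard_image, encard_univ, ENat.card_eq_coe_fintype_card,
            Fintype.card_fin]
      _ ≤ _ := encard_le_encard (range_subset_iff.2 fun i => mem_image_of_mem g (hfA i))

lemma measurableSet_reflTransGen {ι : Type*} [Countable ι] {r : Ω → ι → ι → Prop}
    (hr : ∀ a b, MeasurableSet {ω | r ω a b}) (a b : ι) :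
    MeasurableSet {ω | Relation.ReflTransGen (r ω) a b} := by
  let reach : ℕ → ι → Set Ω :=
    Nat.rec (fun b => {_ω | a = b}) fun _ R b => ⋃ c, R c ∩ {ω | r ω c b}
  have measurable_reach (n : ℕ) : ∀ b, MeasurableSet (reach n b) := by
    induction n with
    | zero => exact fun b => MeasurableSet.const _
    | succ n ih => exact fun b => MeasurableSet.iUnion fun c => (ih c).inter (hr c b)
  suffices {ω | Relation.ReflTransGen (r ω) a b} = ⋃ n, reach n b from
    this ▸ MeasurableSet.iUnion fun n => measurable_reach n b
  ext ω
  simp only [mem_ofPred_eq, mem_iUnion]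
  constructor
  · intro h
    induction h with
    | refl => exact ⟨0, rfl⟩
    | tail _ hcb ih =>
      obtain ⟨n, hn⟩ := ih
      exact ⟨n + 1, mem_iUnion.2 ⟨_, hn, hcb⟩⟩
  · rintro ⟨n, hn⟩
    induction n generalizing b with
    | zero => exact hn ▸ Relation.ReflTransGen.refl
    | succ n ih =>
      obtain ⟨c, hc, hcb⟩ := mem_iUnion.1 hn
      exact (ih c hc).tail hcb

end Counting

section CellCover

variable {X ι : Type*}

/-- Two cells with indices in `J` are adjacent if they intersect. -/
def CellAdj (J : Set ι) (c : ι → Set X) (a b : ι) : Prop :=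
  a ∈ J ∧ b ∈ J ∧ (c a ∩ c b).Nonempty

/-- The union of all cells that can be reached from the cell `a` through adjacent cells. -/
def cellCluster (J : Set ι) (c : ι → Set X) (a : ι) : Set X :=
  ⋃ b ∈ {b | Relation.ReflTransGen (CellAdj J c) a b}, c b

variable {J : Set ι} {c : ι → Set X} {a b : ι}

lemma mem_of_reflTransGen_cellAdj (ha : a ∈ J) (h : Relation.ReflTransGen (CellAdj J c) a b) :
    b ∈ J := by
  induction h with
  | refl => exact ha
  | tail _ hbc _ => exact hbc.2.1

lemma mem_cellCluster_iff (ha : a ∈ J) (hb : b ∈ J) {x y : X}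
    (hx : x ∈ c b) (hy : y ∈ c b) : x ∈ cellCluster J c a ↔ y ∈ cellCluster J c a := by
  suffices ∀ {x y}, x ∈ c b → y ∈ c b → x ∈ cellCluster J c a → y ∈ cellCluster J c a from
    ⟨this hx hy, this hy hx⟩
  intro x y hx hy hxa
  obtain ⟨b', hab', hxb'⟩ := mem_iUnion₂.1 hxa
  exact mem_iUnion₂.2
    ⟨b, hab'.tail ⟨mem_of_reflTransGen_cellAdj ha hab', hb, x, hxb', hx⟩, hy⟩

variable [MetricSpace X]

/-- A cover of `S` by connected cells `c a`, `a ∈ J`, of uniformly bounded size, the cell `c a`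
being located near `z a`; any point of `S` shares a cell with each of its neighbours in `S`. -/
structure CellCover (S : Set X) (J : Set ι) (c : ι → Set X) (z : ι → X) : Prop where
  isPreconnected : ∀ a ∈ J, IsPreconnected (c a)
  nonempty : ∀ a ∈ J, (c a).Nonempty
  subset : ∀ a ∈ J, c a ⊆ S
  subset_closedBall : ∀ a ∈ J, c a ⊆ closedBall (z a) 2
  eventually_mem : ∀ x ∈ S, ∀ᶠ y in nhdsWithin x S, ∃ a ∈ J, x ∈ c a ∧ y ∈ c a

variable {S : Set X} {z : ι → X}

namespace CellCover

lemma exists_mem (h : CellCover S J c z) {x : X} (hx : x ∈ S) : ∃ a ∈ J, x ∈ c a := by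
  obtain ⟨a, ha, hxa, -⟩ := (h.eventually_mem x hx).self_of_nhdsWithin hx
  exact ⟨a, ha, hxa⟩

lemma connectedComponentIn_eq_cellCluster (h : CellCover S J c z) (ha : a ∈ J) {x : X}
    (hx : x ∈ c a) : connectedComponentIn S x = cellCluster J c a := by
  have hxS : x ∈ S := h.subset a ha hx
  apply subset_antisymm
  · intro y hy
    refine (isPreconnected_connectedComponentIn.induction₂
      (fun x y => x ∈ cellCluster J c a ↔ y ∈ cellCluster J c a) (fun x hx => ?_)
      (fun _ _ _ _ _ _ => Iff.trans) (fun _ _ _ _ => Iff.symm)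
      (mem_connectedComponentIn hxS) hy).1 (mem_iUnion₂.2 ⟨a, .refl, hx⟩)
    filter_upwards [nhdsWithin_mono _ (connectedComponentIn_subset _ _)
      (h.eventually_mem x (connectedComponentIn_subset _ _ hx))] with y ⟨b, hb, hxb, hyb⟩
    exact mem_cellCluster_iff ha hb hxb hyb
  · refine iUnion₂_subset fun b hb => ?_
    induction hb with
    | refl => exact (h.isPreconnected a ha).subset_connectedComponentIn hx (h.subset a ha)
    | tail _ hbd ih =>
      obtain ⟨-, hd, y, hyb, hyd⟩ := hbd
      exact subset_of_isPreconnected_of_mem_comps (connectedComponentIn_mem_comps hxS)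
        (h.isPreconnected _ hd) (h.subset _ hd) (ih hyb) hyd

lemma comps_eq_image_cellCluster (h : CellCover S J c z) : comps S = cellCluster J c '' J := by
  ext C
  constructor
  · rintro ⟨x, hx, rfl⟩
    obtain ⟨a, ha, hxa⟩ := h.exists_mem hx
    exact ⟨a, ha, (h.connectedComponentIn_eq_cellCluster ha hxa).symm⟩
  · rintro ⟨a, ha, rfl⟩
    obtain ⟨x, hx⟩ := h.nonempty a ha
    exact ⟨x, h.subset a ha hx, (h.connectedComponentIn_eq_cellCluster ha hx).symm⟩

lemma cellCluster_eq_iff (h : CellCover S J c z) (ha : a ∈ J) (hb : b ∈ J) :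
    cellCluster J c a = cellCluster J c b ↔ Relation.ReflTransGen (CellAdj J c) a b := by
  obtain ⟨y, hy⟩ := h.nonempty b hb
  constructor
  · intro heq
    have hyb : y ∈ cellCluster J c b := mem_iUnion₂.2 ⟨b, .refl, hy⟩
    obtain ⟨d, had, hyd⟩ := mem_iUnion₂.1 (heq ▸ hyb)
    exact had.tail ⟨mem_of_reflTransGen_cellAdj ha had, hb, y, hyd, hy⟩
  · intro hab
    obtain ⟨x, hx⟩ := h.nonempty a ha
    rw [← h.connectedComponentIn_eq_cellCluster ha hx,
      ← h.connectedComponentIn_eq_cellCluster hb hy]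
    refine connectedComponentIn_eq ?_
    rw [h.connectedComponentIn_eq_cellCluster ha hx]
    exact mem_iUnion₂.2 ⟨b, hab, hy⟩

lemma isBounded_cellCluster_iff (h : CellCover S J c z) (ha : a ∈ J) (o : X) :
    IsBounded (cellCluster J c a) ↔
      ∃ R : ℕ, ∀ b, Relation.ReflTransGen (CellAdj J c) a b → dist (z b) o ≤ R := by
  constructor
  · intro hbdd
    obtain ⟨R, hR⟩ := hbdd.subset_closedBall o
    obtain ⟨n, hn⟩ := exists_nat_ge (R + 2)
    refine ⟨n, fun b hab => ?_⟩
    have hb := mem_of_reflTransGen_cellAdj ha hab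
    obtain ⟨y, hy⟩ := h.nonempty b hb
    have hyo : dist y o ≤ R := hR (mem_iUnion₂.2 ⟨b, hab, hy⟩)
    have hyz : dist y (z b) ≤ 2 := h.subset_closedBall b hb hy
    linarith [dist_triangle_left (z b) o y]
  · rintro ⟨R, hR⟩
    refine (isBounded_closedBall (x := o) (r := 2 + R)).subset (iUnion₂_subset fun b hab => ?_)
    exact (h.subset_closedBall b (mem_of_reflTransGen_cellAdj ha hab)).trans
      (closedBall_subset_closedBall' (by gcongr; exact hR b hab))

lemma natCast_le_numUcomps_iff (h : CellCover S J c z) (o : X) (n : ℕ) :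
    (n : ℕ∞) ≤ numUcomps S ↔ ∃ f : Fin n → ι, (∀ i, f i ∈ J) ∧
      (∀ i, ∀ R : ℕ, ∃ b, Relation.ReflTransGen (CellAdj J c) (f i) b ∧ R < dist (z b) o) ∧
      ∀ i j, i ≠ j → ¬ Relation.ReflTransGen (CellAdj J c) (f i) (f j) := by
  have ucomps_eq : ucomps S = cellCluster J c '' {a ∈ J | ¬ IsBounded (cellCluster J c a)} := by
    ext C
    simp only [ucomps, h.comps_eq_image_cellCluster, mem_ofPred_eq]
    constructor
    · rintro ⟨⟨a, ha, rfl⟩, hC⟩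
      exact ⟨a, ⟨ha, hC⟩, rfl⟩
    · rintro ⟨a, ⟨ha, hC⟩, rfl⟩
      exact ⟨⟨a, ha, rfl⟩, hC⟩
  rw [numUcomps, ucomps_eq, natCast_le_encard_image_iff]
  refine exists_congr fun f => ?_
  simp only [mem_ofPred_eq, forall_and, and_assoc]
  refine and_congr_right fun hf => and_congr (forall_congr' fun i => ?_) ?_
  · simp [h.isBounded_cellCluster_iff (hf i) o]
  · refine forall_congr' fun i => forall_congr' fun j => ?_
    rw [comp_apply, comp_apply, h.cellCluster_eq_iff (hf i) (hf j), not_imp_not]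

end CellCover

lemma measurable_numUcomps_of_cellCover {Ω : Type*} [MeasurableSpace Ω] [Countable ι] [Nonempty X]
    {S : Ω → Set X} {J : Ω → Set ι} {c : Ω → ι → Set X} {z : ι → X}
    (h : ∀ ω, CellCover (S ω) (J ω) (c ω) z) (hJ : ∀ a, MeasurableSet {ω | a ∈ J ω})
    (hadj : ∀ a b, MeasurableSet {ω | CellAdj (J ω) (c ω) a b}) :
    Measurable fun ω => numUcomps (S ω) := by
  refine measurable_enat_of_natCast_le fun n => ?_
  simp only [fun ω => (h ω).natCast_le_numUcomps_iff (Classical.arbitrary X) n]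
  have hreach := measurableSet_reflTransGen hadj
  simp only [measurableSet_setOfPred] at hJ hreach ⊢
  exact .exists fun f => (Measurable.forall fun i => hJ (f i)).and <|
    (Measurable.forall fun i => .forall fun R => .exists fun b =>
      (hreach (f i) b).and measurable_const).and <|
    .forall fun i => .forall fun j => .imp measurable_const (hreach (f i) (f j)).not

end CellCover

section Grid

variable {X : Type*} [MetricSpace X] [TopologicalSpace.SeparableSpace X] [Nonempty X]

/-- A countable family of closed balls, of radii `1 / (k + 1)` around the points of a dense
sequence, among which every point has arbitrarily small neighbourhoods. -/
def gridBall (a : ℕ × ℕ) : Set X := closedBall (TopologicalSpace.denseSeq X a.1) (1 / (a.2 + 1))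

lemma exists_gridBall_mem_nhds {x : X} {U : Set X} (hU : U ∈ nhds x) :
    ∃ a, gridBall a ∈ nhds x ∧ gridBall a ⊆ U := by
  obtain ⟨ε, hε, hεU⟩ := Metric.mem_nhds_iff.1 hU
  obtain ⟨k, hk⟩ := exists_nat_one_div_lt (half_pos hε)
  obtain ⟨n, hn⟩ := (TopologicalSpace.denseRange_denseSeq X).exists_dist_lt x
    (Nat.one_div_pos_of_nat (α := ℝ) (n := k))
  refine ⟨(n, k), Filter.mem_of_superset (isOpen_ball.mem_nhds hn) ball_subset_closedBall,
    (closedBall_subset_ball' ?_).trans hεU⟩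
  rw [dist_comm]
  exact (add_lt_add hk (hn.trans hk)).trans_eq (add_halves ε)

lemma gridBall_subset_closedBall (a : ℕ × ℕ) :
    gridBall a ⊆ closedBall (TopologicalSpace.denseSeq X a.1) 1 :=
  closedBall_subset_closedBall (div_le_one_of_le₀ (by simp) (by positivity))

lemma measurableSet_gridBall [MeasurableSpace X] [OpensMeasurableSpace X] (a : ℕ × ℕ) :
    MeasurableSet (gridBall a : Set X) :=
  measurableSet_closedBall

end Grid

section Hitting

variable {X : Type*} [MetricSpace X]

/-- The event that the configuration has a point in `B`. -/
def hitting (B : Set X) : Set (Config X) := {s | (s.1 ∩ B).Nonempty}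

lemma hitting_iUnion {ι : Type*} (B : ι → Set X) : hitting (⋃ i, B i) = ⋃ i, hitting (B i) := by
  ext s
  simp only [hitting, inter_iUnion, nonempty_iUnion, mem_ofPred_eq, mem_iUnion]

lemma natCast_le_encard_iff_hitting [TopologicalSpace.SeparableSpace X] [Nonempty X]
    (s : Config X) (B : Set X) (n : ℕ) :
    (n : ℕ∞) ≤ (s.1 ∩ B).encard ↔ ∃ a : Fin n → ℕ × ℕ,
      Pairwise (fun i j => Disjoint (gridBall (a i) : Set X) (gridBall (a j))) ∧
      ∀ i, s ∈ hitting (B ∩ gridBall (a i)) := by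
  constructor
  · intro h
    rw [← image_id (s.1 ∩ B), natCast_le_encard_image_iff] at h
    obtain ⟨x, hx, hinj⟩ := h
    obtain ⟨U, hU, hdisj⟩ := (finite_range x).t2_separation
    choose a ha haU using fun i =>
      exists_gridBall_mem_nhds ((hU (x i)).2.mem_nhds (hU (x i)).1)
    refine ⟨a, fun i j hij => ?_, fun i => ⟨x i, (hx i).1, (hx i).2, mem_of_mem_nhds (ha i)⟩⟩
    exact (hdisj (mem_range_self i) (mem_range_self j) (hinj.ne hij)).mono (haU i) (haU j)
  · rintro ⟨a, hdisj, hhit⟩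
    choose x hx using hhit
    rw [← image_id (s.1 ∩ B), natCast_le_encard_image_iff]
    refine ⟨x, fun i => ⟨(hx i).1, (hx i).2.1⟩, fun i j hij => by_contra fun hne => ?_⟩
    exact disjoint_left.1 (hdisj hne) (hx i).2.2 ((show x i = x j from hij) ▸ (hx j).2.2)

variable [MeasurableSpace X]

lemma measurableSet_encard_eq {B : Set X} (hB : MeasurableSet B) (n : ℕ∞) :
    MeasurableSet {s : Config X | (s.1 ∩ B).encard = n} :=
  MeasurableSpace.measurableSet_generateFrom ⟨B, n, hB, rfl⟩

lemma measurableSet_hitting {B : Set X} (hB : MeasurableSet B) : MeasurableSet (hitting B) := by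
  have : hitting B = {s | (s.1 ∩ B).encard = 0}ᶜ := by
    ext s
    simp [hitting, nonempty_iff_ne_empty]
  exact this ▸ (measurableSet_encard_eq hB 0).compl

variable [TopologicalSpace.SeparableSpace X] [OpensMeasurableSpace X]

lemma measurable_of_hitting {Ω : Type*} [MeasurableSpace Ω] {f : Ω → Config X}
    (hf : ∀ B : Set X, MeasurableSet B → MeasurableSet (f ⁻¹' hitting B)) : Measurable f := by
  apply measurable_generateFrom
  rintro _ ⟨B, n, hB, rfl⟩
  cases isEmpty_or_nonempty X
  · have : Subsingleton (Config X) :=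
      ⟨fun s t => Subtype.ext (Subsingleton.elim (α := Set X) _ _)⟩
    exact measurable_of_subsingleton_codomain f (measurableSet_encard_eq hB n)
  suffices Measurable fun ω => ((f ω).1 ∩ B).encard from this (measurableSet_singleton n)
  refine measurable_enat_of_natCast_le fun n => ?_
  simp only [natCast_le_encard_iff_hitting, measurableSet_setOfPred]
  exact .exists fun a => measurable_const.and <| .forall fun i =>
    measurableSet_setOfPred.1 (hf _ (hB.inter (measurableSet_gridBall (a i))))

lemma measurable_mapIso [BorelSpace X] (γ : X ≃ᵢ X) : Measurable (Config.mapIso γ) := by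
  refine measurable_of_hitting fun B hB => ?_
  have : Config.mapIso γ ⁻¹' hitting B = hitting (γ ⁻¹' B) := by
    ext s
    simp [hitting, Config.mapIso, Set.Nonempty]
  exact this ▸ measurableSet_hitting (γ.continuous.measurable hB)

lemma measurable_restrict {A : Set X} (hA : MeasurableSet A) : Measurable (Config.restrict A) := by
  refine measurable_of_hitting fun B hB => ?_
  have : Config.restrict A ⁻¹' hitting B = hitting (Aᶜ ∩ B) := by
    ext s
    simp [hitting, Config.restrict, inter_assoc]
  exact this ▸ measurableSet_hitting (hA.compl.inter hB)

lemma measurable_insertPt : Measurable fun p : Config X × X => Config.insertPt p.2 p.1 := by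
  refine measurable_of_hitting fun B hB => ?_
  have : (fun p : Config X × X => Config.insertPt p.2 p.1) ⁻¹' hitting B =
      Prod.fst ⁻¹' hitting B ∪ Prod.snd ⁻¹' B := by
    ext ⟨s, y⟩
    change (insert y s.1 ∩ B).Nonempty ↔ (s.1 ∩ B).Nonempty ∨ y ∈ B
    simp only [Set.Nonempty, mem_inter_iff, mem_insert_iff, or_and_right, exists_or,
      exists_eq_left, or_comm]
  exact this ▸ (measurable_fst (measurableSet_hitting hB)).union (measurable_snd hB)

lemma measurableSet_exists_pair_mem {A B : Set X} (hA : MeasurableSet A) (hB : MeasurableSet B)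
    {W : Set (X × X)} (hW : IsOpen W) :
    MeasurableSet {s : Config X | ∃ x ∈ s.1 ∩ A, ∃ y ∈ s.1 ∩ B, (x, y) ∈ W} := by
  cases isEmpty_or_nonempty X
  · simp
  have : {s : Config X | ∃ x ∈ s.1 ∩ A, ∃ y ∈ s.1 ∩ B, (x, y) ∈ W} =
      {s | ∃ a b : ℕ × ℕ, gridBall a ×ˢ gridBall b ⊆ W ∧
        s ∈ hitting (A ∩ gridBall a) ∧ s ∈ hitting (B ∩ gridBall b)} := by
    ext s
    constructor
    · rintro ⟨x, hx, y, hy, hxy⟩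
      obtain ⟨U, hU, V, hV, hUV⟩ := mem_nhds_prod_iff.1 (hW.mem_nhds hxy)
      obtain ⟨a, ha, haU⟩ := exists_gridBall_mem_nhds hU
      obtain ⟨b, hb, hbV⟩ := exists_gridBall_mem_nhds hV
      exact ⟨a, b, (prod_mono haU hbV).trans hUV, ⟨x, hx.1, hx.2, mem_of_mem_nhds ha⟩,
        ⟨y, hy.1, hy.2, mem_of_mem_nhds hb⟩⟩
    · rintro ⟨a, b, hab, ⟨x, hx, hxA, hxa⟩, ⟨y, hy, hyB, hyb⟩⟩
      exact ⟨x, ⟨hx, hxA⟩, y, ⟨hy, hyB⟩, hab ⟨hxa, hyb⟩⟩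
  rw [this, measurableSet_setOfPred]
  exact .exists fun a => .exists fun b => measurable_const.and <|
    (measurableSet_setOfPred.1 (measurableSet_hitting (hA.inter (measurableSet_gridBall a)))).and
    (measurableSet_setOfPred.1 (measurableSet_hitting (hB.inter (measurableSet_gridBall b))))

end Hitting

section MeasurableCount

variable {X : Type*} [MetricSpace X]

lemma isOpen_vacant (s : Config X) : IsOpen (vacant s) := by
  rw [Metric.isOpen_iff]
  intro x hx
  obtain ⟨ε, hε, hnear⟩ := exists_dist_le_imp_mem_near s x
  refine ⟨ε, hε, fun y hy => mem_vacant.2 fun z hz => ?_⟩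
  by_contra! hyz
  have hzx : dist z x ≤ 1 := (hnear z hz (by
    linarith [dist_triangle_left z x y, mem_ball.1 hy])).2
  linarith [mem_vacant.1 hx z hz, dist_comm x z]

lemma exists_gridBall_inter_eq_singleton [TopologicalSpace.SeparableSpace X] [Nonempty X]
    (s : Config X) {x : X} (hx : x ∈ s.1) : ∃ a, s.1 ∩ gridBall a = {x} := by
  have others_finite : ((s.1 ∩ closedBall x 1) \ {x}).Finite :=
    (s.2 _ isBounded_closedBall).subset sdiff_subset
  obtain ⟨a, ha, hax⟩ := exists_gridBall_mem_nhds (x := x) <| Filter.inter_mem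
    (closedBall_mem_nhds x one_pos) (others_finite.isClosed.isOpen_compl.mem_nhds (by simp))
  refine ⟨a, subset_antisymm (fun y ⟨hy, hya⟩ => by_contra fun hyx => ?_)
    (singleton_subset_iff.2 ⟨hx, mem_of_mem_nhds ha⟩)⟩
  exact (hax hya).2 ⟨⟨hy, (hax hya).1⟩, hyx⟩

variable [ProperSpace X] [PreconnectedSpace X]

lemma closedBall_one_inter_nonempty_iff (hX : PointSymmetric X) (x y : X) :
    (closedBall x 1 ∩ closedBall y 1).Nonempty ↔ dist x y ≤ 2 := by
  constructor
  · rintro ⟨z, hzx, hzy⟩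
    linarith [dist_triangle_left x y z, mem_closedBall.1 hzx, mem_closedBall.1 hzy]
  · intro hxy
    refine ⟨hX.mid x y, ?_, ?_⟩
    · rw [mem_closedBall, hX.dist_mid_left]
      linarith
    · rw [mem_closedBall, hX.dist_mid_right]
      linarith

variable [Nonempty X]

lemma cellCover_vacant (hX : PointSymmetric X) (s : Config X) :
    CellCover (vacant s) {a | gridBall a ⊆ vacant s} gridBall
      (fun a => TopologicalSpace.denseSeq X a.1) where
  isPreconnected a _ := hX.isPreconnected_closedBall _ _
  nonempty a _ := ⟨_, mem_closedBall_self (by positivity)⟩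
  subset _ ha := ha
  subset_closedBall a _ := (gridBall_subset_closedBall a).trans
    (closedBall_subset_closedBall one_le_two)
  eventually_mem x hx := by
    obtain ⟨a, ha, hav⟩ := exists_gridBall_mem_nhds ((isOpen_vacant s).mem_nhds hx)
    filter_upwards [nhdsWithin_le_nhds ha] with y hy
    exact ⟨a, hav, mem_of_mem_nhds ha, hy⟩

lemma cellCover_occupied (hX : PointSymmetric X) (s : Config X) :
    CellCover (occupied s) {a | (s.1 ∩ gridBall a).encard = 1}
      (fun a => ⋃ x ∈ s.1 ∩ gridBall a, closedBall x 1)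
      (fun a => TopologicalSpace.denseSeq X a.1) where
  isPreconnected a ha := by
    obtain ⟨x, hx⟩ := encard_eq_one.1 ha
    simpa only [hx, biUnion_singleton] using hX.isPreconnected_closedBall x 1
  nonempty a ha := by
    obtain ⟨x, hx⟩ := encard_eq_one.1 ha
    simp [hx]
  subset _ _ := biUnion_subset_biUnion_left inter_subset_left
  subset_closedBall a _ := iUnion₂_subset fun x hx => closedBall_subset_closedBall' <| by
    linarith [mem_closedBall.1 (gridBall_subset_closedBall a hx.2)]
  eventually_mem x _ := by
    obtain ⟨ε, hε, hnear⟩ := exists_dist_le_imp_mem_near s x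
    filter_upwards [nhdsWithin_le_nhds (ball_mem_nhds x hε), self_mem_nhdsWithin] with y hyx hy
    obtain ⟨z, hz, hyz⟩ := mem_occupied.1 hy
    have hzx : z ∈ near s x := hnear z hz (by
      linarith [dist_triangle_left z x y, mem_ball.1 hyx])
    obtain ⟨a, ha⟩ := exists_gridBall_inter_eq_singleton s hz
    refine ⟨a, encard_eq_one.2 ⟨z, ha⟩, ?_⟩
    simp only [ha, biUnion_singleton]
    exact ⟨mem_closedBall_comm.1 hzx.2, hyz⟩

variable [MeasurableSpace X] [BorelSpace X]

lemma measurable_numUcomps_vacant (hX : PointSymmetric X) :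
    Measurable fun s : Config X => numUcomps (vacant s) := by
  have measurable_vacant (a : ℕ × ℕ) : MeasurableSet {s : Config X | gridBall a ⊆ vacant s} := by
    have : {s : Config X | gridBall a ⊆ vacant s} = (hitting (cthickening 1 (gridBall a)))ᶜ := by
      ext s
      rw [gridBall, (isCompact_closedBall _ _).cthickening_eq_biUnion_closedBall zero_le_one]
      simp only [hitting, Set.Nonempty, subset_def, mem_vacant, mem_ofPred_eq, mem_compl_iff,
        mem_inter_iff, mem_iUnion, mem_closedBall, not_exists, not_and, exists_prop, not_le]
      exact ⟨fun h x hx y hy => dist_comm y x ▸ h y hy x hx,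
        fun h y hy x hx => dist_comm x y ▸ h x hx y hy⟩
    exact this ▸ (measurableSet_hitting isClosed_cthickening.measurableSet).compl
  exact measurable_numUcomps_of_cellCover (cellCover_vacant hX) measurable_vacant fun a b =>
    (measurable_vacant a).inter ((measurable_vacant b).inter (MeasurableSet.const _))

lemma measurable_numUcomps_occupied (hX : PointSymmetric X) :
    Measurable fun s : Config X => numUcomps (occupied s) := by
  have measurable_isolated (a : ℕ × ℕ) :
      MeasurableSet {s : Config X | (s.1 ∩ gridBall a).encard = 1} :=
    measurableSet_encard_eq (measurableSet_gridBall a) 1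
  refine measurable_numUcomps_of_cellCover (cellCover_occupied hX) measurable_isolated
    fun a b => ?_
  have far : MeasurableSet {s : Config X |
      ∃ x ∈ s.1 ∩ gridBall a, ∃ y ∈ s.1 ∩ gridBall b, 2 < dist x y} :=
    measurableSet_exists_pair_mem (measurableSet_gridBall a) (measurableSet_gridBall b)
      (isOpen_lt continuous_const continuous_dist)
  convert (measurable_isolated a).inter ((measurable_isolated b).inter far.compl) using 1
  ext s
  refine and_congr_right fun ha => and_congr_right fun hb => ?_
  obtain ⟨x, hx⟩ := encard_eq_one.1 ha
  obtain ⟨y, hy⟩ := encard_eq_one.1 hb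
  simp only [hx, hy, biUnion_singleton, closedBall_one_inter_nonempty_iff hX]
  simp only [hx, hy, mem_compl_iff, mem_ofPred_eq, mem_singleton_iff, exists_eq_left, not_lt]

end MeasurableCount

/-! ### Invariant events ignore bounded modifications -/

section LocalEvents

variable {X : Type*} [MetricSpace X]

/-- The event `F` depends on the configuration only through its points in `A`. -/
def DeterminedOn (A : Set X) (F : Set (Config X)) : Prop :=
  ∀ ⦃s t : Config X⦄, s.1 ∩ A = t.1 ∩ A → (s ∈ F ↔ t ∈ F)

namespace DeterminedOn

variable {A B : Set X} {F G : Set (Config X)}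

lemma mono (hF : DeterminedOn A F) (hAB : A ⊆ B) : DeterminedOn B F := fun s t hst => hF <| by
  rw [← inter_eq_self_of_subset_right hAB, ← inter_assoc, hst, inter_assoc]

lemma compl (hF : DeterminedOn A F) : DeterminedOn A Fᶜ :=
  fun _ _ hst => not_congr (hF hst)

lemma union (hF : DeterminedOn A F) (hG : DeterminedOn A G) : DeterminedOn A (F ∪ G) :=
  fun _ _ hst => or_congr (hF hst) (hG hst)

lemma mapIso_preimage (hF : DeterminedOn A F) (γ : X ≃ᵢ X) :
    DeterminedOn (γ ⁻¹' A) (Config.mapIso γ ⁻¹' F) := fun s t hst => hF <| by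
  simp only [Config.mapIso, ← image_inter_preimage, hst]

end DeterminedOn

lemma determinedOn_hitting (B : Set X) : DeterminedOn B (hitting B) :=
  fun _ _ hst => by simp only [hitting, mem_ofPred_eq, hst]

variable [MeasurableSpace X]

/-- The events determined by the points of the configuration in some ball around `o`. -/
def localEvents (o : X) : Set (Set (Config X)) :=
  {F | MeasurableSet F ∧ ∃ R, DeterminedOn (closedBall o R) F}

lemma isSetAlgebra_localEvents (o : X) : IsSetAlgebra (localEvents o) where
  empty_mem := ⟨.empty, 0, fun _ _ _ => Iff.rfl⟩
  compl_mem := fun _ ⟨hF, R, hR⟩ => ⟨hF.compl, R, hR.compl⟩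
  union_mem := fun _ _ ⟨hF, R, hR⟩ ⟨hG, R', hR'⟩ => ⟨hF.union hG, max R R',
    (hR.mono (closedBall_subset_closedBall (le_max_left _ _))).union
      (hR'.mono (closedBall_subset_closedBall (le_max_right _ _)))⟩

variable [TopologicalSpace.SeparableSpace X] [OpensMeasurableSpace X]

lemma generateFrom_localEvents (o : X) :
    MeasurableSpace.generateFrom (localEvents o) = Config.instMeasurableSpace := by
  refine le_antisymm (MeasurableSpace.generateFrom_le fun F hF => hF.1) fun F hF => ?_
  refine @measurable_of_hitting X _ _ _ _ _ (.generateFrom (localEvents o)) id (fun B hB => ?_) F hF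
  rw [preimage_id, ← inter_univ B, ← iUnion_closedBall_nat o, inter_iUnion, hitting_iUnion]
  refine MeasurableSet.iUnion fun n => MeasurableSpace.measurableSet_generateFrom ⟨?_, n, ?_⟩
  · exact measurableSet_hitting (hB.inter measurableSet_closedBall)
  · exact (determinedOn_hitting _).mono inter_subset_right

end LocalEvents

section InvariantEvents

variable {X : Type*} [MetricSpace X] [ProperSpace X]

lemma exists_lt_dist [NoncompactSpace X] (o : X) (R : ℝ) : ∃ z, R < dist z o := by
  by_contra! h
  exact noncompact_univ X ((isCompact_closedBall o R).of_isClosed_subset isClosed_univ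
    fun z _ => h z)

lemma PointSymmetric.exists_disjoint_preimage_closedBall [NoncompactSpace X]
    (hX : PointSymmetric X) (o : X) (R R' : ℝ) :
    ∃ γ : X ≃ᵢ X, γ ⁻¹' closedBall o R ⊆ (closedBall o R')ᶜ := by
  obtain ⟨z, hz⟩ := exists_lt_dist o ((R + R') / 2)
  obtain ⟨γ, hγ⟩ := hX.exists_isPointReflection z
  refine ⟨γ, fun x hx hx' => ?_⟩
  linarith [hγ.two_mul_dist_center_le x o, mem_closedBall.1 hx, mem_closedBall.1 hx']

variable [MeasurableSpace X] [BorelSpace X] [NoncompactSpace X] {P : Measure (Config X)}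
  [IsProbabilityMeasure P] {E : Set (Config X)}

/-- Reflecting a local approximation of `E` at a far away point moves it out of the ball, while
changing neither `E` nor `P`. -/
lemma exists_determinedOn_measure_symmDiff_lt (hX : PointSymmetric X) (hP : IsoInvariant P)
    (hE : MeasurableSet E) (hinv : ∀ γ : X ≃ᵢ X, Config.mapIso γ ⁻¹' E = E) (o : X) (R : ℝ)
    {ε : ℝ} (hε : 0 < ε) :
    ∃ G, DeterminedOn (closedBall o R)ᶜ G ∧ P (symmDiff E G) < ENNReal.ofReal ε := by
  have dense := Measure.MeasureDense.of_generateFrom_isSetAlgebra_finite P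
    (isSetAlgebra_localEvents o) (generateFrom_localEvents o).symm
  obtain ⟨F, ⟨hFm, R', hF⟩, hEF⟩ := dense.approx E hE (measure_ne_top P E) ε hε
  obtain ⟨γ, hγ⟩ := hX.exists_disjoint_preimage_closedBall o R' R
  refine ⟨Config.mapIso γ ⁻¹' F, (hF.mapIso_preimage γ).mono hγ, ?_⟩
  calc P (symmDiff E (Config.mapIso γ ⁻¹' F))
      = P (Config.mapIso γ ⁻¹' symmDiff E F) := by rw [preimage_symmDiff, hinv]
    _ = P (symmDiff E F) := by
      rw [← Measure.map_apply (measurable_mapIso γ) (hE.symmDiff hFm), hP]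
    _ < ENNReal.ofReal ε := hEF

lemma exists_seq_determinedOn_ae_eventually (hX : PointSymmetric X) (hP : IsoInvariant P)
    (hE : MeasurableSet E) (hinv : ∀ γ : X ≃ᵢ X, Config.mapIso γ ⁻¹' E = E) (o : X) (R : ℝ) :
    ∃ G : ℕ → Set (Config X), (∀ n, DeterminedOn (closedBall o R)ᶜ (G n)) ∧
      ∀ᵐ s ∂P, ∀ᶠ n in Filter.atTop, s ∈ E ↔ s ∈ G n := by
  choose G hG hlt using fun n : ℕ =>
    exists_determinedOn_measure_symmDiff_lt hX hP hE hinv o R (pow_pos (half_pos one_pos) n)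
  refine ⟨G, hG, ?_⟩
  have summable : ∑' n, P (symmDiff E (G n)) ≠ ⊤ := by
    refine ne_top_of_le_ne_top ?_ (ENNReal.tsum_le_tsum fun n => (hlt n).le)
    exact summable_geometric_two.tsum_ofReal_ne_top
  filter_upwards [ae_eventually_notMem summable] with s hs
  filter_upwards [hs] with n hn
  rw [mem_symmDiff] at hn
  tauto

lemma ae_mem_iff_mem_of_inter_compl_closedBall_eq (hX : PointSymmetric X) (hP : IsoInvariant P)
    (hE : MeasurableSet E) (hinv : ∀ γ : X ≃ᵢ X, Config.mapIso γ ⁻¹' E = E)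
    {Ω : Type*} [MeasurableSpace Ω] {m : Measure Ω} {f g : Ω → Config X} (hf : Measurable f)
    (hg : Measurable g) (hfP : m.map f ≪ P) (hgP : m.map g ≪ P) {o : X} {R : ℝ}
    (hfg : ∀ᵐ ω ∂m, (f ω).1 ∩ (closedBall o R)ᶜ = (g ω).1 ∩ (closedBall o R)ᶜ) :
    ∀ᵐ ω ∂m, f ω ∈ E ↔ g ω ∈ E := by
  obtain ⟨G, hG, approx⟩ := exists_seq_determinedOn_ae_eventually hX hP hE hinv o R
  filter_upwards [ae_of_ae_map hf.aemeasurable (hfP.ae_le approx),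
    ae_of_ae_map hg.aemeasurable (hgP.ae_le approx), hfg] with ω happroxf happroxg hω
  obtain ⟨n, hfn, hgn⟩ := (happroxf.and happroxg).exists
  rw [hfn, hgn]
  exact hG n hω

end InvariantEvents

section IsometryImage

variable {X : Type*} [MetricSpace X] (γ : X ≃ᵢ X)

lemma occupied_mapIso (s : Config X) : occupied (Config.mapIso γ s) = γ '' occupied s := by
  simp only [occupied, Config.mapIso, biUnion_image, image_iUnion, γ.image_closedBall]

lemma vacant_mapIso (s : Config X) : vacant (Config.mapIso γ s) = γ '' vacant s := by
  rw [vacant, vacant, occupied_mapIso, image_compl_eq γ.bijective]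

lemma comps_image (S : Set X) : comps (γ '' S) = (γ '' ·) '' comps S := by
  have image_comp {x : X} (hx : x ∈ S) :
      γ '' connectedComponentIn S x = connectedComponentIn (γ '' S) (γ x) :=
    γ.toHomeomorph.image_connectedComponentIn hx
  ext C
  constructor
  · rintro ⟨_, ⟨x, hx, rfl⟩, rfl⟩
    exact ⟨_, ⟨x, hx, rfl⟩, image_comp hx⟩
  · rintro ⟨_, ⟨x, hx, rfl⟩, rfl⟩
    exact ⟨_, mem_image_of_mem γ hx, image_comp hx⟩

lemma numUcomps_image (S : Set X) : numUcomps (γ '' S) = numUcomps S := by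
  have isBounded_image (C : Set X) : IsBounded (γ '' C) ↔ IsBounded C :=
    ⟨fun h => (γ.isometry.antilipschitz.isBounded_preimage h).subset (subset_preimage_image γ C),
      γ.isometry.lipschitz.isBounded_image⟩
  have : ucomps (γ '' S) = (γ '' ·) '' ucomps S := by
    ext C
    simp only [ucomps, comps_image, mem_ofPred_eq, mem_image]
    constructor
    · rintro ⟨⟨D, hD, rfl⟩, hb⟩
      exact ⟨D, ⟨hD, mt (isBounded_image D).2 hb⟩, rfl⟩
    · rintro ⟨D, ⟨hD, hb⟩, rfl⟩
      exact ⟨⟨D, hD, rfl⟩, mt (isBounded_image D).1 hb⟩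
  rw [numUcomps, this, (image_injective.2 γ.injective).encard_image, numUcomps]

end IsometryImage

/-! ### Merging unbounded components -/

section Merging

variable {X : Type*} [MetricSpace X]

lemma closedBall_subset_vacant_restrict (s : Config X) (o : X) {R R' : ℝ} (hR : R + 1 ≤ R') :
    closedBall o R ⊆ vacant (Config.restrict (closedBall o R') s) := fun w hw =>
  mem_vacant.2 fun z hz => by
    have hzo : R' < dist z o := not_le.1 hz.2
    linarith [dist_triangle_left z o w, mem_closedBall.1 hw]

variable [ProperSpace X] [PreconnectedSpace X]

lemma mem_connectedComponentIn_occupied_of_chain (hX : PointSymmetric X) (s : Config X)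
    {q : ℕ → X} {N : ℕ} (step : ∀ i, dist (q i) (q (i + 1)) ≤ 1 / 2)
    (cover : ∀ i ≤ N, ∃ z ∈ s.1, dist z (q i) ≤ 1 / 2) :
    q N ∈ connectedComponentIn (occupied s) (q 0) := by
  induction N with
  | zero =>
    obtain ⟨z, hz, hzq⟩ := cover 0 le_rfl
    exact mem_connectedComponentIn (mem_occupied.2 ⟨z, hz, by linarith [dist_comm z (q 0)]⟩)
  | succ N ih =>
    obtain ⟨z, hz, hzq⟩ := cover N N.le_succ
    rw [connectedComponentIn_eq (ih fun i hi => cover i (hi.trans N.le_succ))]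
    refine (hX.isPreconnected_closedBall z 1).subset_connectedComponentIn ?_
      (closedBall_subset_occupied hz) ?_ <;> rw [mem_closedBall, dist_comm]
    · linarith
    · linarith [dist_triangle z (q N) (q (N + 1)), step N]

lemma exists_numUcomps_vacant_restrict_lt (hX : PointSymmetric X) (s : Config X) (o : X)
    (hmany : 1 < numUcomps (vacant s)) (hfin : numUcomps (vacant s) ≠ ⊤) :
    ∃ n : ℕ, numUcomps (vacant (Config.restrict (closedBall o (n + 1)) s)) <
      numUcomps (vacant s) := by
  obtain ⟨C₁, C₂, hC₁, hC₂, hne⟩ := one_lt_encard_iff.1 hmany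
  obtain ⟨x₁, hx₁⟩ := nonempty_of_mem_comps hC₁.1
  obtain ⟨x₂, hx₂⟩ := nonempty_of_mem_comps hC₂.1
  obtain ⟨n, hn⟩ := exists_nat_ge (max (dist x₁ o) (dist x₂ o))
  refine ⟨n, (locallyFiniteComps_vacant hX s).numUcomps_lt_of_merge
    (vacant_anti inter_subset_left) (isBounded_vacant_diff ?_) hfin hC₁ hC₂ hne
    (hX.isPreconnected_closedBall o n) (closedBall_subset_vacant_restrict s o le_rfl)
    ⟨x₁, (le_max_left _ _).trans hn, hx₁⟩ ⟨x₂, (le_max_right _ _).trans hn, hx₂⟩⟩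
  exact isBounded_closedBall.subset fun z hz => by_contra fun hzB => hz.2 ⟨hz.1, hzB⟩

lemma exists_chain_numUcomps_occupied_lt (hX : PointSymmetric X) (s : Config X)
    (hmany : 1 < numUcomps (occupied s)) (hfin : numUcomps (occupied s) ≠ ⊤) :
    ∃ (N : ℕ) (q : ℕ → X), ∀ s' : Config X, s.1 ⊆ s'.1 → (s'.1 \ s.1).Finite →
      (∀ i < N, ∃ z ∈ s'.1, dist z (q i) ≤ 1 / 2) →
      numUcomps (occupied s') < numUcomps (occupied s) := by
  obtain ⟨C₁, C₂, hC₁, hC₂, hne⟩ := one_lt_encard_iff.1 hmany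
  obtain ⟨x₁, hx₁⟩ := nonempty_of_mem_comps hC₁.1
  obtain ⟨x₂, hx₂⟩ := nonempty_of_mem_comps hC₂.1
  obtain ⟨N, q, hq₀, hqN, step⟩ := exists_seq_of_reflTransGen (fun a => by simp)
    (reflTransGen_dist_le (one_half_pos (α := ℝ)) x₁ x₂)
  refine ⟨N + 1, q, fun s' hss' hdiff cover => ?_⟩
  have hx₂_mem := mem_connectedComponentIn_occupied_of_chain hX s' step
    fun i hi => cover i (Nat.lt_succ_of_le hi)
  rw [hq₀, hqN N le_rfl] at hx₂_mem
  exact (locallyFiniteComps_occupied hX s).numUcomps_lt_of_merge (occupied_mono hss')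
    (isBounded_occupied_diff hdiff.isBounded) hfin hC₁ hC₂ hne isPreconnected_connectedComponentIn
    (connectedComponentIn_subset _ _)
    ⟨x₁, mem_connectedComponentIn (occupied_mono hss' (subset_of_mem_comps hC₁.1 hx₁)), hx₁⟩
    ⟨x₂, hx₂_mem, hx₂⟩

end Merging

/-! ### Tolerance -/

section Insertion

open scoped ProbabilityTheory

lemma ae_ae_of_forall_ae_prod_cond {Ω α : Type*} [MeasurableSpace Ω] [MeasurableSpace α]
    {P : Measure Ω} {μ : Measure α} {B : ℕ → Set α} (hB : ⋃ n, B n = univ)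
    (hfin : ∀ n, μ (B n) ≠ ⊤) {p : Ω × α → Prop} (h : ∀ n, ∀ᵐ w ∂P.prod μ[|B n], p w) :
    ∀ᵐ ω ∂P, ∀ᵐ y ∂μ, p (ω, y) := by
  filter_upwards [ae_all_iff.2 fun n => Measure.ae_ae_of_ae_prod (h n)] with ω hω
  rw [← Measure.restrict_univ (μ := μ), ← hB, ae_restrict_iUnion_iff]
  exact fun n => (Measure.ae_ennreal_smul_measure_iff (ENNReal.inv_ne_zero.2 (hfin n))).1 (hω n)

lemma iUnion_closedBall_natCast_add_one {X : Type*} [MetricSpace X] (o : X) :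
    ⋃ n : ℕ, closedBall o ((n : ℝ) + 1) = univ :=
  univ_subset_iff.1 <| iUnion_closedBall_nat o ▸
    iUnion_mono fun n => closedBall_subset_closedBall (by simp)

variable {X : Type*} [MetricSpace X] [ProperSpace X] [MeasurableSpace X] [BorelSpace X]
  {μ : Measure X} {P : Measure (Config X)} {E : Set (Config X)}

namespace InsertionTolerant

lemma ae_ae_insertPt [Nonempty X] (hI : InsertionTolerant μ P)
    (hμball : ∀ (x : X) (r : ℝ), 0 < r → 0 < μ (closedBall x r) ∧ μ (closedBall x r) < ⊤)
    {p : Config X → Prop} (h : ∀ᵐ s ∂P, p s) :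
    ∀ᵐ s ∂P, ∀ᵐ y ∂μ, p (Config.insertPt y s) := by
  obtain ⟨o⟩ := ‹Nonempty X›
  have hball (n : ℕ) := hμball o (n + 1) n.cast_add_one_pos
  refine ae_ae_of_forall_ae_prod_cond (p := fun w => p (Config.insertPt w.2 w.1))
    (iUnion_closedBall_natCast_add_one o) (fun n => (hball n).2.ne) fun n => ?_
  exact ae_of_ae_map measurable_insertPt.aemeasurable
    ((hI _ measurableSet_closedBall (hball n).1 (hball n).2).ae_le h)

lemma ae_exists_superset_near [Nonempty X] (hI : InsertionTolerant μ P)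
    (hμball : ∀ (x : X) (r : ℝ), 0 < r → 0 < μ (closedBall x r) ∧ μ (closedBall x r) < ⊤)
    (hE : ∀ᵐ s ∂P, ∀ᵐ y ∂μ, s ∈ E → Config.insertPt y s ∈ E) {ε : ℝ} (hε : 0 < ε) (N : ℕ) :
    ∀ᵐ s ∂P, s ∈ E → ∀ q : ℕ → X, ∃ s' ∈ E, s.1 ⊆ s'.1 ∧ (s'.1 \ s.1).Finite ∧
      ∀ i < N, ∃ z ∈ s'.1, dist z (q i) ≤ ε := by
  induction N with
  | zero => exact .of_forall fun s hs q => ⟨s, hs, subset_rfl, by simp, by simp⟩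
  | succ N ih =>
    filter_upwards [hE, hI.ae_ae_insertPt hμball ih] with s hstable hinsert hs q
    obtain ⟨y, hy, hyE, hinsert_y⟩ := ((frequently_ae_mem_iff.2 (hμball (q 0) ε hε).1.ne')
      |>.and_eventually (hstable.and hinsert)).exists
    obtain ⟨s', hs'E, hsub, hdiff, cover⟩ := hinsert_y (hyE hs) fun i => q (i + 1)
    obtain ⟨hys', hss'⟩ := insert_subset_iff.1 hsub
    refine ⟨s', hs'E, hss', (hdiff.insert y).subset ?_, fun i hi => ?_⟩
    · rintro z ⟨hzs', hzs⟩
      by_cases hzy : z = y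
      · exact .inl hzy
      · exact .inr ⟨hzs', fun hz => hz.elim hzy hzs⟩
    · cases i with
      | zero => exact ⟨y, hys', hy⟩
      | succ i => exact cover i (Nat.lt_of_succ_lt_succ hi)

variable [NoncompactSpace X] [IsProbabilityMeasure P]

lemma ae_ae_mem_iff_insertPt_mem (hI : InsertionTolerant μ P) (hX : PointSymmetric X)
    (hμball : ∀ (x : X) (r : ℝ), 0 < r → 0 < μ (closedBall x r) ∧ μ (closedBall x r) < ⊤)
    (hP : IsoInvariant P) (hE : MeasurableSet E)
    (hinv : ∀ γ : X ≃ᵢ X, Config.mapIso γ ⁻¹' E = E) :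
    ∀ᵐ s ∂P, ∀ᵐ y ∂μ, s ∈ E ↔ Config.insertPt y s ∈ E := by
  obtain ⟨o⟩ := Filter.nonempty_of_neBot (Filter.cocompact X)
  have hball (n : ℕ) := hμball o (n + 1) n.cast_add_one_pos
  refine ae_ae_of_forall_ae_prod_cond (p := fun w => w.1 ∈ E ↔ Config.insertPt w.2 w.1 ∈ E)
    (iUnion_closedBall_natCast_add_one o) (fun n => (hball n).2.ne) fun n => ?_
  refine ae_mem_iff_mem_of_inter_compl_closedBall_eq hX hP hE hinv measurable_fst
    measurable_insertPt Measure.quasiMeasurePreserving_fst.absolutelyContinuous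
    (hI _ measurableSet_closedBall (hball n).1 (hball n).2) (o := o) (R := n + 1) ?_
  filter_upwards [Measure.quasiMeasurePreserving_snd.ae
    (ProbabilityTheory.ae_cond_mem measurableSet_closedBall)] with w hw
  exact (insert_inter_of_notMem (not_not.2 hw)).symm

lemma ae_numUcomps_occupied_ne [PreconnectedSpace X] (hI : InsertionTolerant μ P)
    (hX : PointSymmetric X)
    (hμball : ∀ (x : X) (r : ℝ), 0 < r → 0 < μ (closedBall x r) ∧ μ (closedBall x r) < ⊤)
    (hP : IsoInvariant P) {k : ℕ} (hk : 1 < k) : ∀ᵐ s ∂P, numUcomps (occupied s) ≠ k := by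
  have := Filter.nonempty_of_neBot (Filter.cocompact X)
  set E := {s : Config X | numUcomps (occupied s) = k}
  have hE : MeasurableSet E := measurable_numUcomps_occupied hX (measurableSet_singleton _)
  have hinv (γ : X ≃ᵢ X) : Config.mapIso γ ⁻¹' E = E := by
    simp only [E, preimage_ofPred_eq, occupied_mapIso, numUcomps_image]
  have hstable : ∀ᵐ s ∂P, ∀ᵐ y ∂μ, s ∈ E → Config.insertPt y s ∈ E :=
    (hI.ae_ae_mem_iff_insertPt_mem hX hμball hP hE hinv).mono fun s hs => hs.mono fun y => Iff.mp
  filter_upwards [ae_all_iff.2 (hI.ae_exists_superset_near hμball hstable one_half_pos)]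
    with s hsuperset hs
  obtain ⟨N, q, hlt⟩ := exists_chain_numUcomps_occupied_lt hX s (by rw [hs]; exact_mod_cast hk)
    (hs ▸ ENat.natCast_ne_top k)
  obtain ⟨s', hs', hss', hdiff, cover⟩ := hsuperset N hs q
  exact (hlt s' hss' hdiff cover).ne (Eq.trans hs' hs.symm)

end InsertionTolerant

end Insertion

section Deletion

variable {X : Type*} [MetricSpace X] [ProperSpace X] [NoncompactSpace X] [MeasurableSpace X]
  [BorelSpace X] {μ : Measure X} {P : Measure (Config X)} [IsProbabilityMeasure P]

namespace DeletionTolerant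

lemma ae_mem_iff_restrict_mem (hD : DeletionTolerant μ P) (hX : PointSymmetric X)
    (hP : IsoInvariant P) {E : Set (Config X)} (hE : MeasurableSet E)
    (hinv : ∀ γ : X ≃ᵢ X, Config.mapIso γ ⁻¹' E = E) {o : X} {R : ℝ}
    (hball : 0 < μ (closedBall o R) ∧ μ (closedBall o R) < ⊤) :
    ∀ᵐ s ∂P, s ∈ E ↔ Config.restrict (closedBall o R) s ∈ E := by
  refine ae_mem_iff_mem_of_inter_compl_closedBall_eq (f := id) hX hP hE hinv measurable_id
    (measurable_restrict measurableSet_closedBall) (by rw [Measure.map_id])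
    (hD _ measurableSet_closedBall hball.1 hball.2) (o := o) (R := R) (.of_forall fun s => ?_)
  simp only [id, Config.restrict, inter_assoc, inter_self]

lemma ae_numUcomps_vacant_ne [PreconnectedSpace X] (hD : DeletionTolerant μ P)
    (hX : PointSymmetric X)
    (hμball : ∀ (x : X) (r : ℝ), 0 < r → 0 < μ (closedBall x r) ∧ μ (closedBall x r) < ⊤)
    (hP : IsoInvariant P) {k : ℕ} (hk : 1 < k) : ∀ᵐ s ∂P, numUcomps (vacant s) ≠ k := by
  have := Filter.nonempty_of_neBot (Filter.cocompact X)
  let o : X := Classical.arbitrary X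
  set E := {s : Config X | numUcomps (vacant s) = k}
  have hE : MeasurableSet E := measurable_numUcomps_vacant hX (measurableSet_singleton _)
  have hinv (γ : X ≃ᵢ X) : Config.mapIso γ ⁻¹' E = E := by
    simp only [E, preimage_ofPred_eq, vacant_mapIso, numUcomps_image]
  have hstable (n : ℕ) := hD.ae_mem_iff_restrict_mem hX hP hE hinv
    (hμball o (n + 1) n.cast_add_one_pos)
  filter_upwards [ae_all_iff.2 hstable] with s hrestrict hs
  obtain ⟨n, hlt⟩ := exists_numUcomps_vacant_restrict_lt hX s o (by rw [hs]; exact_mod_cast hk)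
    (hs ▸ ENat.natCast_ne_top k)
  exact hlt.ne (Eq.trans ((hrestrict n).1 hs) hs.symm)

end DeletionTolerant

end Deletion

lemma eq_zero_or_one_or_top_of_forall_ne {n : ℕ∞} (h : ∀ k : ℕ, 1 < k → n ≠ k) :
    n = 0 ∨ n = 1 ∨ n = ⊤ := by
  cases n with
  | top => simp
  | coe m =>
    have : m ≤ 1 := not_lt.1 fun hm => h m hm rfl
    interval_cases m <;> simp

theorem number_of_unbounded_components_general
    {X : Type*} [MetricSpace X] [ProperSpace X] [PreconnectedSpace X] [NoncompactSpace X]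
    [MeasurableSpace X] [BorelSpace X]
    (hsym : PointSymmetric X)
    (μ : Measure X)
    (hμball : ∀ (x : X) (r : ℝ), 0 < r → 0 < μ (closedBall x r) ∧ μ (closedBall x r) < ⊤)
    (P : Measure (Config X)) [IsProbabilityMeasure P]
    (hPiso : IsoInvariant P) :
    (InsertionTolerant μ P →
      ∀ᵐ ω ∂P, numUcomps (occupied ω) = 0 ∨ numUcomps (occupied ω) = 1 ∨
        numUcomps (occupied ω) = ⊤) ∧
    (DeletionTolerant μ P →
      ∀ᵐ ω ∂P, numUcomps (vacant ω) = 0 ∨ numUcomps (vacant ω) = 1 ∨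
        numUcomps (vacant ω) = ⊤) := by
  refine ⟨fun hI => ?_, fun hD => ?_⟩
  · filter_upwards [ae_all_iff.2 fun k : ℕ => ae_all_iff.2 fun hk : 1 < k =>
      hI.ae_numUcomps_occupied_ne hsym hμball hPiso hk] with ω hω
    exact eq_zero_or_one_or_top_of_forall_ne hω
  · filter_upwards [ae_all_iff.2 fun k : ℕ => ae_all_iff.2 fun hk : 1 < k =>
      hD.ae_numUcomps_vacant_ne hsym hμball hPiso hk] with ω hω
    exact eq_zero_or_one_or_top_of_forall_ne hω

/-- **Lemma 12 (number of unbounded components).**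
For an isometry invariant `P`: (a) if `P` is insertion-tolerant then `N_O ∈ {0,1,∞}`
a.s.; (b) if `P` is deletion-tolerant then `N_V ∈ {0,1,∞}` a.s. -/
theorem number_of_unbounded_components
    {X : Type*} [MetricSpace X] [ProperSpace X] [CompleteSpace X] [SimplyConnectedSpace X]
    [NoncompactSpace X] [MeasurableSpace X] [BorelSpace X] [Nonempty X]
    (hsym : PointSymmetric X)
    (μ : Measure X)
    (hμiso : ∀ γ : X ≃ᵢ X, Measure.map γ μ = μ)
    (hμball : ∀ (x : X) (r : ℝ), 0 < r → 0 < μ (closedBall x r) ∧ μ (closedBall x r) < ⊤)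
    (P : Measure (Config X)) [IsProbabilityMeasure P]
    (hPiso : IsoInvariant P) :
    (InsertionTolerant μ P →
      ∀ᵐ ω ∂P, numUcomps (occupied ω) = 0 ∨ numUcomps (occupied ω) = 1 ∨
        numUcomps (occupied ω) = ⊤) ∧
    (DeletionTolerant μ P →
      ∀ᵐ ω ∂P, numUcomps (vacant ω) = 0 ∨ numUcomps (vacant ω) = 1 ∨
        numUcomps (vacant ω) = ⊤) :=
  number_of_unbounded_components_general hsym μ hμball P hPiso

end BooleanModel
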